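/- Assume condition (C) and (K,c) ∈ D₁ with μ_b(K,c) > μ_f(K,c) (equivalently, by Proposition BMBF, c_*(K) < c < c_M(K), i.e. (K,c) ∈ D_{1,1}). Then there exists a unique real number μ¹_pul = μ¹_pul(K,c), and moreover μ_f(K,c) < μ¹_pul < μ_b(K,c), such that the system (TV) with parameter μ has a solution with u > 0 satisfying condition (HO) with level ū = u₁ if and only if μ = μ¹_pul. -/

import Mathlib

open Set Filter MeasureTheory

noncomputable section

namespace TrafficTW

/-- `f(u) = (K u - V(u) - c)/K`. -/
def fTV (V : ℝ → ℝ) (K c u : ℝ) : ℝ := (K * u - V u - c) / K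

/-- `f'(u) = (K - V'(u))/K`. -/
def fdTV (V' : ℝ → ℝ) (K u : ℝ) : ℝ := (K - V' u) / K

/-- `h(u,μ) = f'(u) + μ`. -/
def hTV (V' : ℝ → ℝ) (K μ u : ℝ) : ℝ := fdTV V' K u + μ

/-- `g₁(u) = 1/(τ κ(1/u))`. -/
def g1TV (κ : ℝ → ℝ) (τ u : ℝ) : ℝ := 1 / (τ * κ (1 / u))

/-- `g₂(u) = u/(2 τ κ(1/u))`. -/
def g2TV (κ : ℝ → ℝ) (τ u : ℝ) : ℝ := u / (2 * τ * κ (1 / u))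

/-- The traveling-wave system (TV): `u' = w`, `w' = g₁ f + g₂ h w`. -/
def IsTVSol (V V' κ : ℝ → ℝ) (τ K c μ : ℝ) (u w : ℝ → ℝ) : Prop :=
  (∀ z, HasDerivAt u (w z) z) ∧
  (∀ z, HasDerivAt w
    (g1TV κ τ (u z) * fTV V K c (u z) + g2TV κ τ (u z) * hTV V' K μ (u z) * w z) z)

/-- Assumption (A1), where `V'` and `V''` are the first and second derivatives of `V`. -/
def A1 (V V' V'' : ℝ → ℝ) (UM : ℝ) : Prop :=
  (∀ u ∈ Ici (0:ℝ), HasDerivWithinAt V (V' u) (Ici 0) u) ∧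
  ContinuousOn V' (Ici 0) ∧
  (∀ u ∈ Ioi (0:ℝ), HasDerivAt V' (V'' u) u) ∧
  ContinuousOn V'' (Ioi 0) ∧
  (∀ u, 0 < u → 0 < V' u) ∧ (∃ M, ∀ u, 0 < u → V' u ≤ M) ∧
  Tendsto V' atTop (nhds 0) ∧
  0 < UM ∧ (∀ u, 0 < u → V' u ≤ V' UM) ∧
  (∀ u, 0 < u → (V'' u = 0 ↔ u = UM))

/-- Assumption (A2). -/
def A2 (κ : ℝ → ℝ) : Prop :=
  ContDiffOn ℝ 1 κ (Ioi 0) ∧ ∀ ρ, 0 < ρ → 0 < κ ρ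

/-- `c₀ = -V(0)`. -/
def c0v (V : ℝ → ℝ) : ℝ := - V 0

/-- `c_M(K) = K u_M(K) - V(u_M(K))`, where `uMx` is the function `K ↦ u_M(K)`. -/
def cMf (V : ℝ → ℝ) (uMx : ℝ → ℝ) (K : ℝ) : ℝ := K * uMx K - V (uMx K)

/-- `c_m(K) = K u_m(K) - V(u_m(K))`, where `umx` is the function `K ↦ u_m(K)`. -/
def cmf (V : ℝ → ℝ) (umx : ℝ → ℝ) (K : ℝ) : ℝ := K * umx K - V (umx K)

/-- `c₁(K) = max (c₀, c_m(K))`. -/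
def c1f (V : ℝ → ℝ) (umx : ℝ → ℝ) (K : ℝ) : ℝ := max (c0v V) (cmf V umx K)

/-- `uMx K = u_M(K)` is the unique local maximum point of `u ↦ K u - V(u)`, characterized
by `u_M(K) ∈ (0, U_M)` and `V'(u_M(K)) = K`, for `K ∈ (K₀, K_M)`. -/
def UMaxHyp (V' : ℝ → ℝ) (UM : ℝ) (uMx : ℝ → ℝ) : Prop :=
  ∀ K, V' 0 < K → K < V' UM → uMx K ∈ Ioo 0 UM ∧ V' (uMx K) = K

/-- `umx K = u_m(K)` is the unique local minimum point of `u ↦ K u - V(u)`, characterized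
by `u_m(K) ∈ (U_M, ∞)` and `V'(u_m(K)) = K`, for `K ∈ (0, K_M)`. -/
def UMinHyp (V' : ℝ → ℝ) (UM : ℝ) (umx : ℝ → ℝ) : Prop :=
  ∀ K, 0 < K → K < V' UM → UM < umx K ∧ V' (umx K) = K

/-- Characterization of `K₁ ∈ (K₀, K_M)`: `c_m(K) < c₀` for `K < K₁` and `c_m(K) > c₀`
for `K > K₁`. -/
def K1Hyp (V V' : ℝ → ℝ) (UM : ℝ) (umx : ℝ → ℝ) (K₁ : ℝ) : Prop :=
  V' 0 < K₁ ∧ K₁ < V' UM ∧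
  (∀ K, 0 < K → K < K₁ → cmf V umx K < c0v V) ∧
  cmf V umx K₁ = c0v V ∧
  (∀ K, K₁ < K → K < V' UM → c0v V < cmf V umx K)

/-- The parameter region `D₁`. -/
def D1 (V V' : ℝ → ℝ) (UM : ℝ) (uMx umx : ℝ → ℝ) : Set (ℝ × ℝ) :=
  {p | V' 0 < p.1 ∧ p.1 < V' UM ∧ c1f V umx p.1 < p.2 ∧ p.2 < cMf V uMx p.1}

/-- The parameter region `D₂`. -/
def D2 (V V' : ℝ → ℝ) (umx : ℝ → ℝ) (K₁ : ℝ) : Set (ℝ × ℝ) :=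
  {p | (V' 0 < p.1 ∧ p.1 < K₁ ∧ p.2 = c0v V) ∨
       (0 < p.1 ∧ p.1 < K₁ ∧ cmf V umx p.1 < p.2 ∧ p.2 < c0v V)}

/-- For `(K,c) ∈ D₁`: `u₁ < u₀ < u₂` are the exactly three positive zeros of `f`. -/
def ZerosD1 (V : ℝ → ℝ) (K c u1 u0 u2 : ℝ) : Prop :=
  0 < u1 ∧ u1 < u0 ∧ u0 < u2 ∧
  fTV V K c u1 = 0 ∧ fTV V K c u0 = 0 ∧ fTV V K c u2 = 0 ∧
  ∀ u, 0 < u → fTV V K c u = 0 → u = u1 ∨ u = u0 ∨ u = u2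

/-- For `(K,c) ∈ D₂`: `u₀ < u₂` are the exactly two positive zeros of `f`. -/
def ZerosD2 (V : ℝ → ℝ) (K c u0 u2 : ℝ) : Prop :=
  0 < u0 ∧ u0 < u2 ∧ fTV V K c u0 = 0 ∧ fTV V K c u2 = 0 ∧
  ∀ u, 0 < u → fTV V K c u = 0 → u = u0 ∨ u = u2

/-- Condition (HE1). -/
def HE1 (u1 u2 : ℝ) (u w : ℝ → ℝ) : Prop :=
  Tendsto u atBot (nhds u1) ∧ Tendsto u atTop (nhds u2) ∧
  Tendsto w atBot (nhds 0) ∧ Tendsto w atTop (nhds 0) ∧ ∀ z, 0 < w z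

/-- Condition (HE2). -/
def HE2 (u1 u2 : ℝ) (u w : ℝ → ℝ) : Prop :=
  Tendsto u atBot (nhds u2) ∧ Tendsto u atTop (nhds u1) ∧
  Tendsto w atBot (nhds 0) ∧ Tendsto w atTop (nhds 0) ∧ ∀ z, w z < 0

/-- Condition (HO) with level `ub`. -/
def HO (ub : ℝ) (u w : ℝ → ℝ) : Prop :=
  Tendsto u atBot (nhds ub) ∧ Tendsto u atTop (nhds ub) ∧
  Tendsto w atBot (nhds 0) ∧ Tendsto w atTop (nhds 0) ∧
  ¬ (∀ z, u z = ub ∧ w z = 0)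

/-- (TV) with parameter `μ` has a positive solution satisfying (HE1). -/
def HasHE1 (V V' κ : ℝ → ℝ) (τ K c μ u1 u2 : ℝ) : Prop :=
  ∃ u w : ℝ → ℝ, IsTVSol V V' κ τ K c μ u w ∧ (∀ z, 0 < u z) ∧ HE1 u1 u2 u w

/-- (TV) with parameter `μ` has a positive solution satisfying (HE2). -/
def HasHE2 (V V' κ : ℝ → ℝ) (τ K c μ u1 u2 : ℝ) : Prop :=
  ∃ u w : ℝ → ℝ, IsTVSol V V' κ τ K c μ u w ∧ (∀ z, 0 < u z) ∧ HE2 u1 u2 u w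

/-- (TV) with parameter `μ` has a positive solution satisfying (HO) with level `ub`. -/
def HasHO (V V' κ : ℝ → ℝ) (τ K c μ ub : ℝ) : Prop :=
  ∃ u w : ℝ → ℝ, IsTVSol V V' κ τ K c μ u w ∧ (∀ z, 0 < u z) ∧ HO ub u w

/-- Condition (H): `∫₁^∞ dρ/(ρ³ κ(ρ)) = ∞`. -/
def CondH (κ : ℝ → ℝ) : Prop :=
  ¬ IntegrableOn (fun ρ => 1 / (ρ ^ 3 * κ ρ)) (Ioi 1)

/-- Condition (C). -/
def CondC (V' κ : ℝ → ℝ) (UM K₁ K : ℝ) : Prop :=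
  (K₁ < K ∧ K < V' UM) ∨ (CondH κ ∧ V' 0 < K ∧ K ≤ K₁)

/-- Periodic solution. -/
def IsPeriodicSol (u w : ℝ → ℝ) : Prop :=
  ∃ Z, 0 < Z ∧ ∀ z, u (z + Z) = u z ∧ w (z + Z) = w z

/-- Nonconstant pair of functions. -/
def Nonconst (u w : ℝ → ℝ) : Prop := ∃ z, u z ≠ u 0 ∨ w z ≠ w 0

/-- Discriminant of the Jacobian at an equilibrium `(u,0)`. -/
def discTV (V' κ : ℝ → ℝ) (τ K u μ : ℝ) : ℝ :=
  (g2TV κ τ u) ^ 2 * (hTV V' K μ u) ^ 2 + 4 * g1TV κ τ u * fdTV V' K u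

/-- The eigenvalue `λ₊(u)`. -/
def lamP (V' κ : ℝ → ℝ) (τ K u μ : ℝ) : ℝ :=
  (g2TV κ τ u * hTV V' K μ u + Real.sqrt (discTV V' κ τ K u μ)) / 2

/-- The eigenvalue `λ₋(u)`. -/
def lamM (V' κ : ℝ → ℝ) (τ K u μ : ℝ) : ℝ :=
  (g2TV κ τ u * hTV V' K μ u - Real.sqrt (discTV V' κ τ K u μ)) / 2

/-- `Z` is the minimal period of `(u,w)`. -/
def IsMinPeriod (u w : ℝ → ℝ) (Z : ℝ) : Prop :=
  0 < Z ∧ (∀ z, u (z + Z) = u z ∧ w (z + Z) = w z) ∧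
  ∀ Z', 0 < Z' → (∀ z, u (z + Z') = u z ∧ w (z + Z') = w z) → Z ≤ Z'

/-!
Where `w > 0`, an orbit is the graph of a function `q` of `u` with `q' = A / q + D`, where
`A = g₁ f` and `D = g₂ f' + μ g₂`; reversing time turns the lower half-plane into the upper one and
`D` into `-D`. A homoclinic orbit to `(u₁, 0)` is therefore a pair of arches `q`, one for `D` and
one for `-D`, over a common interval `[u₁, m]`. Each arch consists of a branch leaving the saddle
`u₁` and a branch ending at `m`, which have to meet at the middle zero `u₀`. Both mismatches at
`u₀` are continuous in `(μ, m) ∈ [μ_f, μ_b] × [u₀, u₂]`, and the heteroclinic orbits at `μ_b` and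
`μ_f` give their signs on the boundary, so that they vanish simultaneously somewhere. Raising `μ`
moves the end of the upper arch to the right and that of the lower arch to the left; this
monotonicity gives the uniqueness of `μ` and the strict inequalities.
-/

open scoped Topology NNReal

/-! ### Orbit graphs -/

/-- `w = q(u)` is the graph over `[a, b]` of an orbit of the planar system `u' = w`,
`w' = A(u) + D(u) w` lying in the half plane `w > 0`, except possibly for its end points. -/
structure IsOrbitGraph (A D : ℝ → ℝ) (a b : ℝ) (q : ℝ → ℝ) : Prop where
  continuousOn : ContinuousOn q (Icc a b)
  pos : ∀ u ∈ Ioo a b, 0 < q u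
  hasDerivAt : ∀ u ∈ Ioo a b, HasDerivAt q (A u / q u + D u) u

theorem nonpos_of_deriv_nonpos_of_pos {r r' : ℝ → ℝ} {a b : ℝ} (hc : ContinuousOn r (Icc a b))
    (hd : ∀ u ∈ Ioo a b, HasDerivAt r (r' u) u) (ha : r a ≤ 0)
    (hr' : ∀ u ∈ Ioo a b, 0 < r u → r' u ≤ 0) : ∀ u ∈ Icc a b, r u ≤ 0 := by
  intro t ht
  by_contra! hpos
  have hcomp : IsCompact (Icc a t ∩ r ⁻¹' Iic 0) :=
    isCompact_Icc.of_isClosed_subset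
      ((hc.mono (Icc_subset_Icc_right ht.2)).preimage_isClosed_of_isClosed isClosed_Icc
        isClosed_Iic) inter_subset_left
  obtain ⟨s, ⟨⟨has, hst⟩, hrs⟩, hs⟩ := hcomp.exists_isGreatest ⟨a, ⟨le_rfl, ht.1⟩, ha⟩
  have hpos_after : ∀ x ∈ Ioo s t, 0 < r x := fun x hx => by
    by_contra! hx0
    exact (hs ⟨⟨has.trans hx.1.le, hx.2.le⟩, hx0⟩).not_gt hx.1
  have hsub : Ioo s t ⊆ Ioo a b := Ioo_subset_Ioo has ht.2
  have hanti : AntitoneOn r (Icc s t) := by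
    refine antitoneOn_of_hasDerivWithinAt_nonpos (f' := r') (convex_Icc s t)
      (hc.mono (Icc_subset_Icc has ht.2)) ?_ ?_ <;> rw [interior_Icc]
    · exact fun x hx => (hd x (hsub hx)).hasDerivWithinAt
    · exact fun x hx => hr' x (hsub hx) (hpos_after x hx)
  exact (hpos.trans_le (hanti ⟨le_rfl, hst⟩ ⟨hst, le_rfl⟩ hst)).not_ge hrs

theorem nonneg_of_forall_mem_Ioo {f : ℝ → ℝ} {a b : ℝ} (hab : a < b)
    (hf : ContinuousOn f (Icc a b)) (hpos : ∀ u ∈ Ioo a b, 0 < f u) : ∀ u ∈ Icc a b, 0 ≤ f u :=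
  fun _ hu => ContinuousWithinAt.closure_le (by rwa [closure_Ioo hab.ne]) continuousWithinAt_const
    ((hf _ hu).mono Ioo_subset_Icc_self) fun y hy => (hpos y hy).le

namespace IsOrbitGraph

variable {A D A₁ D₁ A₂ D₂ q q₁ q₂ : ℝ → ℝ} {a b a' b' c : ℝ}

theorem nonneg (h : IsOrbitGraph A D a b q) (hab : a < b) : ∀ u ∈ Icc a b, 0 ≤ q u :=
  nonneg_of_forall_mem_Ioo hab h.continuousOn h.pos

theorem mono (h : IsOrbitGraph A D a b q) (ha : a ≤ a') (hb : b' ≤ b) :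
    IsOrbitGraph A D a' b' q where
  continuousOn := h.continuousOn.mono (Icc_subset_Icc ha hb)
  pos u hu := h.pos u (Ioo_subset_Ioo ha hb hu)
  hasDerivAt u hu := h.hasDerivAt u (Ioo_subset_Ioo ha hb hu)

theorem reflect (h : IsOrbitGraph A D a b q) :
    IsOrbitGraph (fun v => -A (-v)) (fun v => -D (-v)) (-b) (-a) (fun v => q (-v)) where
  continuousOn := h.continuousOn.comp continuous_neg.continuousOn fun v hv =>
    ⟨le_neg.mp hv.2, neg_le.mp hv.1⟩
  pos v hv := h.pos _ ⟨lt_neg.mp hv.2, neg_lt.mp hv.1⟩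
  hasDerivAt v hv :=
    ((h.hasDerivAt _ ⟨lt_neg.mp hv.2, neg_lt.mp hv.1⟩).scomp v (hasDerivAt_neg v)).congr_deriv
      (by simp only [smul_eq_mul]; ring)

theorem of_reflect
    (h : IsOrbitGraph (fun v => -A (-v)) (fun v => -D (-v)) (-b) (-a) q) :
    IsOrbitGraph A D a b (fun v => q (-v)) := by
  simpa only [neg_neg] using h.reflect

theorem hasDerivAt_sq (h : IsOrbitGraph A D a b q) {u : ℝ} (hu : u ∈ Ioo a b) :
    HasDerivAt (fun u => q u ^ 2) (2 * (A u + D u * q u)) u := by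
  refine ((h.hasDerivAt u hu).pow 2).congr_deriv ?_
  have := (h.pos u hu).ne'
  field_simp
  ring

-- Unlike `q`, whose slope `A / q + D` blows up at the axis, `q ^ 2` is Lipschitz with a constant
-- that survives the limit to orbits with an end on the axis.
theorem lipschitzOnWith_sq (h : IsOrbitGraph A D a b q) (hab : a < b) {C : ℝ}
    (hC : ∀ u ∈ Ioo a b, |2 * (A u + D u * q u)| ≤ C) :
    LipschitzOnWith C.toNNReal (fun u => q u ^ 2) (Icc a b) := by
  have hIoo : LipschitzOnWith C.toNNReal (fun u => q u ^ 2) (Ioo a b) :=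
    (convex_Ioo a b).lipschitzOnWith_of_nnnorm_hasDerivWithin_le
      (fun u hu => (h.hasDerivAt_sq hu).hasDerivWithinAt) fun u hu => by
        rw [← NNReal.coe_le_coe, coe_nnnorm, Real.norm_eq_abs]
        exact (hC u hu).trans (Real.le_coe_toNNReal C)
  rw [← closure_Ioo hab.ne]
  refine hIoo.closure ?_
  rw [closure_Ioo hab.ne]
  exact h.continuousOn.pow 2

theorem le_add_of_left_le (h₁ : IsOrbitGraph A₁ D₁ a b q₁) (h₂ : IsOrbitGraph A₂ D₂ a b q₂)
    {σ ρ : ℝ} (hσ : 0 ≤ σ) (hρ : 0 ≤ ρ) (hA₁ : ∀ u ∈ Ioo a b, 0 ≤ A₁ u)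
    (hA : ∀ u ∈ Ioo a b, A₂ u ≤ A₁ u) (hD : ∀ u ∈ Ioo a b, D₂ u ≤ D₁ u + σ)
    (ha : q₂ a ≤ q₁ a + ρ) : ∀ u ∈ Icc a b, q₂ u ≤ q₁ u + ρ + σ * (u - a) := by
  have key := nonpos_of_deriv_nonpos_of_pos (r := fun u => q₂ u - q₁ u - ρ - σ * (u - a))
    (r' := fun u => (A₂ u / q₂ u + D₂ u) - (A₁ u / q₁ u + D₁ u) - σ) (a := a) (b := b)
    (((h₂.continuousOn.sub h₁.continuousOn).sub continuousOn_const).sub (by fun_prop))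
    (fun u hu => ((((h₂.hasDerivAt u hu).sub (h₁.hasDerivAt u hu)).sub_const ρ).sub
      (((hasDerivAt_id u).sub_const a).const_mul σ)).congr_deriv (by ring))
    (by simp only [sub_self, mul_zero]; linarith) fun u hu hr => by
      have hq : q₁ u ≤ q₂ u := by
        have := mul_nonneg hσ (sub_nonneg.mpr hu.1.le)
        linarith
      have : A₂ u / q₂ u ≤ A₁ u / q₁ u :=
        div_le_div₀ (hA₁ u hu) (hA u hu) (h₁.pos u hu) hq
      linarith [hD u hu]
  exact fun u hu => by linarith [key u hu]

theorem le_add_of_right_le (h₁ : IsOrbitGraph A₁ D₁ a b q₁) (h₂ : IsOrbitGraph A₂ D₂ a b q₂)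
    {σ ρ : ℝ} (hσ : 0 ≤ σ) (hρ : 0 ≤ ρ) (hA₁ : ∀ u ∈ Ioo a b, A₁ u ≤ 0)
    (hA : ∀ u ∈ Ioo a b, A₁ u ≤ A₂ u) (hD : ∀ u ∈ Ioo a b, D₁ u ≤ D₂ u + σ)
    (hb : q₂ b ≤ q₁ b + ρ) : ∀ u ∈ Icc a b, q₂ u ≤ q₁ u + ρ + σ * (b - u) := by
  have hm : ∀ v ∈ Ioo (-b) (-a), -v ∈ Ioo a b := fun v hv => ⟨lt_neg.mp hv.2, neg_lt.mp hv.1⟩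
  intro u hu
  have := h₁.reflect.le_add_of_left_le h₂.reflect hσ hρ
    (fun v hv => neg_nonneg.mpr (hA₁ _ (hm v hv))) (fun v hv => neg_le_neg (hA _ (hm v hv)))
    (fun v hv => by linarith [hD _ (hm v hv)]) (by simpa only [neg_neg] using hb)
    (-u) ⟨neg_le_neg hu.2, neg_le_neg hu.1⟩
  simp only [neg_neg] at this
  linarith

theorem hasDerivAt_of_forall_ne (hc : c ∈ Ioo a b) (hq : ContinuousOn q (Icc a b))
    (hpos : 0 < q c) (hA : ContinuousAt A c) (hD : ContinuousAt D c)
    (hd : ∀ u ∈ Ioo a b, u ≠ c → HasDerivAt q (A u / q u + D u) u) :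
    HasDerivAt q (A c / q c + D c) c := by
  have hqc : ContinuousAt q c := hq.continuousAt (Icc_mem_nhds hc.1 hc.2)
  have hlim : Tendsto (fun u => A u / q u + D u) (𝓝 c) (𝓝 (A c / q c + D c)) :=
    (hA.div hqc hpos.ne').add hD
  have hleft : HasDerivWithinAt q (A c / q c + D c) (Iic c) c := by
    have hd' : ∀ u ∈ Ioo a c, HasDerivAt q (A u / q u + D u) u := fun u hu =>
      hd u ⟨hu.1, hu.2.trans hc.2⟩ hu.2.ne
    refine hasDerivWithinAt_Iic_of_tendsto_deriv
      (fun u hu => (hd' u hu).differentiableAt.differentiableWithinAt) hqc.continuousWithinAt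
      (Ioo_mem_nhdsLT hc.1) ((hlim.mono_left nhdsWithin_le_nhds).congr' ?_)
    filter_upwards [Ioo_mem_nhdsLT hc.1] with u hu using (hd' u hu).deriv.symm
  have hright : HasDerivWithinAt q (A c / q c + D c) (Ici c) c := by
    have hd' : ∀ u ∈ Ioo c b, HasDerivAt q (A u / q u + D u) u := fun u hu =>
      hd u ⟨hc.1.trans hu.1, hu.2⟩ hu.1.ne'
    refine hasDerivWithinAt_Ici_of_tendsto_deriv
      (fun u hu => (hd' u hu).differentiableAt.differentiableWithinAt) hqc.continuousWithinAt
      (Ioo_mem_nhdsGT hc.2) ((hlim.mono_left nhdsWithin_le_nhds).congr' ?_)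
    filter_upwards [Ioo_mem_nhdsGT hc.2] with u hu using (hd' u hu).deriv.symm
  simpa [hasDerivWithinAt_univ] using hleft.union hright

theorem glue (hac : a < c) (hcb : c < b) (h₁ : IsOrbitGraph A D a c q₁)
    (h₂ : IsOrbitGraph A D c b q₂) (hA : ContinuousAt A c) (hD : ContinuousAt D c)
    (heq : q₁ c = q₂ c) (hpos : 0 < q₁ c) :
    IsOrbitGraph A D a b ((Iic c).piecewise q₁ q₂) := by
  set q := (Iic c).piecewise q₁ q₂
  have eq₁ : EqOn q q₁ (Iic c) := piecewise_eqOn _ _ _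
  have eq₂ : EqOn q q₂ (Ici c) := fun u hu => by
    rcases eq_or_lt_of_le (mem_Ici.mp hu) with rfl | hu
    · rw [eq₁ self_mem_Iic, heq]
    · exact piecewise_eq_of_notMem _ _ _ hu.not_ge
  have hq : ContinuousOn q (Icc a b) := by
    rw [← Icc_union_Icc_eq_Icc hac.le hcb.le]
    exact (h₁.continuousOn.congr fun u hu => eq₁ hu.2).union_of_isClosed
      (h₂.continuousOn.congr fun u hu => eq₂ hu.1) isClosed_Icc isClosed_Icc
  have hne : ∀ u ∈ Ioo a b, u ≠ c → 0 < q u ∧ HasDerivAt q (A u / q u + D u) u := by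
    intro u hu huc
    rcases huc.lt_or_gt with huc | huc
    · rw [eq₁ huc.le]
      exact ⟨h₁.pos u ⟨hu.1, huc⟩, (h₁.hasDerivAt u ⟨hu.1, huc⟩).congr_of_eventuallyEq
        (eq₁.eventuallyEq_of_mem (Iic_mem_nhds huc))⟩
    · rw [eq₂ huc.le]
      exact ⟨h₂.pos u ⟨huc, hu.2⟩, (h₂.hasDerivAt u ⟨huc, hu.2⟩).congr_of_eventuallyEq
        (eq₂.eventuallyEq_of_mem (Ici_mem_nhds huc))⟩
  have hqc : 0 < q c := by rwa [eq₁ self_mem_Iic]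
  refine ⟨hq, fun u hu => ?_, fun u hu => ?_⟩ <;> rcases eq_or_ne u c with rfl | huc
  · exact hqc
  · exact (hne u hu huc).1
  · exact hasDerivAt_of_forall_ne hu hq hqc hA hD fun v hv hvc => (hne v hv hvc).2
  · exact (hne u hu huc).2

end IsOrbitGraph

theorem exists_forall_mem_Icc_hasDerivWithinAt {E : Type*} [NormedAddCommGroup E]
    [NormedSpace ℝ E] [CompleteSpace E] {f : ℝ → E → E} {a b : ℝ} {K L : ℝ≥0}
    (hlip : ∀ t ∈ Icc a b, LipschitzWith K (f t)) (hcont : ∀ x, ContinuousOn (f · x) (Icc a b))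
    (hbdd : ∀ t ∈ Icc a b, ∀ x, ‖f t x‖ ≤ L) (t₀ : Icc a b) (x₀ : E) :
    ∃ φ : ℝ → E, φ t₀ = x₀ ∧ ∀ t ∈ Icc a b, HasDerivWithinAt φ (f t (φ t)) (Icc a b) t :=
  IsPicardLindelof.exists_eq_forall_mem_Icc_hasDerivWithinAt₀
    (a := L * (max (b - t₀) (t₀ - a)).toNNReal) (L := L) (K := K)
    { lipschitzOnWith := fun t ht => (hlip t ht).lipschitzOnWith
      continuousOn := fun x _ => hcont x
      norm_le := fun t ht x _ => hbdd t ht x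
      mul_max_le := by
        simp [Real.coe_toNNReal', le_max_of_le_left (sub_nonneg.mpr t₀.2.2)] }

theorem lipschitzWith_div_max {B θ : ℝ} (hB : 0 ≤ B) (hθ : 0 < θ) :
    LipschitzWith (B / θ ^ 2).toNNReal fun x => B / max x θ := by
  refine LipschitzWith.of_dist_le_mul fun x y => ?_
  have hx : 0 < max x θ := lt_max_of_lt_right hθ
  have hy : 0 < max y θ := lt_max_of_lt_right hθ
  have hsub : B / max x θ - B / max y θ = B * (max y θ - max x θ) / (max x θ * max y θ) := by
    field_simp
  rw [Real.coe_toNNReal _ (by positivity), Real.dist_eq, Real.dist_eq, hsub, abs_div, abs_mul,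
    abs_of_nonneg hB, abs_of_pos (mul_pos hx hy), div_mul_eq_mul_div, abs_sub_comm x y]
  have hnum : |max y θ - max x θ| ≤ |y - x| := abs_max_sub_max_le_abs y x θ
  have hden : θ ^ 2 ≤ max x θ * max y θ := by
    rw [sq]
    exact mul_le_mul (le_max_right x θ) (le_max_right y θ) hθ.le hx.le
  exact div_le_div₀ (by positivity) (mul_le_mul_of_nonneg_left hnum hB) (by positivity) hden

section Existence

variable {A D : ℝ → ℝ} {a b : ℝ}

theorem exists_hasDerivWithinAt_div_max (hab : a ≤ b) (hA : ContinuousOn A (Icc a b))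
    (hD : ContinuousOn D (Icc a b)) (hA0 : ∀ u ∈ Icc a b, 0 ≤ A u) {θ : ℝ} (hθ : 0 < θ) (x₀ : ℝ) :
    ∃ q : ℝ → ℝ, q a = x₀ ∧
      ∀ u ∈ Icc a b, HasDerivWithinAt q (A u / max (q u) θ + D u) (Icc a b) u := by
  obtain ⟨CA, hCA⟩ := isCompact_Icc.exists_bound_of_continuousOn hA
  obtain ⟨CD, hCD⟩ := isCompact_Icc.exists_bound_of_continuousOn hD
  have hAle : ∀ u ∈ Icc a b, A u ≤ CA := fun u hu => (le_abs_self _).trans (hCA u hu)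
  refine exists_forall_mem_Icc_hasDerivWithinAt (K := (CA / θ ^ 2).toNNReal)
    (L := (CA / θ + CD).toNNReal) (f := fun u x => A u / max x θ + D u) (fun u hu => ?_)
    (fun x => (hA.div_const _).add hD) (fun u hu x => ?_) ⟨a, left_mem_Icc.mpr hab⟩ x₀
  · have hle : (A u / θ ^ 2).toNNReal ≤ (CA / θ ^ 2).toNNReal :=
      Real.toNNReal_mono (div_le_div_of_nonneg_right (hAle u hu) (by positivity))
    refine LipschitzWith.of_dist_le_mul fun x y => ?_
    rw [dist_add_right]
    exact ((lipschitzWith_div_max (hA0 u hu) hθ).weaken hle).dist_le_mul x y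
  · refine (norm_add_le _ _).trans ((add_le_add ?_ (hCD u hu)).trans (Real.le_coe_toNNReal _))
    rw [Real.norm_of_nonneg (div_nonneg (hA0 u hu) (le_max_of_le_right hθ.le))]
    have : 0 ≤ CA := (hA0 u hu).trans (hAle u hu)
    gcongr
    · exact hAle u hu
    · exact le_max_right x θ

-- The extra force `θ (C + 1)` keeps the orbit that starts at height `θ` above `θ`, where the
-- truncation `max q θ` is inactive.
theorem exists_isOrbitGraph_add_const (hab : a ≤ b) (hA : ContinuousOn A (Icc a b))
    (hD : ContinuousOn D (Icc a b)) (hA0 : ∀ u ∈ Icc a b, 0 ≤ A u) {C θ : ℝ}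
    (hC : ∀ u ∈ Icc a b, |D u| ≤ C) (hθ : 0 < θ) :
    ∃ q, IsOrbitGraph (fun u => A u + θ * (C + 1)) D a b q ∧ q a = θ := by
  have hC0 : 0 ≤ C := (abs_nonneg _).trans (hC a (left_mem_Icc.mpr hab))
  obtain ⟨q, hqa, hq⟩ := exists_hasDerivWithinAt_div_max (A := fun u => A u + θ * (C + 1)) hab
    (hA.add continuousOn_const) hD (fun u hu => add_nonneg (hA0 u hu) (by positivity)) hθ θ
  have hqc : ContinuousOn q (Icc a b) := fun u hu => (hq u hu).continuousWithinAt
  have hqd : ∀ u ∈ Ioo a b, HasDerivAt q ((A u + θ * (C + 1)) / max (q u) θ + D u) u :=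
    fun u hu => (hq u (Ioo_subset_Icc_self hu)).hasDerivAt (Icc_mem_nhds hu.1 hu.2)
  have hge : ∀ u ∈ Icc a b, θ - q u ≤ 0 :=
    nonpos_of_deriv_nonpos_of_pos (continuousOn_const.sub hqc)
      (fun u hu => (hqd u hu).const_sub θ) (by rw [hqa, sub_self]) fun u hu hr => by
        have hu' := Ioo_subset_Icc_self hu
        have : C + 1 ≤ (A u + θ * (C + 1)) / θ := by
          rw [le_div_iff₀ hθ]
          linarith [hA0 u hu']
        rw [max_eq_right (by linarith)]
        linarith [neg_le_of_abs_le (hC u hu')]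
  refine ⟨q, ⟨hqc, fun u hu => ?_, fun u hu => ?_⟩, hqa⟩
  · linarith [hge u (Ioo_subset_Icc_self hu)]
  · simpa only [max_eq_left (sub_nonpos.mp (hge u (Ioo_subset_Icc_self hu)))] using hqd u hu

theorem lipschitzOnWith_of_tendsto {f : ℕ → ℝ → ℝ} {g : ℝ → ℝ} {s : Set ℝ} {K : ℝ≥0}
    (hf : ∀ n, LipschitzOnWith K (f n) s) (hg : ∀ x ∈ s, Tendsto (f · x) atTop (𝓝 (g x))) :
    LipschitzOnWith K g s :=
  LipschitzOnWith.of_dist_le_mul fun x hx y hy =>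
    le_of_tendsto' ((hg x hx).dist (hg y hy)) fun n => (hf n).dist_le_mul x hx y hy

theorem isOrbitGraph_of_hasDerivAt_sq {q : ℝ → ℝ} (hq : ContinuousOn q (Icc a b))
    (hq0 : ∀ u ∈ Icc a b, 0 ≤ q u) (hA : ∀ u ∈ Ioo a b, 0 < A u)
    (hd : ∀ u ∈ Ioo a b, HasDerivAt (fun u => q u ^ 2) (2 * (A u + D u * q u)) u) :
    IsOrbitGraph A D a b q := by
  have hpos : ∀ u ∈ Ioo a b, 0 < q u := fun u hu =>
    (hq0 u (Ioo_subset_Icc_self hu)).lt_of_ne' fun hqu => by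
      have hmin : IsLocalMin (fun u => q u ^ 2) u :=
        Eventually.of_forall fun v => by
          simpa only [hqu, zero_pow two_ne_zero] using sq_nonneg (q v)
      have := hmin.hasDerivAt_eq_zero (hd u hu)
      rw [hqu] at this
      linarith [hA u hu]
  refine ⟨hq, hpos, fun u hu => ?_⟩
  have hsqrt : HasDerivAt q (2 * (A u + D u * q u) / (2 * √(q u ^ 2))) u := by
    refine ((hd u hu).sqrt (pow_pos (hpos u hu) 2).ne').congr_of_eventuallyEq ?_
    filter_upwards [Icc_mem_nhds hu.1 hu.2] with v hv using (Real.sqrt_sq (hq0 v hv)).symm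
  refine hsqrt.congr_deriv ?_
  have := hpos u hu
  rw [Real.sqrt_sq this.le]
  field_simp

theorem continuousOn_of_antitone_of_tendsto (hab : a < b) {An q : ℕ → ℝ → ℝ} {p : ℝ → ℝ}
    {C : ℝ}
    (hAC : ∀ n, ∀ u ∈ Icc a b, |An n u| ≤ C) (hDC : ∀ u ∈ Icc a b, |D u| ≤ C)
    (hq : ∀ n, IsOrbitGraph (An n) D a b (q n)) (hanti : ∀ u ∈ Icc a b, Antitone (q · u))
    (hlim : ∀ u ∈ Icc a b, Tendsto (q · u) atTop (𝓝 (p u))) : ContinuousOn p (Icc a b) := by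
  have hq0 : ∀ n, ∀ u ∈ Icc a b, 0 ≤ q n u := fun n => (hq n).nonneg hab
  have hp0 : ∀ u ∈ Icc a b, 0 ≤ p u := fun u hu => ge_of_tendsto' (hlim u hu) fun n => hq0 n u hu
  obtain ⟨Q, hQ⟩ := isCompact_Icc.exists_bound_of_continuousOn (hq 0).continuousOn
  have hqQ : ∀ n, ∀ u ∈ Icc a b, |q n u| ≤ Q := fun n u hu => by
    rw [abs_of_nonneg (hq0 n u hu)]
    exact (hanti u hu n.zero_le).trans ((le_abs_self _).trans (hQ u hu))
  have hlip : LipschitzOnWith (2 * (C + C * Q)).toNNReal (fun u => p u ^ 2) (Icc a b) := by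
    refine lipschitzOnWith_of_tendsto (f := fun n u => q n u ^ 2) (fun n => ?_)
      fun u hu => (hlim u hu).pow 2
    refine (hq n).lipschitzOnWith_sq hab fun u hu => ?_
    have hu' := Ioo_subset_Icc_self hu
    rw [abs_mul, abs_two]
    refine mul_le_mul_of_nonneg_left ((abs_add_le _ _).trans (add_le_add (hAC n u hu') ?_))
      zero_le_two
    rw [abs_mul]
    exact mul_le_mul (hDC u hu') (hqQ n u hu') (abs_nonneg _)
      ((abs_nonneg _).trans (hDC u hu'))
  exact hlip.continuousOn.sqrt.congr fun u hu => (Real.sqrt_sq (hp0 u hu)).symm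

theorem isOrbitGraph_of_antitone_of_tendsto (hab : a < b) (hA : ContinuousOn A (Icc a b))
    (hD : ContinuousOn D (Icc a b)) (hApos : ∀ u ∈ Ioo a b, 0 < A u) {ε : ℕ → ℝ}
    (hε : Tendsto ε atTop (𝓝 0)) {q : ℕ → ℝ → ℝ} {p : ℝ → ℝ}
    (hq : ∀ n, IsOrbitGraph (fun u => A u + ε n) D a b (q n))
    (hanti : ∀ u ∈ Icc a b, Antitone (q · u))
    (hlim : ∀ u ∈ Icc a b, Tendsto (q · u) atTop (𝓝 (p u))) : IsOrbitGraph A D a b p := by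
  have hp : ContinuousOn p (Icc a b) := by
    obtain ⟨CA, hCA⟩ := isCompact_Icc.exists_bound_of_continuousOn hA
    obtain ⟨CD, hCD⟩ := isCompact_Icc.exists_bound_of_continuousOn hD
    obtain ⟨Cε, hCε⟩ := isBounded_iff_forall_norm_le.mp (Metric.isBounded_range_of_tendsto ε hε)
    refine continuousOn_of_antitone_of_tendsto (C := max (CA + Cε) CD) hab
      (An := fun n u => A u + ε n) (fun n u hu => le_max_of_le_left ?_)
      (fun u hu => le_max_of_le_right (hCD u hu)) hq hanti hlim
    exact (abs_add_le _ _).trans (add_le_add (hCA u hu) (hCε _ (mem_range_self n)))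
  have hunif : TendstoUniformlyOn q p atTop (Icc a b) :=
    Antitone.tendstoUniformlyOn_of_forall_tendsto isCompact_Icc (fun n => (hq n).continuousOn)
      hanti hp hlim
  have hconst : ∀ f : ℝ → ℝ, TendstoUniformlyOn (fun _ : ℕ => f) f atTop (Icc a b) :=
    fun f V hV => Eventually.of_forall fun _ _ _ => refl_mem_uniformity hV
  have hDq : TendstoUniformlyOn (fun n u => D u * q n u) (fun u => D u * p u) atTop (Icc a b) :=
    (tendstoLocallyUniformlyOn_iff_tendstoUniformlyOn_of_compact isCompact_Icc).mp
      ((hconst D).tendstoLocallyUniformlyOn.mul₀ hunif.tendstoLocallyUniformlyOn hD hp)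
  have hderiv : TendstoUniformlyOn (fun n u => 2 * (A u + ε n + D u * q n u))
      (fun u => 2 * (A u + 0 + D u * p u)) atTop (Icc a b) :=
    (uniformContinuous_const_smul (2 : ℝ)).comp_tendstoUniformlyOn
      (((hconst A).add (hε.tendstoUniformlyOn_const _)).add hDq)
  simp only [add_zero] at hderiv
  exact isOrbitGraph_of_hasDerivAt_sq hp
    (fun u hu => ge_of_tendsto' (hlim u hu) fun n => (hq n).nonneg hab u hu) hApos fun u hu =>
      hasDerivAt_of_tendstoUniformlyOn isOpen_Ioo (hderiv.mono Ioo_subset_Icc_self)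
        (Eventually.of_forall fun n v hv => (hq n).hasDerivAt_sq hv)
        (fun v hv => (hlim v (Ioo_subset_Icc_self hv)).pow 2) hu

theorem exists_isOrbitGraph_left_eq_zero (hab : a ≤ b) (hA : ContinuousOn A (Icc a b))
    (hD : ContinuousOn D (Icc a b)) (hApos : ∀ u ∈ Ioo a b, 0 < A u) :
    ∃ q : ℝ → ℝ, IsOrbitGraph A D a b q ∧ q a = 0 := by
  rcases hab.eq_or_lt with rfl | hab'
  · exact ⟨0, ⟨continuousOn_const, by simp, by simp⟩, rfl⟩
  have hA0 : ∀ u ∈ Icc a b, 0 ≤ A u := nonneg_of_forall_mem_Ioo hab' hA hApos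
  obtain ⟨C, hC⟩ := isCompact_Icc.exists_bound_of_continuousOn hD
  have hC0 : 0 ≤ C := (norm_nonneg _).trans (hC a (left_mem_Icc.mpr hab))
  have hθ : ∀ n : ℕ, 0 < 1 / ((n : ℝ) + 1) := fun n => Nat.one_div_pos_of_nat
  choose q hq hqa using fun n => exists_isOrbitGraph_add_const hab hA hD hA0 hC (hθ n)
  have hanti : ∀ u ∈ Icc a b, Antitone (q · u) := fun u hu n k hnk => by
    have hle : 1 / ((k : ℝ) + 1) ≤ 1 / ((n : ℝ) + 1) := Nat.one_div_le_one_div hnk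
    have := (hq n).le_add_of_left_le (hq k) le_rfl le_rfl
      (fun v hv => add_nonneg (hA0 v (Ioo_subset_Icc_self hv))
        (mul_nonneg (hθ n).le (by linarith)))
      (fun v _ => add_le_add_right (mul_le_mul_of_nonneg_right hle (by linarith)) _)
      (fun v _ => (add_zero _).ge) (by simpa only [hqa, add_zero] using hle) u hu
    simpa only [add_zero, zero_mul] using this
  have hlim : ∀ u ∈ Icc a b, Tendsto (q · u) atTop (𝓝 (⨅ n, q n u)) := fun u hu =>
    tendsto_atTop_ciInf (hanti u hu)
      ⟨0, forall_mem_range.mpr fun n => (hq n).nonneg hab' u hu⟩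
  refine ⟨fun u => ⨅ n, q n u,
    isOrbitGraph_of_antitone_of_tendsto hab' hA hD hApos ?_ hq hanti hlim,
    tendsto_nhds_unique (hlim a (left_mem_Icc.mpr hab)) ?_⟩
  · simpa only [zero_mul] using tendsto_one_div_add_atTop_nhds_zero_nat.mul_const (C + 1)
  · simpa only [hqa] using tendsto_one_div_add_atTop_nhds_zero_nat (𝕜 := ℝ)

theorem exists_isOrbitGraph_right_eq_zero (hab : a ≤ b) (hA : ContinuousOn A (Icc a b))
    (hD : ContinuousOn D (Icc a b)) (hAneg : ∀ u ∈ Ioo a b, A u < 0) :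
    ∃ q : ℝ → ℝ, IsOrbitGraph A D a b q ∧ q b = 0 := by
  have hneg : MapsTo Neg.neg (Icc (-b) (-a)) (Icc a b) := fun v hv =>
    ⟨le_neg.mp hv.2, neg_le.mp hv.1⟩
  obtain ⟨q, hq, hqb⟩ := exists_isOrbitGraph_left_eq_zero (neg_le_neg hab)
    (hA.comp continuous_neg.continuousOn hneg).neg (hD.comp continuous_neg.continuousOn hneg).neg
    fun v hv => neg_pos.mpr (hAneg _ ⟨lt_neg.mp hv.2, neg_lt.mp hv.1⟩)
  exact ⟨_, hq.of_reflect, hqb⟩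

end Existence

/-! ### Shooting from the zeros of the force -/

/-- The value at `b` of the orbit graph over `[a, b]` that leaves the point `(a, 0)`; it is the
height used for shooting forward (a junk value if there is no such graph). -/
def endHeight (A D : ℝ → ℝ) (a b : ℝ) : ℝ :=
  Classical.epsilon fun y => ∃ q, IsOrbitGraph A D a b q ∧ q a = 0 ∧ q b = y

/-- The value at `a` of the orbit graph over `[a, b]` that arrives at the point `(b, 0)`; it is the
height used for shooting backward (a junk value if there is no such graph). -/
def startHeight (A D : ℝ → ℝ) (a b : ℝ) : ℝ :=
  Classical.epsilon fun y => ∃ q, IsOrbitGraph A D a b q ∧ q b = 0 ∧ q a = y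

section Heights

variable {A D D' q : ℝ → ℝ} {a b σ : ℝ}

theorem exists_isOrbitGraph_endHeight (hab : a ≤ b) (hA : ContinuousOn A (Icc a b))
    (hD : ContinuousOn D (Icc a b)) (hApos : ∀ u ∈ Ioo a b, 0 < A u) :
    ∃ q, IsOrbitGraph A D a b q ∧ q a = 0 ∧ q b = endHeight A D a b :=
  have ⟨q, hq, hqa⟩ := exists_isOrbitGraph_left_eq_zero hab hA hD hApos
  Classical.epsilon_spec (p := fun y => ∃ q, IsOrbitGraph A D a b q ∧ q a = 0 ∧ q b = y)
    ⟨q b, q, hq, hqa, rfl⟩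

theorem exists_isOrbitGraph_startHeight (hab : a ≤ b) (hA : ContinuousOn A (Icc a b))
    (hD : ContinuousOn D (Icc a b)) (hAneg : ∀ u ∈ Ioo a b, A u < 0) :
    ∃ q, IsOrbitGraph A D a b q ∧ q b = 0 ∧ q a = startHeight A D a b :=
  have ⟨q, hq, hqb⟩ := exists_isOrbitGraph_right_eq_zero hab hA hD hAneg
  Classical.epsilon_spec (p := fun y => ∃ q, IsOrbitGraph A D a b q ∧ q b = 0 ∧ q a = y)
    ⟨q a, q, hq, hqb, rfl⟩

theorem IsOrbitGraph.endHeight_eq (h : IsOrbitGraph A D a b q) (hab : a ≤ b)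
    (hA : ∀ u ∈ Ioo a b, 0 ≤ A u) (hqa : q a = 0) : endHeight A D a b = q b := by
  obtain ⟨p, hp, hpa, hpb⟩ := Classical.epsilon_spec
    (p := fun y => ∃ q, IsOrbitGraph A D a b q ∧ q a = 0 ∧ q b = y) ⟨q b, q, h, hqa, rfl⟩
  have hb : b ∈ Icc a b := right_mem_Icc.mpr hab
  have hqp := hp.le_add_of_left_le h le_rfl le_rfl hA (fun _ _ => le_rfl)
    (fun _ _ => (add_zero _).ge) (by rw [hqa, hpa, add_zero]) b hb
  have hpq := h.le_add_of_left_le hp le_rfl le_rfl hA (fun _ _ => le_rfl)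
    (fun _ _ => (add_zero _).ge) (by rw [hqa, hpa, add_zero]) b hb
  rw [endHeight, ← hpb]
  linarith

theorem IsOrbitGraph.startHeight_eq (h : IsOrbitGraph A D a b q) (hab : a ≤ b)
    (hA : ∀ u ∈ Ioo a b, A u ≤ 0) (hqb : q b = 0) : startHeight A D a b = q a := by
  obtain ⟨p, hp, hpb, hpa⟩ := Classical.epsilon_spec
    (p := fun y => ∃ q, IsOrbitGraph A D a b q ∧ q b = 0 ∧ q a = y) ⟨q a, q, h, hqb, rfl⟩
  have ha : a ∈ Icc a b := left_mem_Icc.mpr hab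
  have hqp := hp.le_add_of_right_le h le_rfl le_rfl hA (fun _ _ => le_rfl)
    (fun _ _ => (add_zero _).ge) (by rw [hqb, hpb, add_zero]) a ha
  have hpq := h.le_add_of_right_le hp le_rfl le_rfl hA (fun _ _ => le_rfl)
    (fun _ _ => (add_zero _).ge) (by rw [hqb, hpb, add_zero]) a ha
  rw [startHeight, ← hpa]
  linarith

theorem startHeight_self : startHeight A D a a = 0 :=
  IsOrbitGraph.startHeight_eq (q := 0) ⟨continuousOn_const, by simp, by simp⟩ le_rfl (by simp) rfl

theorem endHeight_nonneg (hab : a < b) (hA : ContinuousOn A (Icc a b))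
    (hD : ContinuousOn D (Icc a b)) (hApos : ∀ u ∈ Ioo a b, 0 < A u) : 0 ≤ endHeight A D a b := by
  obtain ⟨q, hq, -, hqb⟩ := exists_isOrbitGraph_endHeight hab.le hA hD hApos
  exact hqb ▸ hq.nonneg hab b (right_mem_Icc.mpr hab.le)

theorem endHeight_le_add (hab : a ≤ b) (hA : ContinuousOn A (Icc a b))
    (hD : ContinuousOn D (Icc a b)) (hD' : ContinuousOn D' (Icc a b))
    (hApos : ∀ u ∈ Ioo a b, 0 < A u) (hσ : 0 ≤ σ) (hle : ∀ u ∈ Ioo a b, D' u ≤ D u + σ) :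
    endHeight A D' a b ≤ endHeight A D a b + σ * (b - a) := by
  obtain ⟨q, hq, hqa, hqb⟩ := exists_isOrbitGraph_endHeight hab hA hD hApos
  obtain ⟨q', hq', hqa', hqb'⟩ := exists_isOrbitGraph_endHeight hab hA hD' hApos
  simpa only [add_zero, hqb, hqb'] using hq.le_add_of_left_le hq' hσ le_rfl
    (fun u hu => (hApos u hu).le) (fun _ _ => le_rfl) hle (by rw [hqa, hqa', add_zero]) b
    (right_mem_Icc.mpr hab)

theorem startHeight_le_add (hab : a ≤ b) (hA : ContinuousOn A (Icc a b))
    (hD : ContinuousOn D (Icc a b)) (hD' : ContinuousOn D' (Icc a b))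
    (hAneg : ∀ u ∈ Ioo a b, A u < 0) (hσ : 0 ≤ σ) (hle : ∀ u ∈ Ioo a b, D u ≤ D' u + σ) :
    startHeight A D' a b ≤ startHeight A D a b + σ * (b - a) := by
  obtain ⟨q, hq, hqb, hqa⟩ := exists_isOrbitGraph_startHeight hab hA hD hAneg
  obtain ⟨q', hq', hqb', hqa'⟩ := exists_isOrbitGraph_startHeight hab hA hD' hAneg
  simpa only [add_zero, hqa, hqa'] using hq.le_add_of_right_le hq' hσ le_rfl
    (fun u hu => (hAneg u hu).le) (fun _ _ => le_rfl) hle (by rw [hqb, hqb', add_zero]) a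
    (left_mem_Icc.mpr hab)

theorem monotoneOn_startHeight (hA : ContinuousOn A (Icc a b)) (hD : ContinuousOn D (Icc a b))
    (hAneg : ∀ u ∈ Ioo a b, A u < 0) : MonotoneOn (startHeight A D a) (Icc a b) := by
  intro m hm n hn hmn
  rcases hn.1.eq_or_lt with rfl | han
  · rw [hmn.antisymm hm.1]
  have restrict {m : ℝ} (hm : m ∈ Icc a b) := exists_isOrbitGraph_startHeight (D := D) hm.1
    (hA.mono (Icc_subset_Icc_right hm.2)) (hD.mono (Icc_subset_Icc_right hm.2))
    fun u hu => hAneg u ⟨hu.1, hu.2.trans_le hm.2⟩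
  obtain ⟨q, hq, hqm, hqa⟩ := restrict hm
  obtain ⟨p, hp, -, hpa⟩ := restrict hn
  simpa only [add_zero, zero_mul, hpa, hqa] using
    (hp.mono le_rfl hmn).le_add_of_right_le hq le_rfl le_rfl
      (fun u hu => (hAneg u ⟨hu.1, hu.2.trans_le hm.2⟩).le) (fun _ _ => le_rfl)
      (fun _ _ => (add_zero _).ge) (by simpa only [hqm, add_zero] using hp.nonneg han m ⟨hm.1, hmn⟩)
      a (left_mem_Icc.mpr hm.1)

theorem exists_forall_isOrbitGraph_sq_le (hab : a < b) (hA : ContinuousOn A (Icc a b))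
    (hD : ContinuousOn D (Icc a b)) (hAneg : ∀ u ∈ Ioo a b, A u < 0) :
    ∃ C : ℝ≥0, ∀ n ∈ Ioc a b, ∀ q, IsOrbitGraph A D a n q → q n = 0 →
      ∀ m ∈ Icc a n, q m ^ 2 ≤ C * (n - m) := by
  obtain ⟨CA, hCA⟩ := isCompact_Icc.exists_bound_of_continuousOn hA
  obtain ⟨CD, hCD⟩ := isCompact_Icc.exists_bound_of_continuousOn hD
  obtain ⟨p, hp, -⟩ := exists_isOrbitGraph_right_eq_zero hab.le hA hD hAneg
  obtain ⟨P, hP⟩ := isCompact_Icc.exists_bound_of_continuousOn hp.continuousOn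
  refine ⟨(2 * (CA + CD * P)).toNNReal, fun n hn q hq hqn m hm => ?_⟩
  have hqp : ∀ u ∈ Icc a n, q u ≤ p u := by
    simpa only [add_zero, zero_mul] using (hp.mono le_rfl hn.2).le_add_of_right_le hq le_rfl le_rfl
      (fun u hu => (hAneg u ⟨hu.1, hu.2.trans_le hn.2⟩).le) (fun _ _ => le_rfl)
      (fun _ _ => (add_zero _).ge)
      (by simpa only [hqn, add_zero] using hp.nonneg hab n ⟨hn.1.le, hn.2⟩)
  have hlip := hq.lipschitzOnWith_sq hn.1 (C := 2 * (CA + CD * P)) fun u hu => by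
    have hub : u ∈ Icc a b := ⟨hu.1.le, hu.2.le.trans hn.2⟩
    have hqP : |q u| ≤ P := by
      rw [abs_of_pos (hq.pos u hu)]
      exact (hqp u (Ioo_subset_Icc_self hu)).trans ((le_abs_self _).trans (hP u hub))
    rw [abs_mul, abs_two]
    refine mul_le_mul_of_nonneg_left ((abs_add_le _ _).trans (add_le_add (hCA u hub) ?_))
      zero_le_two
    rw [abs_mul]
    exact mul_le_mul (hCD u hub) hqP (abs_nonneg _) ((abs_nonneg _).trans (hCD u hub))
  have := hlip.dist_le_mul m hm n (right_mem_Icc.mpr hn.1.le)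
  simp only [hqn, ne_eq, OfNat.ofNat_ne_zero, not_false_eq_true, zero_pow, dist_zero_right,
    norm_pow, Real.norm_eq_abs, sq_abs] at this
  rwa [dist_comm, Real.dist_eq, abs_of_nonneg (sub_nonneg.mpr hm.2)] at this

theorem exists_forall_abs_startHeight_sub_le (hab : a < b) (hA : ContinuousOn A (Icc a b))
    (hD : ContinuousOn D (Icc a b)) (hAneg : ∀ u ∈ Ioo a b, A u < 0) :
    ∃ C : ℝ≥0, ∀ m ∈ Icc a b, ∀ n ∈ Icc a b, m ≤ n →
      |startHeight A D a n - startHeight A D a m| ≤ √(C * (n - m)) := by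
  obtain ⟨C, hC⟩ := exists_forall_isOrbitGraph_sq_le hab hA hD hAneg
  refine ⟨C, fun m hm n hn hmn => ?_⟩
  rcases hn.1.eq_or_lt with rfl | han
  · simp [hmn.antisymm hm.1]
  have restrict {m : ℝ} (hm : m ∈ Icc a b) := exists_isOrbitGraph_startHeight (D := D) hm.1
    (hA.mono (Icc_subset_Icc_right hm.2)) (hD.mono (Icc_subset_Icc_right hm.2))
    fun u hu => hAneg u ⟨hu.1, hu.2.trans_le hm.2⟩
  obtain ⟨q, hq, hqm, hqa⟩ := restrict hm
  obtain ⟨p, hp, hpn, hpa⟩ := restrict hn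
  have hpm : p m ≤ √(C * (n - m)) :=
    (le_abs_self _).trans (Real.abs_le_sqrt (hC n ⟨han, hn.2⟩ p hp hpn m ⟨hm.1, hmn⟩))
  have hle : p a ≤ q a + p m := by
    simpa only [zero_mul, add_zero] using
      hq.le_add_of_right_le (hp.mono le_rfl hmn) le_rfl (hp.nonneg han m ⟨hm.1, hmn⟩)
        (fun u hu => (hAneg u ⟨hu.1, hu.2.trans_le hm.2⟩).le) (fun _ _ => le_rfl)
        (fun _ _ => (add_zero _).ge) (by rw [hqm, zero_add]) a (left_mem_Icc.mpr hm.1)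
  rw [abs_of_nonneg (sub_nonneg.mpr (monotoneOn_startHeight hA hD hAneg hm hn hmn)), ← hpa, ← hqa]
  linarith

theorem continuousOn_startHeight (hab : a < b) (hA : ContinuousOn A (Icc a b))
    (hD : ContinuousOn D (Icc a b)) (hAneg : ∀ u ∈ Ioo a b, A u < 0) :
    ContinuousOn (startHeight A D a) (Icc a b) := by
  obtain ⟨C, hC⟩ := exists_forall_abs_startHeight_sub_le hab hA hD hAneg
  intro m hm
  have hmodulus : ∀ n ∈ Icc a b,
      dist (startHeight A D a n) (startHeight A D a m) ≤ √(C * |n - m|) := by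
    intro n hn
    rcases le_total m n with hmn | hnm
    · rw [Real.dist_eq, abs_of_nonneg (sub_nonneg.mpr hmn)]
      exact hC m hm n hn hmn
    · rw [dist_comm, Real.dist_eq, abs_sub_comm n, abs_of_nonneg (sub_nonneg.mpr hnm)]
      exact hC n hn m hm hnm
  have hsqrt : Tendsto (fun n => √(C * |n - m|)) (𝓝[Icc a b] m) (𝓝 0) := by
    refine (Continuous.tendsto' (by fun_prop) m 0 ?_).mono_left nhdsWithin_le_nhds
    rw [sub_self, abs_zero, mul_zero, Real.sqrt_zero]
  exact tendsto_iff_dist_tendsto_zero.mpr (squeeze_zero' (Eventually.of_forall fun _ => dist_nonneg)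
    (eventually_nhdsWithin_of_forall hmodulus) hsqrt)

end Heights

/-- The coefficient of `w` in `w' = A(u) + (d(u) + μ g(u)) w`, whose dependence on the
parameter `μ` is monotone when `g` is nonnegative. -/
def damping (d g : ℝ → ℝ) (μ u : ℝ) : ℝ := d u + μ * g u

theorem neg_damping (d g : ℝ → ℝ) (μ u : ℝ) :
    -damping d g μ u = damping (fun u => -d u) g (-μ) u := by
  simp only [damping]
  ring

section Damping

variable {A d g : ℝ → ℝ} {a b μ μ' : ℝ}

theorem continuousOn_damping {s : Set ℝ} (hd : ContinuousOn d s) (hg : ContinuousOn g s) (μ : ℝ) :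
    ContinuousOn (damping d g μ) s :=
  hd.add (continuousOn_const.mul hg)

theorem damping_le_damping {u : ℝ} (hg : 0 ≤ g u) (h : μ ≤ μ') :
    damping d g μ u ≤ damping d g μ' u :=
  add_le_add_right (mul_le_mul_of_nonneg_right h hg) _

theorem damping_le_add {u C : ℝ} (hC : |g u| ≤ C) :
    damping d g μ u ≤ damping d g μ' u + C * dist μ μ' := by
  have h : (μ - μ') * g u ≤ C * dist μ μ' := by
    rw [mul_comm C, Real.dist_eq]
    exact (le_abs_self _).trans (abs_mul (μ - μ') (g u) ▸
      mul_le_mul_of_nonneg_left hC (abs_nonneg _))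
  simp only [damping]
  linarith

theorem monotone_endHeight_damping (hab : a ≤ b) (hA : ContinuousOn A (Icc a b))
    (hd : ContinuousOn d (Icc a b)) (hg : ContinuousOn g (Icc a b))
    (hApos : ∀ u ∈ Ioo a b, 0 < A u) (hg0 : ∀ u ∈ Ioo a b, 0 ≤ g u) :
    Monotone fun μ => endHeight A (damping d g μ) a b := fun μ μ' hμ => by
  simpa only [zero_mul, add_zero] using endHeight_le_add hab hA (continuousOn_damping hd hg μ')
    (continuousOn_damping hd hg μ) hApos le_rfl
    fun u hu => (damping_le_damping (hg0 u hu) hμ).trans (add_zero _).ge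

theorem antitone_startHeight_damping (hab : a ≤ b) (hA : ContinuousOn A (Icc a b))
    (hd : ContinuousOn d (Icc a b)) (hg : ContinuousOn g (Icc a b))
    (hAneg : ∀ u ∈ Ioo a b, A u < 0) (hg0 : ∀ u ∈ Ioo a b, 0 ≤ g u) :
    Antitone fun μ => startHeight A (damping d g μ) a b := fun μ μ' hμ => by
  simpa only [zero_mul, add_zero] using startHeight_le_add hab hA (continuousOn_damping hd hg μ)
    (continuousOn_damping hd hg μ') hAneg le_rfl
    fun u hu => (damping_le_damping (hg0 u hu) hμ).trans (add_zero _).ge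

theorem lipschitzWith_endHeight_damping (hab : a ≤ b) (hA : ContinuousOn A (Icc a b))
    (hd : ContinuousOn d (Icc a b)) (hg : ContinuousOn g (Icc a b))
    (hApos : ∀ u ∈ Ioo a b, 0 < A u) {C : ℝ} (hC : ∀ u ∈ Icc a b, |g u| ≤ C) :
    LipschitzWith (C * (b - a)).toNNReal fun μ => endHeight A (damping d g μ) a b := by
  have hC0 : 0 ≤ C := (abs_nonneg _).trans (hC a (left_mem_Icc.mpr hab))
  refine LipschitzWith.of_le_add_mul' _ fun μ μ' => ?_
  rw [mul_right_comm]
  exact endHeight_le_add hab hA (continuousOn_damping hd hg μ') (continuousOn_damping hd hg μ)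
    hApos (by positivity) fun u hu => damping_le_add (hC u (Ioo_subset_Icc_self hu))

theorem lipschitzWith_startHeight_damping (hab : a ≤ b) (hA : ContinuousOn A (Icc a b))
    (hd : ContinuousOn d (Icc a b)) (hg : ContinuousOn g (Icc a b))
    (hAneg : ∀ u ∈ Ioo a b, A u < 0) {C : ℝ} (hC : ∀ u ∈ Icc a b, |g u| ≤ C) :
    LipschitzWith (C * (b - a)).toNNReal fun μ => startHeight A (damping d g μ) a b := by
  have hC0 : 0 ≤ C := (abs_nonneg _).trans (hC a (left_mem_Icc.mpr hab))
  refine LipschitzWith.of_le_add_mul' _ fun μ μ' => ?_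
  rw [mul_right_comm]
  exact startHeight_le_add hab hA (continuousOn_damping hd hg μ') (continuousOn_damping hd hg μ)
    hAneg (by positivity) fun u hu => by
      rw [dist_comm]
      exact damping_le_add (hC u (Ioo_subset_Icc_self hu))

theorem continuousOn_startHeight_damping (hab : a < b) (hA : ContinuousOn A (Icc a b))
    (hd : ContinuousOn d (Icc a b)) (hg : ContinuousOn g (Icc a b))
    (hAneg : ∀ u ∈ Ioo a b, A u < 0) :
    ContinuousOn (fun p : ℝ × ℝ => startHeight A (damping d g p.2) a p.1) (Icc a b ×ˢ univ) := by
  obtain ⟨C, hC⟩ := isCompact_Icc.exists_bound_of_continuousOn hg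
  have hC0 : 0 ≤ C := (norm_nonneg _).trans (hC a (left_mem_Icc.mpr hab.le))
  refine continuousOn_prod_of_continuousOn_lipschitzOnWith' _ (C * (b - a)).toNNReal
    (fun m hm => ?_)
    fun μ _ => continuousOn_startHeight hab hA (continuousOn_damping hd hg μ) hAneg
  have hsub : Icc a m ⊆ Icc a b := Icc_subset_Icc_right hm.2
  have hle : (C * (m - a)).toNNReal ≤ (C * (b - a)).toNNReal :=
    Real.toNNReal_mono (mul_le_mul_of_nonneg_left (by linarith [hm.2]) hC0)
  exact ((lipschitzWith_startHeight_damping hm.1 (hA.mono hsub) (hd.mono hsub) (hg.mono hsub)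
    (fun u hu => hAneg u ⟨hu.1, hu.2.trans_le hm.2⟩) fun u hu => hC u (hsub hu)).weaken
      hle).lipschitzOnWith

end Damping

/-! ### Pairs of arches with common feet -/

theorem exists_common_zero_of_monotoneOn {f g : ℝ → ℝ} {s t : ℝ} (hst : s ≤ t)
    (hg : ContinuousOn g (Icc s t)) (hfm : MonotoneOn f (Icc s t)) (hfs : 0 ≤ f s) (hgs : g s ≤ 0)
    (hft : f t ≤ 0) (hgt : 0 ≤ g t) : ∃ x ∈ Icc s t, f x = 0 ∧ g x = 0 := by
  obtain ⟨x, hx, hgx⟩ := intermediate_value_Icc hst hg ⟨hgs, hgt⟩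
  exact ⟨x, hx, le_antisymm ((hfm hx (right_mem_Icc.mpr hst) hx.2).trans hft)
    (hfs.trans (hfm (left_mem_Icc.mpr hst) hx hx.1)), hgx⟩

theorem isClosed_setOf_exists_nonpos_nonpos {F G : ℝ × ℝ → ℝ} {a b c d : ℝ}
    (hF : ContinuousOn F (Icc a b ×ˢ Icc c d)) (hG : ContinuousOn G (Icc a b ×ˢ Icc c d)) :
    IsClosed {y | y ∈ Icc c d ∧ ∃ x ∈ Icc a b, F (x, y) ≤ 0 ∧ G (x, y) ≤ 0} := by
  have hK : IsCompact (Icc a b ×ˢ Icc c d) := isCompact_Icc.prod isCompact_Icc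
  have hcompact : IsCompact ((Icc a b ×ˢ Icc c d) ∩ (fun p => max (F p) (G p)) ⁻¹' Iic 0) :=
    hK.of_isClosed_subset ((hF.sup hG).preimage_isClosed_of_isClosed hK.isClosed isClosed_Iic)
      inter_subset_left
  convert (hcompact.image continuous_snd).isClosed using 1
  ext y
  simp only [mem_ofPred_eq, mem_image, mem_inter_iff, mem_prod, mem_preimage, mem_Iic, max_le_iff,
    Prod.exists, exists_eq_right]
  exact ⟨fun ⟨hy, x, hx, h⟩ => ⟨x, ⟨hx, hy⟩, h⟩, fun ⟨x, ⟨hx, hy⟩, h⟩ => ⟨hy, x, hx, h⟩⟩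

theorem exists_common_zero {F G : ℝ × ℝ → ℝ} {a b c d : ℝ} (hab : a ≤ b) (hcd : c ≤ d)
    (hF : ContinuousOn F (Icc a b ×ˢ Icc c d)) (hG : ContinuousOn G (Icc a b ×ˢ Icc c d))
    (hFm : ∀ y ∈ Icc c d, MonotoneOn (fun x => F (x, y)) (Icc a b))
    (hGm : ∀ y ∈ Icc c d, MonotoneOn (fun x => G (x, y)) (Icc a b))
    (hFa : ∀ y ∈ Icc c d, F (a, y) ≤ 0) (hFb : ∀ y ∈ Icc c d, 0 ≤ F (b, y))
    (hFd : F (b, d) ≤ 0) (hGd : 0 ≤ G (b, d)) (hGc : G (b, c) ≤ 0) :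
    ∃ y ∈ Icc c d, ∃ x ∈ Icc a b, F (x, y) = 0 ∧ G (x, y) = 0 := by
  have hslice {H : ℝ × ℝ → ℝ} (hH : ContinuousOn H (Icc a b ×ˢ Icc c d)) {y : ℝ}
      (hy : y ∈ Icc c d) : ContinuousOn (fun x => H (x, y)) (Icc a b) :=
    hH.comp (by fun_prop) fun x hx => ⟨hx, hy⟩
  have hb : b ∈ Icc a b := right_mem_Icc.mpr hab
  -- `[c, d]` is covered by the closed sets `{∃ x, F ≥ 0 ≥ G}` and `{∃ x, F ≤ 0 ≤ G}`.
  obtain ⟨y, hy, ⟨-, s, hs, hFs, hGs⟩, ⟨-, t, ht, hFt, hGt⟩⟩ :=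
    isPreconnected_closed_iff.mp (isPreconnected_Icc (a := c) (b := d)) _ _
      (isClosed_setOf_exists_nonpos_nonpos hF.neg hG)
      (isClosed_setOf_exists_nonpos_nonpos hF hG.neg)
      (fun y hy => by
        obtain ⟨x, hx, hFx⟩ := intermediate_value_Icc hab (hslice hF hy) ⟨hFa y hy, hFb y hy⟩
        dsimp only at hFx
        rcases le_total (G (x, y)) 0 with hGx | hGx
        · exact Or.inl ⟨hy, x, hx, by simp [hFx], hGx⟩
        · exact Or.inr ⟨hy, x, hx, hFx.le, by simpa using hGx⟩)
      ⟨c, left_mem_Icc.mpr hcd, left_mem_Icc.mpr hcd, b, hb,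
        by simpa using hFb c (left_mem_Icc.mpr hcd), hGc⟩
      ⟨d, right_mem_Icc.mpr hcd, right_mem_Icc.mpr hcd, b, hb, hFd, by simpa using hGd⟩
  rw [Pi.neg_apply, neg_nonpos] at hFs hGt
  refine ⟨y, hy, ?_⟩
  rcases le_total s t with hst | hts
  · have hsub : Icc s t ⊆ Icc a b := Icc_subset_Icc hs.1 ht.2
    obtain ⟨x, hx, h⟩ := exists_common_zero_of_monotoneOn hst ((hslice hG hy).mono hsub)
      ((hFm y hy).mono hsub) hFs hGs hFt hGt
    exact ⟨x, hsub hx, h⟩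
  · have hsub : Icc t s ⊆ Icc a b := Icc_subset_Icc ht.1 hs.2
    obtain ⟨x, hx, h⟩ := exists_common_zero_of_monotoneOn hts ((hslice hF hy).mono hsub)
      ((hGm y hy).mono hsub) hGt hFt hGs hFs
    exact ⟨x, hsub hx, h.symm⟩

/-- An orbit graph over `[a, b]` both of whose ends lie on the axis `w = 0`: the upper half of a
homoclinic loop when `a` is a saddle and `b` is not an equilibrium, a heteroclinic orbit when
both are equilibria. -/
structure IsOrbitArch (A D : ℝ → ℝ) (a b : ℝ) (q : ℝ → ℝ) : Prop extends
    IsOrbitGraph A D a b q where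
  left_eq_zero : q a = 0
  right_eq_zero : q b = 0

section

variable {A D D₁ D₂ q q₁ q₂ : ℝ → ℝ} {a b c m₁ m₂ A₀ : ℝ}

theorem IsOrbitGraph.right_pos (h : IsOrbitGraph A D a b q) (hab : a < b) {α ε : ℝ} (hε : 0 < ε)
    (hεα : ε * ε ≤ α) (hA : ∀ u ∈ Ioo a b, α * (b - u) ≤ A u) (hD : ∀ u ∈ Ioo a b, -ε ≤ D u) :
    0 < q b := by
  by_contra! hqb
  have hA0 : ∀ u ∈ Ioo a b, 0 ≤ A u := fun u hu =>
    (mul_nonneg ((mul_self_nonneg ε).trans hεα) (sub_nonneg.mpr hu.2.le)).trans (hA u hu)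
  have hmono : MonotoneOn (fun u => q u + ε * u) (Icc a b) := by
    refine monotoneOn_of_hasDerivWithinAt_nonneg (f' := fun u => A u / q u + D u + ε * 1)
      (convex_Icc a b) (h.continuousOn.add (by fun_prop)) ?_ ?_ <;> rw [interior_Icc]
    · exact fun u hu =>
        ((h.hasDerivAt u hu).add ((hasDerivAt_id u).const_mul ε)).hasDerivWithinAt
    · exact fun u hu => by linarith [div_nonneg (hA0 u hu) (h.pos u hu).le, hD u hu]
  have hle : ∀ u ∈ Icc a b, q u ≤ ε * (b - u) := fun u hu => by
    have := hmono hu (right_mem_Icc.mpr hab.le) hu.2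
    dsimp only at this
    linarith
  have hqmono : MonotoneOn q (Icc a b) := by
    refine monotoneOn_of_hasDerivWithinAt_nonneg (convex_Icc a b) h.continuousOn
      (f' := fun u => A u / q u + D u) ?_ ?_ <;> rw [interior_Icc]
    · exact fun u hu => (h.hasDerivAt u hu).hasDerivWithinAt
    · intro u hu
      have hεA : ε ≤ A u / q u := by
        rw [le_div_iff₀ (h.pos u hu)]
        calc ε * q u ≤ ε * (ε * (b - u)) :=
              mul_le_mul_of_nonneg_left (hle u (Ioo_subset_Icc_self hu)) hε.le
          _ = ε * ε * (b - u) := (mul_assoc _ _ _).symm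
          _ ≤ α * (b - u) := mul_le_mul_of_nonneg_right hεα (sub_nonneg.mpr hu.2.le)
          _ ≤ A u := hA u hu
      linarith [hD u hu]
  obtain ⟨u, hu⟩ := nonempty_Ioo.mpr hab
  exact ((h.pos u hu).trans_le
    (hqmono (Ioo_subset_Icc_self hu) (right_mem_Icc.mpr hab.le) hu.2.le)).not_ge hqb

theorem IsOrbitGraph.damping_neg_of_right_eq_zero (h : IsOrbitGraph A D a b q) (hab : a < b)
    (hA : HasDerivAt A A₀ b) (hAb : A b = 0) (hA₀ : A₀ < 0) (hD : ContinuousAt D b)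
    (hqb : q b = 0) : D b < 0 := by
  by_contra! hDb
  set α := -A₀ / 2
  have hα : 0 < α := by simp only [α]; linarith
  have hev : ∀ᶠ u in 𝓝[<] b, α * (b - u) ≤ A u ∧ -√α ≤ D u := by
    have hslope : ∀ᶠ u in 𝓝[<] b, slope A b u < -α :=
      ((hasDerivAt_iff_tendsto_slope.mp hA).mono_left
        (nhdsWithin_mono _ fun u hu => (mem_Iio.mp hu).ne)).eventually_lt_const
        (by simp only [α]; linarith)
    have hDlt : ∀ᶠ u in 𝓝 b, -√α < D u :=
      hD.eventually_const_lt (by linarith [Real.sqrt_pos.mpr hα])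
    filter_upwards [hslope, nhdsWithin_le_nhds hDlt, self_mem_nhdsWithin] with u hu hDu hub
    rw [slope_def_field, hAb, sub_zero, div_lt_iff_of_neg (sub_neg.mpr hub)] at hu
    exact ⟨by linarith, hDu.le⟩
  obtain ⟨s, hs, hsub⟩ := (mem_nhdsLT_iff_exists_Ioo_subset' hab).mp hev
  have hmem : ∀ u ∈ Ioo (max a s) b, u ∈ Ioo s b :=
    fun u hu => ⟨(le_max_right a s).trans_lt hu.1, hu.2⟩
  exact ((h.mono (le_max_left a s) le_rfl).right_pos (max_lt hab hs) (Real.sqrt_pos.mpr hα)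
    (Real.mul_self_sqrt hα.le).le (fun u hu => (hsub (hmem u hu)).1)
    fun u hu => (hsub (hmem u hu)).2).ne' hqb

theorem IsOrbitGraph.damping_pos_of_left_eq_zero (h : IsOrbitGraph A D a b q) (hab : a < b)
    (hA : HasDerivAt A A₀ a) (hAa : A a = 0) (hA₀ : A₀ < 0) (hD : ContinuousAt D a)
    (hqa : q a = 0) : 0 < D a := by
  rw [← neg_neg a] at hA hD
  have hA' : HasDerivAt (fun v => -A (-v)) A₀ (-a) :=
    (hA.scomp (-a) (hasDerivAt_neg (-a))).neg.congr_deriv (by simp)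
  have hD' : ContinuousAt (fun v => -D (-v)) (-a) :=
    (ContinuousAt.comp (f := fun v : ℝ => -v) hD continuous_neg.continuousAt).neg
  simpa only [neg_neg, neg_lt_zero] using h.reflect.damping_neg_of_right_eq_zero
    (neg_lt_neg hab) hA' (by simpa using hAa) hA₀ hD' (by simpa using hqa)

theorem IsOrbitGraph.eq_right_of_eq (h₁ : IsOrbitGraph A D a b q₁) (h₂ : IsOrbitGraph A D a b q₂)
    (hc : c ∈ Ioo a b) (hD : ContinuousOn D (Icc c b)) (hpos : ∀ u ∈ Icc c b, 0 < q₁ u)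
    (heq : q₁ c = q₂ c) : q₁ b = q₂ b := by
  have hsub : Icc c b ⊆ Icc a b := Icc_subset_Icc_left hc.1.le
  have hsub' : Ico c b ⊆ Ioo a b := fun u hu => ⟨hc.1.trans_le hu.1, hu.2⟩
  have hab := hc.1.trans hc.2
  have hsum : ∀ u ∈ Icc c b, 0 < q₁ u + q₂ u := fun u hu =>
    add_pos_of_pos_of_nonneg (hpos u hu) (h₂.nonneg hab u (hsub hu))
  obtain ⟨K, hK⟩ := isCompact_Icc.exists_bound_of_continuousOn
    ((continuousOn_const.mul hD).div ((h₁.continuousOn.mono hsub).add (h₂.continuousOn.mono hsub))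
      fun u hu => (hsum u hu).ne' : ContinuousOn (fun u => 2 * D u / (q₁ u + q₂ u)) (Icc c b))
  have hb : b ∈ Icc c b := right_mem_Icc.mpr hc.2.le
  have hsq : q₁ b ^ 2 - q₂ b ^ 2 = 0 := by
    refine eq_zero_of_abs_deriv_le_mul_abs_self_of_eq_zero_right (K := K)
      (f := fun u => q₁ u ^ 2 - q₂ u ^ 2)
      (f' := fun u => 2 * (A u + D u * q₁ u) - 2 * (A u + D u * q₂ u))
      (((h₁.continuousOn.mono hsub).pow 2).sub ((h₂.continuousOn.mono hsub).pow 2))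
      (fun u hu => ((h₁.hasDerivAt_sq (hsub' hu)).sub
        (h₂.hasDerivAt_sq (hsub' hu))).hasDerivWithinAt) (by rw [heq, sub_self])
      (fun u hu => ?_) b hb
    have := (hsum u (Ico_subset_Icc_self hu)).ne'
    have hfactor : 2 * (A u + D u * q₁ u) - 2 * (A u + D u * q₂ u) =
        2 * D u / (q₁ u + q₂ u) * (q₁ u ^ 2 - q₂ u ^ 2) := by
      field_simp
      ring
    rw [hfactor, norm_mul]
    exact mul_le_mul_of_nonneg_right (hK u (Ico_subset_Icc_self hu)) (norm_nonneg _)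
  exact (pow_left_inj₀ (hpos b hb).le (h₂.nonneg hab b (hsub hb)) two_ne_zero).mp
    (sub_eq_zero.mp hsq)

theorem IsOrbitArch.right_lt_right (h₁ : IsOrbitArch A D₁ a m₁ q₁) (h₂ : IsOrbitArch A D₂ a m₂ q₂)
    (hc₁ : c ∈ Ioo a m₁) (hc₂ : c ∈ Ioo a m₂) (hApos : ∀ u ∈ Ioo a c, 0 ≤ A u)
    (hAneg : ∀ u ∈ Ioo c m₂, A u ≤ 0) (hD : ∀ u ∈ Ioo a m₂, D₁ u ≤ D₂ u) (hDc : D₁ c < D₂ c) :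
    m₁ < m₂ := by
  by_contra! hm
  have hleft : ∀ u ∈ Icc a c, q₁ u ≤ q₂ u := by
    simpa only [add_zero, zero_mul] using
      (h₂.mono le_rfl hc₂.2.le).le_add_of_left_le (h₁.mono le_rfl hc₁.2.le) le_rfl le_rfl hApos
        (fun _ _ => le_rfl) (fun u hu => (hD u ⟨hu.1, hu.2.trans hc₂.2⟩).trans (add_zero _).ge)
        (by rw [h₁.left_eq_zero, h₂.left_eq_zero, add_zero])
  have hright : ∀ u ∈ Icc c m₂, q₂ u ≤ q₁ u := by
    simpa only [add_zero, zero_mul] using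
      (h₁.mono hc₁.1.le hm).le_add_of_right_le (h₂.mono hc₂.1.le le_rfl) le_rfl le_rfl hAneg
        (fun _ _ => le_rfl) (fun u hu => (hD u ⟨hc₂.1.trans hu.1, hu.2⟩).trans (add_zero _).ge)
        (by rw [h₂.right_eq_zero, add_zero]; exact h₁.nonneg (hc₁.1.trans hc₁.2) _
              ⟨(hc₂.1.trans hc₂.2).le, hm⟩)
  have heq : q₁ c = q₂ c := (hleft c (right_mem_Icc.mpr hc₁.1.le)).antisymm
    (hright c (left_mem_Icc.mpr hc₂.2.le))
  -- The two graphs meet at `c` with distinct slopes, so `q₂ < q₁` just before `c`.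
  have hderiv : HasDerivAt (fun u => q₂ u - q₁ u) (D₂ c - D₁ c) c :=
    ((h₂.hasDerivAt c hc₂).sub (h₁.hasDerivAt c hc₁)).congr_deriv (by rw [heq]; ring)
  have hsign := eventually_nhdsWithin_sign_eq_of_deriv_pos (f := fun u => q₂ u - q₁ u) (x₀ := c)
    (by rw [hderiv.deriv]; exact sub_pos.mpr hDc) (sub_eq_zero.mpr heq.symm)
  obtain ⟨u, hu, hau⟩ :=
    ((hsign.filter_mono nhdsWithin_le_nhds).and (Ioo_mem_nhdsLT hc₁.1)).exists
  rw [sign_neg (sub_neg.mpr hau.2), sign_eq_neg_one_iff] at hu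
  linarith [hleft u (Ioo_subset_Icc_self hau)]

theorem IsOrbitArch.right_le_right (h₁ : IsOrbitArch A D a m₁ q₁) (h₂ : IsOrbitArch A D a m₂ q₂)
    (hc₁ : c ∈ Ioo a m₁) (hc₂ : c ∈ Ioo a m₂) (hApos : ∀ u ∈ Ioo a c, 0 ≤ A u)
    (hD : ContinuousOn D (Icc c m₂)) : m₁ ≤ m₂ := by
  by_contra! hm
  have h₁c := h₁.mono le_rfl hc₁.2.le
  have h₂c := h₂.mono le_rfl hc₂.2.le
  have heq : q₁ c = q₂ c := by
    rw [← h₁c.endHeight_eq hc₁.1.le hApos h₁.left_eq_zero,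
      ← h₂c.endHeight_eq hc₁.1.le hApos h₂.left_eq_zero]
  have := (h₁.mono le_rfl hm.le).eq_right_of_eq h₂.toIsOrbitGraph hc₂ hD
    (fun u hu => h₁.pos u ⟨hc₁.1.trans_le hu.1, hu.2.trans_lt hm⟩) heq
  exact (h₁.pos m₂ ⟨hc₂.1.trans hc₂.2, hm⟩).ne' (this.trans h₂.right_eq_zero)

theorem IsOrbitGraph.exists_isOrbitArch (h₁ : IsOrbitGraph A D a c q₁)
    (h₂ : IsOrbitGraph A D c b q₂) (hac : a < c) (hcb : c < b) (hA : HasDerivAt A A₀ c)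
    (hAc : A c = 0) (hA₀ : A₀ < 0) (hD : ContinuousAt D c) (ha : q₁ a = 0) (hb : q₂ b = 0)
    (heq : q₁ c = q₂ c) : ∃ q, IsOrbitArch A D a b q := by
  have hpos : 0 < q₁ c := (h₁.nonneg hac c (right_mem_Icc.mpr hac.le)).lt_of_ne' fun h0 =>
    lt_asymm (h₁.damping_neg_of_right_eq_zero hac hA hAc hA₀ hD h0)
      (h₂.damping_pos_of_left_eq_zero hcb hA hAc hA₀ hD (heq ▸ h0))
  refine ⟨_, h₁.glue hac hcb h₂ hA.continuousAt hD heq hpos, ?_, ?_⟩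
  · simp [hac.le, ha]
  · simp [hcb.not_ge, hb]

end

/-- The mismatch at `c` between the orbit graph that leaves `(a, 0)` and the one that arrives at
`(p.1, 0)`, for the damping parameter `p.2`; its zeros are the arches over `[a, p.1]`. -/
def shootingGap (A d g : ℝ → ℝ) (a c : ℝ) (p : ℝ × ℝ) : ℝ :=
  startHeight A (damping d g p.2) c p.1 - endHeight A (damping d g p.2) a c

section

variable {A d g q : ℝ → ℝ} {a b c m μ A₀ : ℝ}

theorem IsOrbitArch.shootingGap_eq_zero (h : IsOrbitArch A (damping d g μ) a m q)
    (hac : a ≤ c) (hcm : c ≤ m) (hApos : ∀ u ∈ Ioo a c, 0 ≤ A u) (hAneg : ∀ u ∈ Ioo c m, A u ≤ 0) :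
    shootingGap A d g a c (m, μ) = 0 := by
  rw [shootingGap, (h.mono le_rfl hcm).endHeight_eq hac hApos h.left_eq_zero,
    (h.mono hac le_rfl).startHeight_eq hcm hAneg h.right_eq_zero, sub_self]

theorem exists_isOrbitArch_of_shootingGap_eq_zero (hac : a < c) (hcm : c < m)
    (hA : ContinuousOn A (Icc a m)) (hd : ContinuousOn d (Icc a m)) (hg : ContinuousOn g (Icc a m))
    (hApos : ∀ u ∈ Ioo a c, 0 < A u) (hAneg : ∀ u ∈ Ioo c m, A u < 0) (hA' : HasDerivAt A A₀ c)
    (hAc : A c = 0) (hA₀ : A₀ < 0) (hgap : shootingGap A d g a c (m, μ) = 0) :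
    ∃ q, IsOrbitArch A (damping d g μ) a m q := by
  have hD := continuousOn_damping hd hg μ
  have hl : Icc a c ⊆ Icc a m := Icc_subset_Icc_right hcm.le
  have hr : Icc c m ⊆ Icc a m := Icc_subset_Icc_left hac.le
  obtain ⟨q₁, h₁, hq₁, hq₁c⟩ :=
    exists_isOrbitGraph_endHeight hac.le (hA.mono hl) (hD.mono hl) hApos
  obtain ⟨q₂, h₂, hq₂, hq₂c⟩ :=
    exists_isOrbitGraph_startHeight hcm.le (hA.mono hr) (hD.mono hr) hAneg
  exact h₁.exists_isOrbitArch h₂ hac hcm hA' hAc hA₀ (hD.continuousAt (Icc_mem_nhds hac hcm)) hq₁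
    hq₂ (by rw [hq₁c, hq₂c]; exact (sub_eq_zero.mp hgap).symm)

theorem continuousOn_shootingGap (hac : a < c) (hcb : c < b) (hA : ContinuousOn A (Icc a b))
    (hd : ContinuousOn d (Icc a b)) (hg : ContinuousOn g (Icc a b))
    (hApos : ∀ u ∈ Ioo a c, 0 < A u) (hAneg : ∀ u ∈ Ioo c b, A u < 0) :
    ContinuousOn (shootingGap A d g a c) (Icc c b ×ˢ univ) := by
  have hl : Icc a c ⊆ Icc a b := Icc_subset_Icc_right hcb.le
  have hr : Icc c b ⊆ Icc a b := Icc_subset_Icc_left hac.le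
  obtain ⟨C, hC⟩ := isCompact_Icc.exists_bound_of_continuousOn (hg.mono hl)
  exact (continuousOn_startHeight_damping hcb (hA.mono hr) (hd.mono hr) (hg.mono hr) hAneg).sub
    ((lipschitzWith_endHeight_damping hac.le (hA.mono hl) (hd.mono hl) (hg.mono hl) hApos
      hC).continuous.comp continuous_snd).continuousOn

theorem monotoneOn_shootingGap (hac : a ≤ c) (hA : ContinuousOn A (Icc a b))
    (hd : ContinuousOn d (Icc a b)) (hg : ContinuousOn g (Icc a b))
    (hAneg : ∀ u ∈ Ioo c b, A u < 0) (μ : ℝ) :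
    MonotoneOn (fun m => shootingGap A d g a c (m, μ)) (Icc c b) := fun m hm n hn hmn => by
  have hr : Icc c b ⊆ Icc a b := Icc_subset_Icc_left hac
  exact sub_le_sub_right (monotoneOn_startHeight (hA.mono hr)
    ((continuousOn_damping hd hg μ).mono hr) hAneg hm hn hmn) _

theorem antitone_shootingGap (hac : a ≤ c) (hcb : c ≤ b) (hA : ContinuousOn A (Icc a b))
    (hd : ContinuousOn d (Icc a b)) (hg : ContinuousOn g (Icc a b))
    (hg0 : ∀ u ∈ Icc a b, 0 ≤ g u) (hApos : ∀ u ∈ Ioo a c, 0 < A u)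
    (hAneg : ∀ u ∈ Ioo c b, A u < 0) : Antitone fun μ => shootingGap A d g a c (b, μ) := by
  have hl : Icc a c ⊆ Icc a b := Icc_subset_Icc_right hcb
  have hr : Icc c b ⊆ Icc a b := Icc_subset_Icc_left hac
  exact fun μ μ' h => sub_le_sub
    (antitone_startHeight_damping hcb (hA.mono hr) (hd.mono hr) (hg.mono hr) hAneg
      (fun u hu => hg0 u (hr (Ioo_subset_Icc_self hu))) h)
    (monotone_endHeight_damping hac (hA.mono hl) (hd.mono hl) (hg.mono hl) hApos
      (fun u hu => hg0 u (hl (Ioo_subset_Icc_self hu))) h)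

theorem shootingGap_self_nonpos (hac : a < c) (hA : ContinuousOn A (Icc a c))
    (hd : ContinuousOn d (Icc a c)) (hg : ContinuousOn g (Icc a c))
    (hApos : ∀ u ∈ Ioo a c, 0 < A u) (μ : ℝ) : shootingGap A d g a c (c, μ) ≤ 0 := by
  rw [shootingGap, startHeight_self, zero_sub, neg_nonpos]
  exact endHeight_nonneg hac hA (continuousOn_damping hd hg μ) hApos

theorem damping_neg_of_shootingGap_self_eq_zero (hac : a < c) (hA : ContinuousOn A (Icc a c))
    (hd : ContinuousOn d (Icc a c)) (hg : ContinuousOn g (Icc a c)) (hdc : ContinuousAt d c)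
    (hgc : ContinuousAt g c) (hApos : ∀ u ∈ Ioo a c, 0 < A u) (hA' : HasDerivAt A A₀ c)
    (hAc : A c = 0) (hA₀ : A₀ < 0) (hgap : shootingGap A d g a c (c, μ) = 0) :
    damping d g μ c < 0 := by
  obtain ⟨q, h, -, hqc⟩ :=
    exists_isOrbitGraph_endHeight hac.le hA (continuousOn_damping hd hg μ) hApos
  refine h.damping_neg_of_right_eq_zero hac hA' hAc hA₀ (hdc.add (hgc.const_mul μ)) ?_
  rw [hqc, ← sub_eq_zero.mp hgap, startHeight_self]

theorem shootingGap_neg_ne_zero (hac : a < c) (hA : ContinuousOn A (Icc a c))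
    (hd : ContinuousOn d (Icc a c)) (hg : ContinuousOn g (Icc a c)) (hdc : ContinuousAt d c)
    (hgc : ContinuousAt g c) (hApos : ∀ u ∈ Ioo a c, 0 < A u) (hA' : HasDerivAt A A₀ c)
    (hAc : A c = 0) (hA₀ : A₀ < 0) (hgap : shootingGap A d g a c (c, μ) = 0) :
    shootingGap A (fun u => -d u) g a c (c, -μ) ≠ 0 := fun hgap' => by
  have hneg := damping_neg_of_shootingGap_self_eq_zero hac hA hd hg hdc hgc hApos hA' hAc hA₀ hgap
  have hpos := damping_neg_of_shootingGap_self_eq_zero hac hA hd.fun_neg hg hdc.fun_neg hgc hApos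
    hA' hAc hA₀ hgap'
  rw [← neg_damping] at hpos
  linarith

/-- An arch in the upper half plane for the parameter `μ`, together with the arch in the lower half
plane, as seen by time reversal `(z, w) ↦ (-z, -w)`, over the same interval. -/
def IsArchPair (A d g : ℝ → ℝ) (μ a m : ℝ) : Prop :=
  (∃ q, IsOrbitArch A (damping d g μ) a m q) ∧
    ∃ q, IsOrbitArch A (damping (fun u => -d u) g (-μ)) a m q

theorem exists_isArchPair {μ₁ μ₂ : ℝ} {q₁ q₂ : ℝ → ℝ} (hac : a < c) (hcb : c < b)
    (hA : ContinuousOn A (Icc a b)) (hd : ContinuousOn d (Icc a b)) (hg : ContinuousOn g (Icc a b))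
    (hg0 : ∀ u ∈ Icc a b, 0 ≤ g u) (hApos : ∀ u ∈ Ioo a c, 0 < A u)
    (hAneg : ∀ u ∈ Ioo c b, A u < 0) (hA' : HasDerivAt A A₀ c) (hAc : A c = 0) (hA₀ : A₀ < 0)
    (h₁ : IsOrbitArch A (damping (fun u => -d u) g (-μ₁)) a b q₁)
    (h₂ : IsOrbitArch A (damping d g μ₂) a b q₂) (hμ : μ₁ ≤ μ₂) :
    ∃ μ ∈ Icc μ₁ μ₂, ∃ m ∈ Ioc c b, IsArchPair A d g μ a m := by
  have hl : Icc a c ⊆ Icc a b := Icc_subset_Icc_right hcb.le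
  have hApos' : ∀ u ∈ Ioo a c, 0 ≤ A u := fun u hu => (hApos u hu).le
  have hAneg' : ∀ u ∈ Ioo c b, A u ≤ 0 := fun u hu => (hAneg u hu).le
  have hF := h₂.shootingGap_eq_zero hac.le hcb.le hApos' hAneg'
  have hG := h₁.shootingGap_eq_zero hac.le hcb.le hApos' hAneg'
  have hFanti := antitone_shootingGap hac.le hcb.le hA hd hg hg0 hApos hAneg
  have hGanti := antitone_shootingGap hac.le hcb.le hA hd.neg hg hg0 hApos hAneg
  obtain ⟨μ, hμ, m, hm, hFm, hGm⟩ := exists_common_zero hcb.le hμ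
    (F := shootingGap A d g a c) (G := fun p => shootingGap A (fun u => -d u) g a c (p.1, -p.2))
    ((continuousOn_shootingGap hac hcb hA hd hg hApos hAneg).mono (prod_mono_right (subset_univ _)))
    ((continuousOn_shootingGap hac hcb hA hd.neg hg hApos hAneg).comp
      (f := fun p : ℝ × ℝ => (p.1, -p.2)) (by fun_prop) fun p hp => ⟨hp.1, mem_univ _⟩)
    (fun μ _ => monotoneOn_shootingGap hac.le hA hd hg hAneg μ)
    (fun μ _ => monotoneOn_shootingGap hac.le hA hd.neg hg hAneg (-μ))
    (fun μ _ => shootingGap_self_nonpos hac (hA.mono hl) (hd.mono hl) (hg.mono hl) hApos μ)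
    (fun μ hμ => hF.ge.trans (hFanti hμ.2)) hF.le (hG.ge.trans (hGanti (neg_le_neg hμ))) hG.le
  have hcm : c < m := by
    refine hm.1.lt_of_ne ?_
    rintro rfl
    exact shootingGap_neg_ne_zero hac (hA.mono hl) (hd.mono hl) (hg.mono hl)
      (hd.continuousAt (Icc_mem_nhds hac hcb)) (hg.continuousAt (Icc_mem_nhds hac hcb))
      hApos hA' hAc hA₀ hFm hGm
  have hsub : Icc a m ⊆ Icc a b := Icc_subset_Icc_right hm.2
  have hAm : ∀ u ∈ Ioo c m, A u < 0 := fun u hu => hAneg u ⟨hu.1, hu.2.trans_le hm.2⟩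
  exact ⟨μ, hμ, m, ⟨hcm, hm.2⟩,
    exists_isOrbitArch_of_shootingGap_eq_zero hac hcm (hA.mono hsub) (hd.mono hsub) (hg.mono hsub)
      hApos hAm hA' hAc hA₀ hFm,
    exists_isOrbitArch_of_shootingGap_eq_zero hac hcm (hA.mono hsub) (hd.mono hsub).neg
      (hg.mono hsub) hApos hAm hA' hAc hA₀ hGm⟩

end

/-! ### From arches to solutions and back -/

section InverseFunction

theorem strictMonoOn_of_hasDerivAt_pos {f f' : ℝ → ℝ} {s : Set ℝ} (hs : Convex ℝ s)
    (hf : ∀ x ∈ s, HasDerivAt f (f' x) x) (hf' : ∀ x ∈ s, 0 < f' x) : StrictMonoOn f s :=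
  strictMonoOn_of_hasDerivWithinAt_pos hs (fun x hx => (hf x hx).continuousAt.continuousWithinAt)
    (fun x hx => (hf x (interior_subset hx)).hasDerivWithinAt)
    fun x hx => hf' x (interior_subset hx)

theorem antitoneOn_of_hasDerivAt_nonpos {f f' : ℝ → ℝ} {s : Set ℝ} (hs : Convex ℝ s)
    (hf : ∀ x ∈ s, HasDerivAt f (f' x) x) (hf' : ∀ x ∈ s, f' x ≤ 0) : AntitoneOn f s :=
  antitoneOn_of_hasDerivWithinAt_nonpos hs
    (fun x hx => (hf x hx).continuousAt.continuousWithinAt)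
    (fun x hx => (hf x (interior_subset hx)).hasDerivWithinAt)
    fun x hx => hf' x (interior_subset hx)

theorem exists_inverse_of_deriv_pos {f f' : ℝ → ℝ} {s t : Set ℝ} (hs : Convex ℝ s)
    (hso : IsOpen s) (hto : IsOpen t) (hf : ∀ x ∈ s, HasDerivAt f (f' x) x)
    (hf' : ∀ x ∈ s, 0 < f' x) (himg : f '' s = t) :
    ∃ g : ℝ → ℝ, MapsTo g t s ∧ InvOn g f s t ∧ StrictMonoOn g t ∧
      ∀ y ∈ t, HasDerivAt g (f' (g y))⁻¹ y := by
  have hmono := strictMonoOn_of_hasDerivAt_pos hs hf hf'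
  have hbij : BijOn f s t := ⟨himg ▸ mapsTo_image f s, hmono.injOn, himg.ge⟩
  obtain ⟨g, hgt, hinv⟩ : ∃ g, MapsTo g t s ∧ InvOn g f s t :=
    ⟨_, hbij.surjOn.mapsTo_invFunOn, hbij.invOn_invFunOn⟩
  have hgmono : StrictMonoOn g t := fun x hx y hy hxy => by
    rwa [← hmono.lt_iff_lt (hgt hx) (hgt hy), hinv.2 hx, hinv.2 hy]
  have hgimg : g '' t = s := hgt.image_subset.antisymm (hinv.1.surjOn hbij.mapsTo)
  refine ⟨g, hgt, hinv, hgmono, fun y hy => ?_⟩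
  have hcont : ContinuousAt g y := hgmono.continuousAt_of_image_mem_nhds (hto.mem_nhds hy)
    (hgimg.symm ▸ hso.mem_nhds (hgt hy))
  exact .of_local_left_inverse hcont (hf _ (hgt hy)) (hf' _ (hgt hy)).ne'
    (mem_of_superset (hto.mem_nhds hy) fun _ hz => hinv.2 hz)

theorem exists_hasDerivAt_of_continuousOn_Ioo {f : ℝ → ℝ} {a b : ℝ}
    (hf : ContinuousOn f (Ioo a b)) : ∃ F : ℝ → ℝ, ∀ x ∈ Ioo a b, HasDerivAt F (f x) x := by
  rcases (Ioo a b).eq_empty_or_nonempty with he | ⟨c, hc⟩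
  · exact ⟨0, by simp [he]⟩
  refine ⟨fun x => ∫ t in c..x, f t, fun x hx => intervalIntegral.integral_hasDerivAt_right ?_
    (hf.stronglyMeasurableAtFilter isOpen_Ioo x hx) (hf.continuousAt (isOpen_Ioo.mem_nhds hx))⟩
  exact (hf.mono (ordConnected_Ioo.uIcc_subset hc hx)).intervalIntegrable

theorem tendsto_of_hasBasis_Iio {f : ℝ → ℝ} {s t : Set ℝ} {l l' : Filter ℝ}
    (hmono : StrictMonoOn f s) (himg : f '' s = t) (hl : l.HasBasis (· ∈ s) (s ∩ Iio ·))
    (hl' : l'.HasBasis (· ∈ t) (t ∩ Iio ·)) : Tendsto f l l' := by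
  subst himg
  refine (hl.tendsto_iff hl').mpr ?_
  rintro _ ⟨x, hx, rfl⟩
  exact ⟨x, hx, fun z hz => ⟨mem_image_of_mem f hz.1, hmono hz.1 hx hz.2⟩⟩

theorem tendsto_of_hasBasis_Ioi {f : ℝ → ℝ} {s t : Set ℝ} {l l' : Filter ℝ}
    (hmono : StrictMonoOn f s) (himg : f '' s = t) (hl : l.HasBasis (· ∈ s) (s ∩ Ioi ·))
    (hl' : l'.HasBasis (· ∈ t) (t ∩ Ioi ·)) : Tendsto f l l' := by
  subst himg
  refine (hl.tendsto_iff hl').mpr ?_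
  rintro _ ⟨x, hx, rfl⟩
  exact ⟨x, hx, fun z hz => ⟨mem_image_of_mem f hz.1, hmono hx hz.1 hz.2⟩⟩

theorem hasBasis_atBot_Iio_inter (c : ℝ) : atBot.HasBasis (· ∈ Iio c) (Iio c ∩ Iio ·) :=
  (atBot_basis_Iio' c).congr (fun _ => Iff.rfl)
    fun _ hz => (inter_eq_right.mpr (Iio_subset_Iio (le_of_lt hz))).symm

theorem hasBasis_nhdsLT_Iio_inter (c : ℝ) : (𝓝[<] c).HasBasis (· ∈ Iio c) (Iio c ∩ Ioi ·) :=
  (nhdsLT_basis c).congr (fun _ => Iff.rfl) fun _ _ => by rw [Iio_inter_Ioi]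

theorem hasBasis_nhdsGT_Ioo_inter {a b : ℝ} (hab : a < b) :
    (𝓝[>] a).HasBasis (· ∈ Ioo a b) (Ioo a b ∩ Iio ·) := by
  refine (nhdsGT_basis a).to_hasBasis (fun x hx => ?_) fun x hx => ⟨x, hx.1, fun y hy =>
    ⟨⟨hy.1, hy.2.trans hx.2⟩, hy.2⟩⟩
  obtain ⟨y, hay, hy⟩ := exists_between (lt_min hx hab)
  exact ⟨y, ⟨hay, hy.trans_le (min_le_right _ _)⟩,
    fun z hz => ⟨hz.1.1, (mem_Iio.mp hz.2).trans (hy.trans_le (min_le_left _ _))⟩⟩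

theorem hasBasis_nhdsLT_Ioo_inter {a b : ℝ} (hab : a < b) :
    (𝓝[<] b).HasBasis (· ∈ Ioo a b) (Ioo a b ∩ Ioi ·) := by
  refine (nhdsLT_basis b).to_hasBasis (fun x hx => ?_) fun x hx => ⟨x, hx.2, fun y hy =>
    ⟨⟨hx.1.trans hy.1, hy.2⟩, hy.1⟩⟩
  obtain ⟨y, hy, hyb⟩ := exists_between (max_lt hx hab)
  exact ⟨y, ⟨(le_max_right _ _).trans_lt hy, hyb⟩,
    fun z hz => ⟨((le_max_left _ _).trans_lt hy).trans hz.2, hz.1.2⟩⟩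

theorem image_eq_Ioo_of_strictMonoOn {f : ℝ → ℝ} {s : Set ℝ} {l₁ l₂ : Filter ℝ} [l₁.NeBot]
    [l₂.NeBot] {a b : ℝ} (hs : IsPreconnected s) (hne : s.Nonempty) (hf : ContinuousOn f s)
    (hmono : StrictMonoOn f s) (hl₁ : l₁.HasBasis (· ∈ s) (s ∩ Iio ·))
    (hl₂ : l₂.HasBasis (· ∈ s) (s ∩ Ioi ·)) (ha : Tendsto f l₁ (𝓝 a))
    (hb : Tendsto f l₂ (𝓝 b)) : f '' s = Ioo a b := by
  obtain ⟨x, hx⟩ := hne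
  refine Subset.antisymm ?_ (hs.intermediate_value_Ioo
    (le_principal_iff.mpr (mem_of_superset (hl₁.mem_of_mem hx) inter_subset_left))
    (le_principal_iff.mpr (mem_of_superset (hl₂.mem_of_mem hx) inter_subset_left)) hf ha hb)
  rintro _ ⟨z, hz, rfl⟩
  obtain ⟨y₁, hy₁, hy₁z⟩ := Filter.nonempty_of_mem (hl₁.mem_of_mem hz)
  obtain ⟨y₂, hy₂, hzy₂⟩ := Filter.nonempty_of_mem (hl₂.mem_of_mem hz)
  have hay₁ : a ≤ f y₁ := le_of_tendsto ha <| mem_of_superset (hl₁.mem_of_mem hy₁)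
    fun y hy => (hmono hy.1 hy₁ hy.2).le
  have hy₂b : f y₂ ≤ b := ge_of_tendsto hb <| mem_of_superset (hl₂.mem_of_mem hy₂)
    fun y hy => (hmono hy₂ hy.1 hy.2).le
  exact ⟨hay₁.trans_lt (hmono hy₁ hz hy₁z), (hmono hz hy₂ hzy₂).trans_le hy₂b⟩

end InverseFunction

section TimeMap

variable {A D q G : ℝ → ℝ} {a m : ℝ}

-- The damping term tends to zero at the foot `m`, so `G' = 1 / q` is absorbed by the term `A / q`
-- of `q'`.
theorem IsOrbitArch.exists_antitoneOn_timeMap_add (h : IsOrbitArch A D a m q) (ham : a < m)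
    (hG : ∀ u ∈ Ioo a m, HasDerivAt G (q u)⁻¹ u) (hA : ContinuousAt A m)
    (hD : ContinuousAt D m) (hAm : A m < 0) :
    ∃ C > 0, ∃ c ∈ Ico a m, AntitoneOn (fun u => G u + C * q u) (Ioo c m) := by
  set C := -2 / A m
  have hq : Tendsto q (𝓝[<] m) (𝓝 0) := h.right_eq_zero ▸
    ((h.continuousOn m ⟨ham.le, le_rfl⟩).tendsto.mono_left
      (nhdsWithin_le_of_mem (Icc_mem_nhdsLT ham)))
  have hlim : Tendsto (fun u => 1 + C * (A u + D u * q u)) (𝓝[<] m) (𝓝 (-1)) := by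
    have hlim := (((hA.tendsto.mono_left nhdsWithin_le_nhds).add
      ((hD.tendsto.mono_left nhdsWithin_le_nhds).mul hq)).const_mul C).const_add 1
    have : 1 + C * (A m + D m * 0) = -1 := by
      rw [mul_zero, add_zero, div_mul_cancel₀ _ hAm.ne]
      norm_num
    rwa [this] at hlim
  obtain ⟨c, hcm, hc⟩ := (mem_nhdsLT_iff_exists_mem_Ico_Ioo_subset ham).mp
    (hlim.eventually_le_const (by norm_num : (-1 : ℝ) < 0))
  have hsub : Ioo c m ⊆ Ioo a m := Ioo_subset_Ioo_left hcm.1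
  refine ⟨C, div_pos_of_neg_of_neg (by norm_num) hAm, c, hcm,
    antitoneOn_of_hasDerivAt_nonpos (convex_Ioo c m) (fun u hu =>
      (hG u (hsub hu)).add ((h.hasDerivAt u (hsub hu)).const_mul C)) fun u hu => ?_⟩
  have hqu := h.pos u (hsub hu)
  have : (q u)⁻¹ + C * (A u / q u + D u) = (1 + C * (A u + D u * q u)) / q u := by
    field_simp
  rw [this]
  exact div_nonpos_of_nonpos_of_nonneg (hc hu) hqu.le

theorem IsOrbitArch.eventually_timeMap_le (h : IsOrbitArch A D a m q) (ham : a < m)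
    (hG : ∀ u ∈ Ioo a m, HasDerivAt G (q u)⁻¹ u) (hA : ContinuousAt A m)
    (hD : ContinuousAt D m) (hAm : A m < 0) : ∃ B, ∀ᶠ u in 𝓝[<] m, G u ≤ B := by
  obtain ⟨C, hC, c, hcm, hanti⟩ := h.exists_antitoneOn_timeMap_add ham hG hA hD hAm
  obtain ⟨e, he⟩ := nonempty_Ioo.mpr hcm.2
  refine ⟨G e + C * q e, ?_⟩
  filter_upwards [Ioo_mem_nhdsLT he.2] with u hu
  have hle : G u + C * q u ≤ G e + C * q e := hanti he ⟨he.1.trans hu.1, hu.2⟩ hu.1.le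
  have := mul_pos hC (h.pos u ⟨hcm.1.trans_lt (he.1.trans hu.1), hu.2⟩)
  linarith

-- A rest point is not reached in finite time: `log (u - a + q)` grows at most linearly in `G`.
theorem IsOrbitGraph.exists_antitoneOn_log_sub_timeMap (h : IsOrbitGraph A D a m q)
    (ham : a < m) (hG : ∀ u ∈ Ioo a m, HasDerivAt G (q u)⁻¹ u) (hA : DifferentiableAt ℝ A a)
    (hAa : A a = 0) (hD : ContinuousAt D a) : ∃ L > 0, ∃ c ∈ Ioc a m,
      AntitoneOn (fun u => Real.log (u - a + q u) - L * G u) (Ioo a c) := by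
  obtain ⟨K, hK, hAK⟩ := hA.isBigO_sub.exists_pos
  set L := 1 + K + (|D a| + 1)
  obtain ⟨c, hcm, hc⟩ := (mem_nhdsGT_iff_exists_mem_Ioc_Ioo_subset ham).mp
    (nhdsWithin_le_nhds (hAK.bound.and (hD.abs.eventually_le_const (lt_add_one |D a|))))
  have hsub : Ioo a c ⊆ Ioo a m := Ioo_subset_Ioo_right hcm.2
  have hpos : ∀ u ∈ Ioo a c, 0 < u - a + q u := fun u hu =>
    add_pos (sub_pos.mpr hu.1) (h.pos u (hsub hu))
  refine ⟨L, by positivity, c, hcm, antitoneOn_of_hasDerivAt_nonpos (convex_Ioo a c)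
    (fun u hu => ((((hasDerivAt_id u).sub_const a).add (h.hasDerivAt u (hsub hu))).log
      (hpos u hu).ne').sub ((hG u (hsub hu)).const_mul L)) fun u hu => ?_⟩
  have hq := h.pos u (hsub hu)
  have hua := sub_pos.mpr hu.1
  obtain ⟨hAu, hDu⟩ := hc hu
  rw [hAa, sub_zero, Real.norm_eq_abs, Real.norm_eq_abs, abs_of_pos hua] at hAu
  have hDu' : D u * q u ≤ (|D a| + 1) * q u :=
    mul_le_mul_of_nonneg_right ((le_abs_self _).trans hDu) hq.le
  change (1 + (A u / q u + D u)) / (u - a + q u) - L * (q u)⁻¹ ≤ 0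
  rw [sub_nonpos, div_le_iff₀ (hpos u hu), ← div_eq_mul_inv, div_mul_eq_mul_div, le_div_iff₀ hq]
  calc (1 + (A u / q u + D u)) * q u = q u + A u + D u * q u := by
        field_simp
        ring
    _ ≤ q u + K * (u - a) + (|D a| + 1) * q u := by
        gcongr
        exact (le_abs_self _).trans hAu
    _ ≤ L * (u - a + q u) := by
        have : 0 ≤ (1 + (|D a| + 1)) * (u - a) + K * q u := by positivity
        simp only [L]
        linarith

theorem IsOrbitArch.tendsto_timeMap_atBot (h : IsOrbitArch A D a m q) (ham : a < m)
    (hG : ∀ u ∈ Ioo a m, HasDerivAt G (q u)⁻¹ u) (hA : DifferentiableAt ℝ A a) (hAa : A a = 0)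
    (hD : ContinuousAt D a) : Tendsto G (𝓝[>] a) atBot := by
  obtain ⟨L, hL, c, hcm, hanti⟩ := h.exists_antitoneOn_log_sub_timeMap ham hG hA hAa hD
  obtain ⟨e, he⟩ := nonempty_Ioo.mpr hcm.1
  have hzero : Tendsto (fun u => u - a + q u) (𝓝[>] a) (𝓝[>] 0) := by
    refine tendsto_nhdsWithin_of_tendsto_nhds_of_eventually_within _ ?_ ?_
    · have hcont : ContinuousOn (fun u => u - a + q u) (Icc a m) :=
        (continuousOn_id.sub continuousOn_const).add h.continuousOn
      simpa only [sub_self, h.left_eq_zero, add_zero] using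
        (hcont a ⟨le_rfl, ham.le⟩).tendsto.mono_left (nhdsWithin_le_of_mem (Icc_mem_nhdsGT ham))
    · filter_upwards [Ioo_mem_nhdsGT ham] with u hu
      exact add_pos (sub_pos.mpr hu.1) (h.pos u hu)
  have hlog := (Real.tendsto_log_nhdsGT_zero.comp hzero).atBot_add
    (tendsto_const_nhds (x := L * G e - Real.log (e - a + q e)))
  refine tendsto_atBot_mono' _ ?_ (hlog.const_mul_atBot (inv_pos.mpr hL))
  filter_upwards [Ioo_mem_nhdsGT he.1] with u hu
  have hle : Real.log (e - a + q e) - L * G e ≤ Real.log (u - a + q u) - L * G u :=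
    hanti ⟨hu.1, hu.2.trans he.2⟩ he hu.2.le
  rw [le_inv_mul_iff₀ hL, Function.comp_apply]
  linarith

theorem IsOrbitArch.exists_timeMap (h : IsOrbitArch A D a m q) (ham : a < m)
    (hA : DifferentiableAt ℝ A a) (hAa : A a = 0) (hD : ContinuousAt D a)
    (hAm : ContinuousAt A m) (hDm : ContinuousAt D m) (hAm' : A m < 0) :
    ∃ G : ℝ → ℝ, (∀ u ∈ Ioo a m, HasDerivAt G (q u)⁻¹ u) ∧ G '' Ioo a m = Iio 0 := by
  obtain ⟨G, hG⟩ := exists_hasDerivAt_of_continuousOn_Ioo (f := fun u => (q u)⁻¹)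
    ((h.continuousOn.mono Ioo_subset_Icc_self).inv₀ fun u hu => (h.pos u hu).ne')
  have hmono : StrictMonoOn G (Ioo a m) :=
    strictMonoOn_of_hasDerivAt_pos (convex_Ioo a m) hG fun u hu => inv_pos.mpr (h.pos u hu)
  obtain ⟨B, hB⟩ := h.eventually_timeMap_le ham hG hAm hDm hAm'
  have hle : ∀ u ∈ Ioo a m, G u ≤ B := fun u hu => by
    obtain ⟨v, hv, hvB⟩ := (Filter.Eventually.and (Ioo_mem_nhdsLT hu.2) hB).exists
    exact (hmono hu ⟨hu.1.trans hv.1, hv.2⟩ hv.1).le.trans hvB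
  set T := sSup (G '' Ioo a m)
  have hbdd : BddAbove (G '' Ioo a m) := ⟨B, forall_mem_image.mpr hle⟩
  have hlim : Tendsto G (𝓝[<] m) (𝓝 T) :=
    hmono.monotoneOn.tendsto_nhdsWithin_Ioo_left (nonempty_Ioo.mpr ham) hbdd
  refine ⟨fun u => G u - T, fun u hu => (hG u hu).sub_const T, Subset.antisymm ?_ ?_⟩
  · rintro _ ⟨u, hu, rfl⟩
    obtain ⟨v, hv⟩ := nonempty_Ioo.mpr hu.2
    have hvm : v ∈ Ioo a m := ⟨hu.1.trans hv.1, hv.2⟩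
    exact sub_neg.mpr ((hmono hu hvm hv.1).trans_le (le_csSup hbdd (mem_image_of_mem G hvm)))
  · refine isPreconnected_Ioo.intermediate_value_Iio
      (le_principal_iff.mpr (Ioo_mem_nhdsGT ham)) (le_principal_iff.mpr (Ioo_mem_nhdsLT ham))
      (fun u hu => ((hG u hu).sub_const T).continuousAt.continuousWithinAt) ?_ ?_
    · simpa only [sub_eq_add_neg] using (h.tendsto_timeMap_atBot ham hG hA hAa hD).atBot_add
        (tendsto_const_nhds (x := -T))
    · simpa only [sub_self] using hlim.sub_const T

end TimeMap

section HalfOrbits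

variable {A D f g q u w u₁ w₁ u₂ w₂ : ℝ → ℝ} {a b m : ℝ}

/-- `(u, w)` solves the planar system `u' = w`, `w' = A(u) + D(u) w` on the whole line. -/
structure IsPlanarSol (A D u w : ℝ → ℝ) : Prop where
  hasDerivAt_fst : ∀ z, HasDerivAt u (w z) z
  hasDerivAt_snd : ∀ z, HasDerivAt w (A (u z) + D (u z) * w z) z

/-- `(u, w)` solves the planar system `u' = w`, `w' = A(u) + D(u) w` for negative times, with
`w > 0`; it emanates from `(a, 0)` at time `-∞` and arrives at `(m, 0)` at time `0`. -/
structure IsHalfOrbit (A D : ℝ → ℝ) (a m : ℝ) (u w : ℝ → ℝ) : Prop where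
  continuousOn_fst : ContinuousOn u (Iic 0)
  continuousOn_snd : ContinuousOn w (Iic 0)
  hasDerivAt_fst : ∀ z < 0, HasDerivAt u (w z) z
  hasDerivAt_snd : ∀ z < 0, HasDerivAt w (A (u z) + D (u z) * w z) z
  pos : ∀ z < 0, 0 < w z
  fst_zero : u 0 = m
  snd_zero : w 0 = 0
  tendsto_fst : Tendsto u atBot (𝓝 a)
  tendsto_snd : Tendsto w atBot (𝓝 0)

theorem IsOrbitArch.exists_parametrization (h : IsOrbitArch A D a m q) (ham : a < m)
    (hA : DifferentiableAt ℝ A a) (hAa : A a = 0) (hD : ContinuousAt D a)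
    (hAm : ContinuousAt A m) (hDm : ContinuousAt D m) (hAm' : A m < 0) :
    ∃ u : ℝ → ℝ, ContinuousOn u (Iic 0) ∧ u 0 = m ∧ Tendsto u atBot (𝓝[>] a) ∧
      MapsTo u (Iio 0) (Ioo a m) ∧ ∀ z < 0, HasDerivAt u (q (u z)) z := by
  obtain ⟨G, hG, himg⟩ := h.exists_timeMap ham hA hAa hD hAm hDm hAm'
  have hq : ∀ u ∈ Ioo a m, 0 < (q u)⁻¹ := fun u hu => inv_pos.mpr (h.pos u hu)
  obtain ⟨U, hU, hinv, hmono, hderiv⟩ :=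
    exists_inverse_of_deriv_pos (convex_Ioo a m) isOpen_Ioo isOpen_Iio hG hq himg
  have hUimg : U '' Iio 0 = Ioo a m :=
    hU.image_subset.antisymm (hinv.1.surjOn (mapsTo_iff_image_subset.mpr himg.le))
  have hU0 : Tendsto U (𝓝[<] 0) (𝓝 m) := (tendsto_of_hasBasis_Ioi hmono hUimg
    (hasBasis_nhdsLT_Iio_inter 0) (hasBasis_nhdsLT_Ioo_inter ham)).mono_right nhdsWithin_le_nhds
  have hUbot : Tendsto U atBot (𝓝[>] a) := tendsto_of_hasBasis_Iio hmono hUimg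
    (hasBasis_atBot_Iio_inter 0) (hasBasis_nhdsGT_Ioo_inter ham)
  set u := Function.update U 0 m
  have hu : ∀ z < 0, u z = U z := fun z hz => Function.update_of_ne hz.ne _ _
  refine ⟨u, ?_, Function.update_self .., ?_, fun z hz => hu z hz ▸ hU hz, fun z hz => ?_⟩
  · refine continuousOn_update_iff.mpr ?_
    rw [Iic_sdiff_right]
    exact ⟨fun z hz => (hderiv z hz).continuousAt.continuousWithinAt, fun _ => hU0⟩
  · refine hUbot.congr' ?_
    filter_upwards [eventually_lt_atBot 0] with z hz using (hu z hz).symm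
  · have := (hderiv z hz).congr_of_eventuallyEq (mem_of_superset (Iio_mem_nhds hz) hu)
    rwa [inv_inv, ← hu z hz] at this

theorem IsOrbitArch.exists_isHalfOrbit (h : IsOrbitArch A D a m q) (ham : a < m)
    (hA : DifferentiableAt ℝ A a) (hAa : A a = 0) (hD : ContinuousAt D a)
    (hAm : ContinuousAt A m) (hDm : ContinuousAt D m) (hAm' : A m < 0) :
    ∃ u w, IsHalfOrbit A D a m u w ∧ ∀ z ≤ 0, u z ∈ Ioc a m := by
  obtain ⟨u, hcont, hu0, hbot, hmaps, hfst⟩ :=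
    h.exists_parametrization ham hA hAa hD hAm hDm hAm'
  have hmem : ∀ z ≤ 0, u z ∈ Ioc a m := fun z hz => by
    rcases hz.lt_or_eq with hz | rfl
    · exact Ioo_subset_Ioc_self (hmaps hz)
    · rw [hu0]
      exact right_mem_Ioc.mpr ham
  refine ⟨u, fun z => q (u z), ?_, hmem⟩
  exact
    { continuousOn_fst := hcont
      continuousOn_snd := h.continuousOn.comp hcont fun z hz => Ioc_subset_Icc_self (hmem z hz)
      hasDerivAt_fst := hfst
      hasDerivAt_snd := fun z hz => by
        have hqz := (h.pos _ (hmaps hz)).ne'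
        exact ((h.hasDerivAt _ (hmaps hz)).comp z (hfst z hz)).congr_deriv (by field_simp)
      pos := fun z hz => h.pos _ (hmaps hz)
      fst_zero := hu0
      snd_zero := by rw [hu0, h.right_eq_zero]
      tendsto_fst := hbot.mono_right nhdsWithin_le_nhds
      tendsto_snd := h.left_eq_zero ▸ ((h.continuousOn a ⟨le_rfl, ham.le⟩).tendsto.mono_left
        (nhdsWithin_le_of_mem (Icc_mem_nhdsGT ham))).comp hbot }

/-- The path `f` on `(-∞, 0]` followed by the time reversal of the path `g` on `(-∞, 0]`. -/
def concatReverse (f g : ℝ → ℝ) (z : ℝ) : ℝ :=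
  if z ≤ 0 then f z else g (-z)

theorem concatReverse_of_nonpos {z : ℝ} (hz : z ≤ 0) : concatReverse f g z = f z :=
  if_pos hz

theorem concatReverse_of_pos {z : ℝ} (hz : 0 < z) : concatReverse f g z = g (-z) :=
  if_neg hz.not_ge

theorem continuous_concatReverse (hf : ContinuousOn f (Iic 0)) (hg : ContinuousOn g (Iic 0))
    (h : f 0 = g 0) : Continuous (concatReverse f g) :=
  continuous_if_le continuous_id continuous_const hf
    (hg.comp continuous_neg.continuousOn fun z hz => mem_Iic.mpr (neg_nonpos.mpr hz))
    fun z hz => by rwa [show z = 0 from hz, neg_zero]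

theorem hasDerivAt_concatReverse_of_neg {z f' : ℝ} (hz : z < 0) (hf : HasDerivAt f f' z) :
    HasDerivAt (concatReverse f g) f' z :=
  hf.congr_of_eventuallyEq (mem_of_superset (Iic_mem_nhds hz) fun _ => concatReverse_of_nonpos)

theorem hasDerivAt_concatReverse_of_pos {z g' : ℝ} (hz : 0 < z) (hg : HasDerivAt g g' (-z)) :
    HasDerivAt (concatReverse f g) (-g') z :=
  ((hg.comp z (hasDerivAt_neg z)).congr_deriv (mul_neg_one g')).congr_of_eventuallyEq
    (mem_of_superset (Ioi_mem_nhds hz) fun _ => concatReverse_of_pos)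

theorem tendsto_concatReverse_atBot {l : Filter ℝ} (hf : Tendsto f atBot l) :
    Tendsto (concatReverse f g) atBot l :=
  hf.congr' <| by
    filter_upwards [eventually_le_atBot 0] with z hz using (concatReverse_of_nonpos hz).symm

theorem tendsto_concatReverse_atTop {l : Filter ℝ} (hg : Tendsto g atBot l) :
    Tendsto (concatReverse f g) atTop l :=
  (hg.comp tendsto_neg_atTop_atBot).congr' <| by
    filter_upwards [eventually_gt_atTop 0] with z hz using (concatReverse_of_pos hz).symm

theorem IsHalfOrbit.isPlanarSol_concatReverse (h₁ : IsHalfOrbit A D a m u₁ w₁)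
    (h₂ : IsHalfOrbit A (fun v => -D v) a m u₂ w₂) (hA : ContinuousAt A m)
    (hD : ContinuousAt D m) :
    IsPlanarSol A D (concatReverse u₁ u₂) (concatReverse w₁ fun z => -w₂ z) := by
  set u := concatReverse u₁ u₂ with hu_def
  set w := concatReverse w₁ (fun z => -w₂ z) with hw_def
  have hu : Continuous u := continuous_concatReverse h₁.continuousOn_fst h₂.continuousOn_fst
    (h₁.fst_zero.trans h₂.fst_zero.symm)
  have hw : Continuous w := continuous_concatReverse h₁.continuousOn_snd h₂.continuousOn_snd.neg
    (by rw [h₁.snd_zero, h₂.snd_zero, neg_zero])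
  have hu0 : u 0 = m := (concatReverse_of_nonpos le_rfl).trans h₁.fst_zero
  have hfst : ∀ z ≠ 0, HasDerivAt u (w z) z := fun z hz => by
    rcases hz.lt_or_gt with hz | hz
    · rw [hw_def, concatReverse_of_nonpos hz.le]
      exact hasDerivAt_concatReverse_of_neg hz (h₁.hasDerivAt_fst z hz)
    · rw [hw_def, concatReverse_of_pos hz]
      exact hasDerivAt_concatReverse_of_pos hz (h₂.hasDerivAt_fst _ (neg_neg_iff_pos.mpr hz))
  have hsnd : ∀ z ≠ 0, HasDerivAt w (A (u z) + D (u z) * w z) z := fun z hz => by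
    rcases hz.lt_or_gt with hz | hz
    · rw [hu_def, hw_def, concatReverse_of_nonpos hz.le, concatReverse_of_nonpos hz.le]
      exact hasDerivAt_concatReverse_of_neg hz (h₁.hasDerivAt_snd z hz)
    · rw [hu_def, hw_def, concatReverse_of_pos hz, concatReverse_of_pos hz]
      exact (hasDerivAt_concatReverse_of_pos hz
        (h₂.hasDerivAt_snd _ (neg_neg_iff_pos.mpr hz)).neg).congr_deriv (by ring)
  refine ⟨hasDerivAt_of_hasDerivAt_of_ne' hfst hu.continuousAt hw.continuousAt,
    hasDerivAt_of_hasDerivAt_of_ne' (g := fun z => A (u z) + D (u z) * w z) hsnd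
      hw.continuousAt ?_⟩
  exact (ContinuousAt.comp (by rwa [hu0]) hu.continuousAt).add
    ((ContinuousAt.comp (by rwa [hu0]) hu.continuousAt).mul hw.continuousAt)

theorem exists_isOrbitArch_of_hasDerivAt {I : Set ℝ} {l₁ l₂ : Filter ℝ} [l₁.NeBot] [l₂.NeBot]
    (hI : Convex ℝ I) (hIo : IsOpen I) (hne : I.Nonempty)
    (hl₁ : l₁.HasBasis (· ∈ I) (I ∩ Iio ·)) (hl₂ : l₂.HasBasis (· ∈ I) (I ∩ Ioi ·))
    (hu : ∀ z ∈ I, HasDerivAt u (w z) z)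
    (hw : ∀ z ∈ I, HasDerivAt w (A (u z) + D (u z) * w z) z) (hpos : ∀ z ∈ I, 0 < w z)
    (hu₁ : Tendsto u l₁ (𝓝 a)) (hu₂ : Tendsto u l₂ (𝓝 b))
    (hw₁ : Tendsto w l₁ (𝓝 0)) (hw₂ : Tendsto w l₂ (𝓝 0)) :
    a < b ∧ ∃ q, IsOrbitArch A D a b q := by
  have hmono := strictMonoOn_of_hasDerivAt_pos hI hu hpos
  have himg : u '' I = Ioo a b := image_eq_Ioo_of_strictMonoOn hI.isPreconnected hne
    (fun z hz => (hu z hz).continuousAt.continuousWithinAt) hmono hl₁ hl₂ hu₁ hu₂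
  have hab : a < b := nonempty_Ioo.mp (himg ▸ hne.image u)
  obtain ⟨Z, hZ, hinv, hZmono, hZderiv⟩ :=
    exists_inverse_of_deriv_pos hI hIo isOpen_Ioo hu hpos himg
  have hZimg : Z '' Ioo a b = I :=
    hZ.image_subset.antisymm (hinv.1.surjOn (mapsTo_iff_image_subset.mpr himg.le))
  have hp : ∀ v ∈ Ioo a b, HasDerivAt (w ∘ Z) (A v / w (Z v) + D v) v := fun v hv => by
    refine ((hw _ (hZ hv)).comp v (hZderiv v hv)).congr_deriv ?_
    have := (hpos _ (hZ hv)).ne'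
    rw [hinv.2 hv]
    field_simp
  have hpa : Tendsto (w ∘ Z) (𝓝[>] a) (𝓝 0) :=
    hw₁.comp (tendsto_of_hasBasis_Iio hZmono hZimg (hasBasis_nhdsGT_Ioo_inter hab) hl₁)
  have hpb : Tendsto (w ∘ Z) (𝓝[<] b) (𝓝 0) :=
    hw₂.comp (tendsto_of_hasBasis_Ioi hZmono hZimg (hasBasis_nhdsLT_Ioo_inter hab) hl₂)
  have hpcont : ContinuousOn (w ∘ Z) (Ioo a b) := fun v hv =>
    (hp v hv).continuousAt.continuousWithinAt
  have heq : EqOn (extendFrom (Ioo a b) (w ∘ Z)) (w ∘ Z) (Ioo a b) := fun v hv =>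
    extendFrom_eq (subset_closure hv) (hpcont v hv)
  refine ⟨hab, extendFrom (Ioo a b) (w ∘ Z), ⟨continuousOn_Icc_extendFrom_Ioo hpcont hpa hpb,
    fun v hv => ?_, fun v hv => ?_⟩, eq_lim_at_left_extendFrom_Ioo hab hpa,
    eq_lim_at_right_extendFrom_Ioo hab hpb⟩
  · exact heq hv ▸ hpos _ (hZ hv)
  · rw [heq hv]
    exact (hp v hv).congr_of_eventuallyEq (heq.eventuallyEq_of_mem (isOpen_Ioo.mem_nhds hv))

theorem IsHalfOrbit.exists_isOrbitArch (h : IsHalfOrbit A D a m u w) :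
    a < m ∧ ∃ q, IsOrbitArch A D a m q := by
  have hu := (h.continuousOn_fst 0 self_mem_Iic).mono Iio_subset_Iic_self
  have hw := (h.continuousOn_snd 0 self_mem_Iic).mono Iio_subset_Iic_self
  rw [ContinuousWithinAt, h.fst_zero] at hu
  rw [ContinuousWithinAt, h.snd_zero] at hw
  exact exists_isOrbitArch_of_hasDerivAt (convex_Iio 0) isOpen_Iio nonempty_Iio
    (hasBasis_atBot_Iio_inter 0) (hasBasis_nhdsLT_Iio_inter 0) h.hasDerivAt_fst
    h.hasDerivAt_snd h.pos h.tendsto_fst hu h.tendsto_snd hw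

theorem IsPlanarSol.reverse (h : IsPlanarSol A D u w) :
    IsPlanarSol A (fun v => -D v) (fun z => u (-z)) (fun z => -w (-z)) where
  hasDerivAt_fst z := ((h.hasDerivAt_fst (-z)).comp z (hasDerivAt_neg z)).congr_deriv (by ring)
  hasDerivAt_snd z :=
    ((h.hasDerivAt_snd (-z)).comp z (hasDerivAt_neg z)).neg.congr_deriv (by ring)

theorem IsPlanarSol.exists_isOrbitArch_of_HE1 (h : IsPlanarSol A D u w) (he : HE1 a b u w) :
    ∃ q, IsOrbitArch A D a b q := by
  obtain ⟨hu₁, hu₂, hw₁, hw₂, hpos⟩ := he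
  refine (exists_isOrbitArch_of_hasDerivAt convex_univ isOpen_univ univ_nonempty
    (atBot_basis_Iio.congr (by simp) (by simp)) (atTop_basis_Ioi.congr (by simp) (by simp))
    (fun z _ => h.hasDerivAt_fst z) (fun z _ => h.hasDerivAt_snd z) (fun z _ => hpos z)
    hu₁ hu₂ hw₁ hw₂).2

theorem IsPlanarSol.exists_isOrbitArch_of_HE2 (h : IsPlanarSol A D u w) (he : HE2 a b u w) :
    ∃ q, IsOrbitArch A (fun v => -D v) a b q := by
  obtain ⟨hu₁, hu₂, hw₁, hw₂, hneg⟩ := he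
  refine h.reverse.exists_isOrbitArch_of_HE1 ⟨hu₂.comp tendsto_neg_atBot_atTop,
    hu₁.comp tendsto_neg_atTop_atBot, ?_, ?_, fun z => neg_pos.mpr (hneg _)⟩
  · exact neg_zero (G := ℝ) ▸ (hw₂.comp tendsto_neg_atBot_atTop).neg
  · exact neg_zero (G := ℝ) ▸ (hw₁.comp tendsto_neg_atTop_atBot).neg

end HalfOrbits

/-! ### Homoclinic orbits -/

section PlanarSol

variable {A D u w u₁ w₁ u₂ w₂ : ℝ → ℝ} {I : Set ℝ} {a : ℝ}

theorem IsPlanarSol.continuous_fst (h : IsPlanarSol A D u w) : Continuous u :=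
  continuous_iff_continuousAt.mpr fun z => (h.hasDerivAt_fst z).continuousAt

theorem IsPlanarSol.continuous_snd (h : IsPlanarSol A D u w) : Continuous w :=
  continuous_iff_continuousAt.mpr fun z => (h.hasDerivAt_snd z).continuousAt

theorem IsPlanarSol.comp_add_const (h : IsPlanarSol A D u w) (s : ℝ) :
    IsPlanarSol A D (fun z => u (z + s)) (fun z => w (z + s)) where
  hasDerivAt_fst z := (h.hasDerivAt_fst (z + s)).comp_add_const z s
  hasDerivAt_snd z := (h.hasDerivAt_snd (z + s)).comp_add_const z s

theorem isPlanarSol_const (ha : A a = 0) : IsPlanarSol A D (fun _ => a) (fun _ => 0) where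
  hasDerivAt_fst z := hasDerivAt_const z a
  hasDerivAt_snd z := (hasDerivAt_const z 0).congr_deriv (by simp [ha])

theorem exists_lipschitzOnWith_planarField (hI : IsOpen I) (hA : ContDiffOn ℝ 1 A I)
    (hD : ContDiffOn ℝ 1 D I) {S : Set (ℝ × ℝ)} (hS : IsCompact S) (hSI : ∀ p ∈ S, p.1 ∈ I) :
    ∃ L, LipschitzOnWith L (fun p : ℝ × ℝ => (p.2, A p.1 + D p.1 * p.2)) S := by
  refine LocallyLipschitzOn.exists_lipschitzOnWith_of_compact hS fun p hp => ?_
  have hfst : ContDiffAt ℝ 1 Prod.fst p := contDiffAt_fst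
  have hA' := (hA.contDiffAt (hI.mem_nhds (hSI p hp))).comp p hfst
  have hD' := (hD.contDiffAt (hI.mem_nhds (hSI p hp))).comp p hfst
  obtain ⟨L, t, ht, hL⟩ :=
    (contDiffAt_snd.prodMk (hA'.add (hD'.mul contDiffAt_snd))).exists_lipschitzOnWith
  exact ⟨L, t, mem_nhdsWithin_of_mem_nhds ht, hL⟩

theorem IsPlanarSol.eq_of_eq (h₁ : IsPlanarSol A D u₁ w₁) (h₂ : IsPlanarSol A D u₂ w₂)
    (hI : IsOpen I) (hA : ContDiffOn ℝ 1 A I) (hD : ContDiffOn ℝ 1 D I) {S : Set (ℝ × ℝ)}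
    (hS : IsCompact S) (hSI : ∀ p ∈ S, p.1 ∈ I) (hS₁ : ∀ z, (u₁ z, w₁ z) ∈ S)
    (hS₂ : ∀ z, (u₂ z, w₂ z) ∈ S) {t : ℝ} (hu : u₁ t = u₂ t) (hw : w₁ t = w₂ t) :
    u₁ = u₂ ∧ w₁ = w₂ := by
  obtain ⟨L, hL⟩ := exists_lipschitzOnWith_planarField hI hA hD hS hSI
  have heq := ODE_solution_unique_univ (v := fun _ p => (p.2, A p.1 + D p.1 * p.2))
    (f := fun z => (u₁ z, w₁ z)) (g := fun z => (u₂ z, w₂ z)) (fun _ => hL)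
    (fun z => ⟨(h₁.hasDerivAt_fst z).prodMk (h₁.hasDerivAt_snd z), hS₁ z⟩)
    (fun z => ⟨(h₂.hasDerivAt_fst z).prodMk (h₂.hasDerivAt_snd z), hS₂ z⟩) (Prod.ext hu hw)
  exact ⟨funext fun z => congr_arg Prod.fst (congr_fun heq z),
    funext fun z => congr_arg Prod.snd (congr_fun heq z)⟩

end PlanarSol

section Homoclinic

variable {A D u w : ℝ → ℝ} {I : Set ℝ} {a b c l m z₀ : ℝ}

theorem isCompact_insert_range {f : ℝ → ℝ} (hf : Continuous f) (hbot : Tendsto f atBot (𝓝 l))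
    (htop : Tendsto f atTop (𝓝 l)) : IsCompact (insert l (range f)) :=
  Filter.Tendsto.isCompact_insert_range_of_cocompact
    (cocompact_eq_atBot_atTop (α := ℝ) ▸ hbot.sup htop) hf

theorem exists_forall_ge_of_tendsto {f : ℝ → ℝ} (hf : Continuous f)
    (hbot : Tendsto f atBot (𝓝 l)) (htop : Tendsto f atTop (𝓝 l)) {x : ℝ} (hx : l < f x) :
    ∃ z₀, ∀ z, f z ≤ f z₀ := by
  obtain ⟨M, hM, hub⟩ :=
    (isCompact_insert_range hf hbot htop).exists_isGreatest (insert_nonempty _ _)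
  have hle : ∀ z, f z ≤ M := fun z => hub (mem_insert_of_mem _ (mem_range_self z))
  rcases hM with rfl | ⟨z₀, rfl⟩
  · exact absurd (hle x) hx.not_ge
  · exact ⟨z₀, hle⟩

theorem eq_of_periodic_of_tendsto {f : ℝ → ℝ} {T : ℝ} (hf : Function.Periodic f T) (hT : 0 < T)
    (htop : Tendsto f atTop (𝓝 l)) (z : ℝ) : f z = l := by
  have hseq : Tendsto (fun n : ℕ => z + n * T) atTop atTop :=
    tendsto_atTop_add_const_left _ _ (tendsto_natCast_atTop_atTop.atTop_mul_const hT)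
  exact tendsto_nhds_unique (tendsto_const_nhds.congr fun n => (hf.nat_mul n z).symm)
    (htop.comp hseq)

theorem HO.isCompact_insert_range_prod (ho : HO a u w) (h : IsPlanarSol A D u w) :
    IsCompact (insert a (range u) ×ˢ insert 0 (range w)) :=
  (isCompact_insert_range h.continuous_fst ho.1 ho.2.1).prod
    (isCompact_insert_range h.continuous_snd ho.2.2.1 ho.2.2.2.1)

theorem IsPlanarSol.eq_of_eq_of_HO (h : IsPlanarSol A D u w) (ho : HO a u w) (hI : IsOpen I)
    (hA : ContDiffOn ℝ 1 A I) (hD : ContDiffOn ℝ 1 D I) (ha : a ∈ I) (hu : ∀ z, u z ∈ I)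
    {s t : ℝ} (hus : u s = u t) (hws : w s = w t) : s = t := by
  by_contra hst
  wlog hlt : s < t generalizing s t
  · exact this hus.symm hws.symm (Ne.symm hst) ((Ne.symm hst).lt_of_le (not_lt.mp hlt))
  have hmem : ∀ z, (u z, w z) ∈ insert a (range u) ×ˢ insert 0 (range w) := fun z =>
    ⟨mem_insert_of_mem _ (mem_range_self z), mem_insert_of_mem _ (mem_range_self z)⟩
  obtain ⟨hup, hwp⟩ := (h.comp_add_const (t - s)).eq_of_eq (t := s) h hI hA hD
    (ho.isCompact_insert_range_prod h)
    (fun p hp => insert_subset ha (range_subset_iff.mpr hu) hp.1) (fun z => hmem _) hmem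
    (by simpa using hus.symm) (by simpa using hws.symm)
  exact ho.2.2.2.2 fun z =>
    ⟨eq_of_periodic_of_tendsto (congr_fun hup) (sub_pos.mpr hlt) ho.2.1 z,
      eq_of_periodic_of_tendsto (congr_fun hwp) (sub_pos.mpr hlt) ho.2.2.2.1 z⟩

theorem IsPlanarSol.ne_zero_of_HO (h : IsPlanarSol A D u w) (ho : HO a u w) (hI : IsOpen I)
    (hA : ContDiffOn ℝ 1 A I) (hD : ContDiffOn ℝ 1 D I) (ha : a ∈ I) (hu : ∀ z, u z ∈ I)
    {t : ℝ} (hw : w t = 0) : A (u t) ≠ 0 := by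
  intro hAt
  have hmem : ∀ z, (u z, w z) ∈ insert a (range u) ×ˢ insert 0 (range w) := fun z =>
    ⟨mem_insert_of_mem _ (mem_range_self z), mem_insert_of_mem _ (mem_range_self z)⟩
  obtain ⟨hut, hwt⟩ := h.eq_of_eq (isPlanarSol_const hAt) hI hA hD
    (ho.isCompact_insert_range_prod h)
    (fun p hp => insert_subset ha (range_subset_iff.mpr hu) hp.1) hmem
    (fun _ => hw ▸ hmem t) rfl hw
  have hua : u t = a :=
    tendsto_nhds_unique (tendsto_const_nhds.congr fun z => (congr_fun hut z).symm) ho.2.1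
  exact ho.2.2.2.2 fun z => ⟨(congr_fun hut z).trans hua, congr_fun hwt z⟩

theorem IsPlanarSol.hasDerivAt_snd_of_eq_zero (h : IsPlanarSol A D u w) {z : ℝ} (hz : w z = 0) :
    HasDerivAt w (A (u z)) z :=
  (h.hasDerivAt_snd z).congr_deriv (by rw [hz, mul_zero, add_zero])

theorem IsPlanarSol.eventually_lt_zero (h : IsPlanarSol A D u w) {z : ℝ} (hz : w z = 0)
    (hA : A (u z) < 0) : ∀ᶠ y in 𝓝[>] z, w y < 0 := by
  have hsign := eventually_nhdsWithin_sign_eq_of_deriv_neg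
    ((h.hasDerivAt_snd_of_eq_zero hz).deriv.trans_lt hA) hz
  filter_upwards [hsign.filter_mono nhdsWithin_le_nhds, self_mem_nhdsWithin] with y hy hzy
  rwa [sign_neg (sub_neg.mpr hzy), sign_eq_neg_one_iff] at hy

theorem second_deriv_nonneg_of_isLocalMin {f f' : ℝ → ℝ} {x d : ℝ} (hf : ∀ z, HasDerivAt f (f' z) z)
    (hf' : HasDerivAt f' d x) (hx : IsLocalMin f x) : 0 ≤ d := by
  by_contra! hd
  have hderiv : deriv f = f' := funext fun z => (hf z).deriv
  have hmax : IsLocalMax f x := isLocalMax_of_deriv_deriv_neg (by rwa [hderiv, hf'.deriv])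
    (by rw [hderiv, hx.hasDerivAt_eq_zero (hf x)]) (hf x).continuousAt
  have hconst : f =ᶠ[𝓝 x] fun _ => f x := by
    filter_upwards [hx, hmax] with z hmin hmax using le_antisymm hmax hmin
  have hzero : f' =ᶠ[𝓝 x] fun _ => 0 := by simpa [hderiv] using hconst.deriv
  exact hd.ne (hf'.unique ((hasDerivAt_const x 0).congr_of_eventuallyEq hzero))

theorem second_deriv_nonpos_of_isLocalMax {f f' : ℝ → ℝ} {x d : ℝ} (hf : ∀ z, HasDerivAt f (f' z) z)
    (hf' : HasDerivAt f' d x) (hx : IsLocalMax f x) : d ≤ 0 :=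
  neg_nonneg.mp (second_deriv_nonneg_of_isLocalMin (fun z => (hf z).neg) hf'.neg hx.neg)

theorem IsPlanarSol.nonneg_of_isLocalMin (h : IsPlanarSol A D u w) {z : ℝ}
    (hz : IsLocalMin u z) : 0 ≤ A (u z) :=
  second_deriv_nonneg_of_isLocalMin h.hasDerivAt_fst
    (h.hasDerivAt_snd_of_eq_zero (hz.hasDerivAt_eq_zero (h.hasDerivAt_fst z))) hz

theorem IsPlanarSol.nonpos_of_isLocalMax (h : IsPlanarSol A D u w) {z : ℝ}
    (hz : IsLocalMax u z) : A (u z) ≤ 0 :=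
  second_deriv_nonpos_of_isLocalMax h.hasDerivAt_fst
    (h.hasDerivAt_snd_of_eq_zero (hz.hasDerivAt_eq_zero (h.hasDerivAt_fst z))) hz

theorem IsPlanarSol.lt_of_HO (h : IsPlanarSol A D u w) (ho : HO a u w)
    (hne : ∀ z, w z = 0 → A (u z) ≠ 0) (hAa : A a = 0) (hneg : ∀ z, u z < a → A (u z) < 0)
    (z : ℝ) : a < u z := by
  have hle : ∀ z, a ≤ u z := by
    by_contra! hlt
    obtain ⟨x, hx⟩ := hlt
    obtain ⟨z₀, hz₀⟩ := exists_forall_ge_of_tendsto h.continuous_fst.neg ho.1.neg ho.2.1.neg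
      (neg_lt_neg hx)
    have hmin : ∀ z, u z₀ ≤ u z := fun z => neg_le_neg_iff.mp (hz₀ z)
    exact (h.nonneg_of_isLocalMin (Eventually.of_forall hmin)).not_gt
      (hneg z₀ ((hmin x).trans_lt hx))
  refine (hle z).lt_of_ne fun hz => ?_
  have hmin : IsLocalMin u z := Eventually.of_forall fun y => hz ▸ hle y
  exact hne z (hmin.hasDerivAt_eq_zero (h.hasDerivAt_fst z)) (hz ▸ hAa)

theorem exists_first_eq {f : ℝ → ℝ} {v : ℝ} (hf : ContinuousOn f (Icc a b)) (hab : a < b)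
    (ha : ∀ᶠ z in 𝓝[>] a, f z < v) (hb : v ≤ f b) :
    ∃ c ∈ Ioc a b, f c = v ∧ ∀ z ∈ Ioo a c, f z < v := by
  obtain ⟨y, hy, hsub⟩ := mem_nhdsGT_iff_exists_Ioo_subset.mp ha
  obtain ⟨x, hax, hx⟩ := exists_between (lt_min hy hab)
  have hclosed : IsClosed (Icc x b ∩ f ⁻¹' Ici v) :=
    (hf.mono (Icc_subset_Icc_left hax.le)).preimage_isClosed_of_isClosed isClosed_Icc isClosed_Ici
  obtain ⟨c, ⟨hc, hvc⟩, hleast⟩ :=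
    (isCompact_Icc.of_isClosed_subset hclosed inter_subset_left).exists_isLeast
      ⟨b, ⟨(lt_min_iff.mp hx).2.le, le_rfl⟩, hb⟩
  have hlt : ∀ z ∈ Ioo a c, f z < v := fun z hz => by
    by_contra! hvz
    rcases lt_or_ge z y with hzy | hyz
    · exact hvz.not_gt (hsub ⟨hz.1, hzy⟩)
    · exact hz.2.not_ge (hleast ⟨⟨(lt_min_iff.mp hx).1.le.trans hyz, hz.2.le.trans hc.2⟩, hvz⟩)
  have hac : a < c := hax.trans_le hc.1
  refine ⟨_, ⟨hac, hc.2⟩, le_antisymm ?_ hvc, hlt⟩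
  have hcont := ((hf c ⟨hac.le, hc.2⟩).mono (Icc_subset_Icc_right hc.2)).mono Ioo_subset_Icc_self
  have := (mem_closure_iff_nhdsWithin_neBot).mp (closure_Ioo hac.ne ▸ right_mem_Icc.mpr hac.le)
  exact le_of_tendsto hcont (eventually_nhdsWithin_of_forall fun z hz => (hlt z hz).le)

theorem exists_last_eq {f : ℝ → ℝ} {v : ℝ} (hf : ContinuousOn f (Icc a b)) (hab : a < b)
    (ha : v ≤ f a) (hb : f b < v) : ∃ c ∈ Ico a b, f c = v ∧ ∀ z ∈ Ioc c b, f z < v := by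
  have hneg : ContinuousOn (fun z => f (-z)) (Icc (-b) (-a)) := hf.comp continuous_neg.continuousOn
    fun z hz => ⟨le_neg_of_le_neg hz.2, neg_le.mp hz.1⟩
  have hev : ∀ᶠ z in 𝓝[>] (-b), f (-z) < v :=
    ((hneg (-b) ⟨le_rfl, neg_le_neg hab.le⟩).mono_of_mem_nhdsWithin
      (Icc_mem_nhdsGT (neg_lt_neg hab))).eventually_lt_const (by simpa using hb)
  obtain ⟨c, hc, hcv, hlt⟩ := exists_first_eq hneg (neg_lt_neg hab) hev (by rwa [neg_neg])
  refine ⟨-c, ⟨le_neg_of_le_neg hc.2, neg_lt.mp hc.1⟩, hcv, fun z hz => ?_⟩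
  rcases hz.2.lt_or_eq with hzb | rfl
  · simpa using hlt (-z) ⟨neg_lt_neg hzb, neg_lt.mp hz.1⟩
  · exact hb

theorem exists_eq_and_eq_of_injOn {c d : ℝ} (hu : Continuous u) (hw : Continuous w)
    (hinj : InjOn u (Icc a b)) (hcd : c ≤ d) (hmaps : MapsTo u (Icc c d) (u '' Icc a b))
    (hc : ∀ s ∈ Icc a b, u s = u c → w s ≤ w c) (hd : ∀ s ∈ Icc a b, u s = u d → w d ≤ w s) :
    ∃ s ∈ Icc a b, ∃ t ∈ Icc c d, u s = u t ∧ w s = w t := by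
  have hclosed : ∀ p : Set (ℝ × ℝ), IsClosed p →
      IsClosed (Prod.snd '' ((Icc a b ×ˢ Icc c d) ∩ ({x | u x.1 = u x.2} ∩ p))) := fun p hp =>
    (((isCompact_Icc.prod isCompact_Icc).inter_right
      ((isClosed_eq (by fun_prop) (by fun_prop)).inter hp)).image continuous_snd).isClosed
  obtain ⟨_, ht, ⟨⟨s, _⟩, ⟨⟨hs, -⟩, hst, hle⟩, rfl⟩, ⟨⟨s', t⟩, ⟨⟨hs', -⟩, hst', hge⟩, rfl⟩⟩ :=
    isPreconnected_closed_iff.mp (isPreconnected_Icc (a := c) (b := d)) _ _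
      (hclosed {x | w x.1 ≤ w x.2} (isClosed_le (by fun_prop) (by fun_prop)))
      (hclosed {x | w x.2 ≤ w x.1} (isClosed_le (by fun_prop) (by fun_prop)))
      (fun t ht => by
        obtain ⟨s, hs, hst⟩ := hmaps ht
        exact (le_total (w s) (w t)).imp (fun hle => ⟨(s, t), ⟨⟨hs, ht⟩, hst, hle⟩, rfl⟩)
          fun hle => ⟨(s, t), ⟨⟨hs, ht⟩, hst, hle⟩, rfl⟩)
      (by
        obtain ⟨s, hs, hst⟩ := hmaps (left_mem_Icc.mpr hcd)
        exact ⟨c, left_mem_Icc.mpr hcd,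
          (s, c), ⟨⟨hs, left_mem_Icc.mpr hcd⟩, hst, hc s hs hst⟩, rfl⟩)
      (by
        obtain ⟨s, hs, hst⟩ := hmaps (right_mem_Icc.mpr hcd)
        exact ⟨d, right_mem_Icc.mpr hcd,
          (s, d), ⟨⟨hs, right_mem_Icc.mpr hcd⟩, hst, hd s hs hst⟩, rfl⟩)
  obtain rfl : s = s' := hinj hs hs' (hst.trans hst'.symm)
  exact ⟨s, hs, t, ht, hst, le_antisymm hle hge⟩

theorem IsPlanarSol.strictAntiOn (h : IsPlanarSol A D u w) (hw : ∀ z ∈ Ioo a b, w z < 0) :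
    StrictAntiOn u (Icc a b) :=
  strictAntiOn_of_deriv_neg (convex_Icc a b) h.continuous_fst.continuousOn fun z hz => by
    rw [interior_Icc] at hz
    exact (h.hasDerivAt_fst z).deriv.trans_lt (hw z hz)

theorem IsPlanarSol.ne_of_two_descents {p c d : ℝ} (h : IsPlanarSol A D u w)
    (hinj : Function.Injective fun z => (u z, w z)) (hmax : ∀ z, u z ≤ u z₀) (hwz₀ : w z₀ = 0)
    (hp : z₀ < p) (hwp : w p = 0) (hneg : ∀ z ∈ Ioo z₀ p, w z < 0) (hpc : p ≤ c) (hcd : c < d)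
    (hwc : w c = 0) (hneg' : ∀ z ∈ Ioc c d, w z < 0) : u d ≠ u p := by
  intro hud
  have hanti := h.strictAntiOn hneg
  have hanti' := h.strictAntiOn fun z hz => hneg' z (Ioo_subset_Ioc_self hz)
  have hmaps : MapsTo u (Icc c d) (u '' Icc z₀ p) := fun z hz =>
    intermediate_value_Icc' hp.le h.continuous_fst.continuousOn
      ⟨hud ▸ hanti'.antitoneOn hz (right_mem_Icc.mpr hcd.le) hz.2, hmax z⟩
  have hnonpos : ∀ s ∈ Icc z₀ p, w s ≤ 0 := fun s hs => by
    rcases hs.1.eq_or_lt with rfl | hs₀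
    · exact hwz₀.le
    · rcases hs.2.eq_or_lt with rfl | hsp
      · exact hwp.le
      · exact (hneg s ⟨hs₀, hsp⟩).le
  have hd : ∀ s ∈ Icc z₀ p, u s = u d → w d ≤ w s := fun s hs hsd => by
    rw [hanti.injOn hs (right_mem_Icc.mpr hp.le) (hsd.trans hud), hwp]
    exact (hneg' d (right_mem_Ioc.mpr hcd)).le
  obtain ⟨s, hs, t, ht, hst, hwst⟩ := exists_eq_and_eq_of_injOn h.continuous_fst
    h.continuous_snd hanti.injOn hcd.le hmaps (fun s hs _ => hwc ▸ hnonpos s hs) hd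
  obtain rfl : s = t := hinj (Prod.ext hst hwst)
  have hcp : c = p := le_antisymm (ht.1.trans hs.2) hpc
  exact (hanti' (left_mem_Icc.mpr hcd.le) (right_mem_Icc.mpr hcd.le) hcd).ne (hcp ▸ hud)

theorem nonpos_of_forall_Ioc_lt {f : ℝ → ℝ} {f' : ℝ} (hab : a < b) (hf : HasDerivAt f f' a)
    (hlt : ∀ z ∈ Ioc a b, f z < f a) : f' ≤ 0 := by
  by_contra! hpos
  have hsign := eventually_nhdsWithin_sign_eq_of_deriv_pos
    (hpos.trans_eq (hf.sub_const (f a)).deriv.symm) (sub_self _)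
  obtain ⟨y, hy, hyab⟩ := ((hsign.filter_mono nhdsWithin_le_nhds).and
    (Ioc_mem_nhdsGT hab)).exists
  rw [sign_pos (sub_pos.mpr hyab.1), sign_eq_one_iff, sub_pos] at hy
  exact hy.not_gt (hlt y hyab)

theorem IsPlanarSol.exists_descent {p r : ℝ} (h : IsPlanarSol A D u w)
    (hinj : Function.Injective fun z => (u z, w z)) (hwp : w p = 0) (hpr : p < r)
    (hle : u p ≤ u r) (htop : Tendsto u atTop (𝓝 a)) (hap : a < u p) :
    ∃ c d, p ≤ c ∧ c < d ∧ w c = 0 ∧ (∀ z ∈ Ioc c d, w z < 0) ∧ u d = u p := by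
  obtain ⟨T, hT, hrT⟩ := ((htop.eventually_lt_const hap).and (eventually_gt_atTop r)).exists
  obtain ⟨d, hd, hud, hlt⟩ := exists_last_eq h.continuous_fst.continuousOn hrT hle hT
  have hpd : p < d := hpr.trans_le hd.1
  have hwd : w d < 0 := (nonpos_of_forall_Ioc_lt hd.2 (h.hasDerivAt_fst d) (hud ▸ hlt)).lt_of_ne
    fun hwd => hpd.ne' (hinj (Prod.ext hud (hwd.trans hwp.symm)))
  obtain ⟨c, hc, hwc, hneg⟩ := exists_last_eq h.continuous_snd.continuousOn hpd hwp.ge hwd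
  exact ⟨c, d, hc.1, hc.2, hwc, hneg, hud⟩

theorem IsPlanarSol.isLocalMin_of_descent {p : ℝ} (h : IsPlanarSol A D u w) (hz₀ : z₀ < p)
    (hneg : ∀ z ∈ Ioo z₀ p, w z < 0) (hwp : w p = 0) (hne : A (u p) ≠ 0) : IsLocalMin u p := by
  have hderiv : deriv u = w := funext fun z => (h.hasDerivAt_fst z).deriv
  have hw := h.hasDerivAt_snd_of_eq_zero hwp
  refine isLocalMin_of_deriv_deriv_pos ?_ (by rw [hderiv, hwp]) h.continuous_fst.continuousAt
  rw [hderiv, hw.deriv]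
  by_contra! hle
  have hsign := eventually_nhdsWithin_sign_eq_of_deriv_neg
    (hw.deriv.trans_lt (hle.lt_of_ne hne)) hwp
  obtain ⟨y, hy, hyp⟩ := ((hsign.filter_mono nhdsWithin_le_nhds).and
    (Ioo_mem_nhdsLT hz₀)).exists
  rw [sign_pos (sub_pos.mpr hyp.2), sign_eq_one_iff] at hy
  exact hy.not_gt (hneg y hyp)

-- A first zero `p` of `w` after the maximum would be a minimum of `u`, and the orbit would have to
-- cross the level `u p` downwards again later on. That second descent starts inside and ends
-- outside the region bounded by the first one, so the two arcs would cross.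
theorem IsPlanarSol.snd_neg_of_forall_le (h : IsPlanarSol A D u w)
    (hinj : Function.Injective fun z => (u z, w z)) (hne : ∀ z, w z = 0 → A (u z) ≠ 0)
    (hgt : ∀ z, a < u z) (htop : Tendsto u atTop (𝓝 a)) (hmax : ∀ z, u z ≤ u z₀) {z : ℝ}
    (hz : z₀ < z) : w z < 0 := by
  by_contra! hwz
  have hlocal : IsLocalMax u z₀ := Eventually.of_forall hmax
  have hw₀ := hlocal.hasDerivAt_eq_zero (h.hasDerivAt_fst z₀)
  obtain ⟨p, hp, hwp, hneg⟩ := exists_first_eq h.continuous_snd.continuousOn hz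
    (h.eventually_lt_zero hw₀ ((h.nonpos_of_isLocalMax hlocal).lt_of_ne (hne z₀ hw₀))) hwz
  have hmin := h.isLocalMin_of_descent hp.1 hneg hwp (hne p hwp)
  obtain ⟨r, hr, hpr⟩ := ((hmin.filter_mono nhdsWithin_le_nhds).and
    (self_mem_nhdsWithin (a := p) (s := Ioi p))).exists
  obtain ⟨c, d, hpc, hcd, hwc, hneg', hud⟩ := h.exists_descent hinj hwp hpr hr htop (hgt p)
  exact h.ne_of_two_descents hinj hmax hw₀ hp.1 hwp hneg hpc hcd hwc hneg' hud

/-- `A` is a bistable force on `(0, ∞)`: its zeros are `u₁ < u₀ < u₂`, and it changes sign at each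
of them, being negative on `(0, u₁)`. The rest points of `u' = w`, `w' = A(u) + D(u) w` over `u₁`
and `u₂` are then saddles. -/
structure IsBistable (A : ℝ → ℝ) (u₁ u₀ u₂ : ℝ) : Prop where
  zero_lt : 0 < u₁
  left_lt_mid : u₁ < u₀
  mid_lt_right : u₀ < u₂
  eq_zero_left : A u₁ = 0
  eq_zero_mid : A u₀ = 0
  eq_zero_right : A u₂ = 0
  neg_of_lt_left : ∀ v ∈ Ioo 0 u₁, A v < 0
  pos_of_lt_mid : ∀ v ∈ Ioo u₁ u₀, 0 < A v
  neg_of_lt_right : ∀ v ∈ Ioo u₀ u₂, A v < 0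
  pos_of_right_lt : ∀ v ∈ Ioi u₂, 0 < A v

theorem IsBistable.mem_Ioo_of_neg {u₁ u₀ u₂ v : ℝ} (hA : IsBistable A u₁ u₀ u₂) (hv : u₁ < v)
    (hneg : A v < 0) : v ∈ Ioo u₀ u₂ := by
  constructor
  · by_contra! hle
    rcases hle.lt_or_eq with hlt | rfl
    · exact hneg.not_gt (hA.pos_of_lt_mid v ⟨hv, hlt⟩)
    · exact hneg.ne hA.eq_zero_mid
  · by_contra! hle
    rcases hle.lt_or_eq with hlt | rfl
    · exact hneg.not_gt (hA.pos_of_right_lt v hlt)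
    · exact hneg.ne hA.eq_zero_right

theorem HO.reverse (ho : HO a u w) : HO a (fun z => u (-z)) (fun z => -w (-z)) := by
  obtain ⟨hu₁, hu₂, hw₁, hw₂, hne⟩ := ho
  refine ⟨hu₂.comp tendsto_neg_atBot_atTop, hu₁.comp tendsto_neg_atTop_atBot,
    neg_zero (G := ℝ) ▸ (hw₂.comp tendsto_neg_atBot_atTop).neg,
    neg_zero (G := ℝ) ▸ (hw₁.comp tendsto_neg_atTop_atBot).neg, fun hconst => hne fun z => ?_⟩
  simpa using hconst (-z)

theorem IsPlanarSol.isHalfOrbit (h : IsPlanarSol A D u w) (hpos : ∀ z < z₀, 0 < w z)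
    (hw : w z₀ = 0) (hu' : Tendsto u atBot (𝓝 a)) (hw' : Tendsto w atBot (𝓝 0)) :
    IsHalfOrbit A D a (u z₀) (fun z => u (z + z₀)) (fun z => w (z + z₀)) where
  continuousOn_fst := (h.comp_add_const z₀).continuous_fst.continuousOn
  continuousOn_snd := (h.comp_add_const z₀).continuous_snd.continuousOn
  hasDerivAt_fst z _ := (h.comp_add_const z₀).hasDerivAt_fst z
  hasDerivAt_snd z _ := (h.comp_add_const z₀).hasDerivAt_snd z
  pos z hz := hpos _ (add_lt_of_neg_left z₀ hz)
  fst_zero := by rw [zero_add]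
  snd_zero := by rw [zero_add, hw]
  tendsto_fst := hu'.comp (tendsto_atBot_add_const_right _ _ tendsto_id)
  tendsto_snd := hw'.comp (tendsto_atBot_add_const_right _ _ tendsto_id)

theorem IsPlanarSol.exists_isOrbitArch_of_HO (h : IsPlanarSol A D u w) (ho : HO a u w)
    (hI : IsOpen I) (hA : ContDiffOn ℝ 1 A I) (hD : ContDiffOn ℝ 1 D I) (ha : a ∈ I)
    (hu : ∀ z, u z ∈ I) (hgt : ∀ z, a < u z) (hmax : ∀ z, u z ≤ u z₀) :
    ∃ q, IsOrbitArch A (fun v => -D v) a (u z₀) q := by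
  have hlocal : IsLocalMax u z₀ := Eventually.of_forall hmax
  have hw₀ := hlocal.hasDerivAt_eq_zero (h.hasDerivAt_fst z₀)
  have hneg : ∀ z, z₀ < z → w z < 0 := fun z => h.snd_neg_of_forall_le
    (fun s t hst => h.eq_of_eq_of_HO ho hI hA hD ha hu (congr_arg Prod.fst hst)
      (congr_arg Prod.snd hst))
    (fun _ => h.ne_zero_of_HO ho hI hA hD ha hu) hgt ho.2.1 hmax
  have hhalf := h.reverse.isHalfOrbit (z₀ := -z₀)
    (fun z hz => neg_pos.mpr (hneg _ (lt_neg_of_lt_neg hz))) (by simp [hw₀])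
    ho.reverse.1 ho.reverse.2.2.1
  simpa only [neg_neg] using hhalf.exists_isOrbitArch.2

theorem IsPlanarSol.exists_isArchPair_of_HO {d g : ℝ → ℝ} {μ u₁ u₀ u₂ : ℝ}
    (h : IsPlanarSol A (damping d g μ) u w) (ho : HO u₁ u w) (hb : IsBistable A u₁ u₀ u₂)
    (hA : ContDiffOn ℝ 1 A (Ioi 0)) (hD : ContDiffOn ℝ 1 (damping d g μ) (Ioi 0))
    (hu : ∀ z, 0 < u z) : ∃ m ∈ Ioo u₀ u₂, IsArchPair A d g μ u₁ m := by
  have hne : ∀ z, w z = 0 → A (u z) ≠ 0 := fun _ =>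
    h.ne_zero_of_HO ho isOpen_Ioi hA hD hb.zero_lt hu
  have hgt := h.lt_of_HO ho hne hb.eq_zero_left fun z hz => hb.neg_of_lt_left _ ⟨hu z, hz⟩
  obtain ⟨z₀, hmax⟩ := exists_forall_ge_of_tendsto h.continuous_fst ho.1 ho.2.1 (hgt 0)
  have hlocal : IsLocalMax u z₀ := Eventually.of_forall hmax
  have hw₀ := hlocal.hasDerivAt_eq_zero (h.hasDerivAt_fst z₀)
  refine ⟨u z₀, hb.mem_Ioo_of_neg (hgt z₀)
    ((h.nonpos_of_isLocalMax hlocal).lt_of_ne (hne z₀ hw₀)), ?_, ?_⟩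
  · simpa only [neg_neg] using h.reverse.exists_isOrbitArch_of_HO (z₀ := -z₀) ho.reverse
      isOpen_Ioi hA hD.neg hb.zero_lt (fun z => hu _) (fun z => hgt _)
      (fun z => by simpa only [neg_neg] using hmax (-z))
  · simpa only [neg_damping] using h.exists_isOrbitArch_of_HO ho isOpen_Ioi hA hD hb.zero_lt
      hu hgt hmax

theorem IsArchPair.exists_HO {d g : ℝ → ℝ} {μ : ℝ} (h : IsArchPair A d g μ a m) (ham : a < m)
    (hA : DifferentiableAt ℝ A a) (hAa : A a = 0) (hD : ContinuousAt (damping d g μ) a)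
    (hAm : ContinuousAt A m) (hDm : ContinuousAt (damping d g μ) m) (hAm' : A m < 0) :
    ∃ u w, IsPlanarSol A (damping d g μ) u w ∧ (∀ z, a < u z) ∧ HO a u w := by
  obtain ⟨⟨q₁, hq₁⟩, q₂, hq₂⟩ := h
  replace hq₂ : IsOrbitArch A (fun v => -damping d g μ v) a m q₂ := by
    simpa only [neg_damping] using hq₂
  obtain ⟨u₁, w₁, h₁, hu₁⟩ := hq₁.exists_isHalfOrbit ham hA hAa hD hAm hDm hAm'
  obtain ⟨u₂, w₂, h₂, hu₂⟩ := hq₂.exists_isHalfOrbit ham hA hAa hD.neg hAm hDm.neg hAm'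
  have hgt : ∀ z, a < concatReverse u₁ u₂ z := fun z => by
    rcases le_or_gt z 0 with hz | hz
    · exact concatReverse_of_nonpos hz ▸ (hu₁ z hz).1
    · exact concatReverse_of_pos hz ▸ (hu₂ (-z) (neg_nonpos.mpr hz.le)).1
  exact ⟨_, _, h₁.isPlanarSol_concatReverse h₂ hAm hDm, hgt,
    tendsto_concatReverse_atBot h₁.tendsto_fst, tendsto_concatReverse_atTop h₂.tendsto_fst,
    tendsto_concatReverse_atBot h₁.tendsto_snd,
    tendsto_concatReverse_atTop (neg_zero (G := ℝ) ▸ h₂.tendsto_snd.neg),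
    fun hconst => (hgt 0).ne' (hconst 0).1⟩

end Homoclinic

section Uniqueness

variable {A d g q₁ q₂ : ℝ → ℝ} {A₀ u₁ u₀ u₂ m₁ m₂ μ₁ μ₂ : ℝ}

theorem IsBistable.right_lt_right (hA : IsBistable A u₁ u₀ u₂) (hg : ∀ u ∈ Ioi 0, 0 < g u)
    (hμ : μ₁ < μ₂) (h₁ : IsOrbitArch A (damping d g μ₁) u₁ m₁ q₁)
    (h₂ : IsOrbitArch A (damping d g μ₂) u₁ m₂ q₂) (hm₁ : u₀ < m₁) (hm₂ : m₂ ∈ Ioc u₀ u₂) :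
    m₁ < m₂ :=
  h₁.right_lt_right h₂ ⟨hA.left_lt_mid, hm₁⟩ ⟨hA.left_lt_mid, hm₂.1⟩
    (fun u hu => (hA.pos_of_lt_mid u hu).le)
    (fun u hu => (hA.neg_of_lt_right u ⟨hu.1, hu.2.trans_le hm₂.2⟩).le)
    (fun u hu => damping_le_damping (hg u (hA.zero_lt.trans hu.1)).le hμ.le)
    (add_lt_add_right (mul_lt_mul_of_pos_right hμ (hg u₀ (hA.zero_lt.trans hA.left_lt_mid))) _)

theorem IsBistable.right_le_right {D : ℝ → ℝ} (hA : IsBistable A u₁ u₀ u₂)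
    (hD : ContinuousOn D (Ioi 0)) (h₁ : IsOrbitArch A D u₁ m₁ q₁)
    (h₂ : IsOrbitArch A D u₁ m₂ q₂) (hm₁ : u₀ < m₁) (hm₂ : u₀ < m₂) : m₁ ≤ m₂ :=
  h₁.right_le_right h₂ ⟨hA.left_lt_mid, hm₁⟩ ⟨hA.left_lt_mid, hm₂⟩
    (fun u hu => (hA.pos_of_lt_mid u hu).le)
    (hD.mono fun _ hu => (hA.zero_lt.trans hA.left_lt_mid).trans_le hu.1)

-- Raising `μ` moves the right foot of the upper arch to the right and that of the lower arch to
-- the left.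
theorem IsArchPair.parameter_le (h₁ : IsArchPair A d g μ₁ u₁ m₁) (h₂ : IsArchPair A d g μ₂ u₁ m₂)
    (hA : IsBistable A u₁ u₀ u₂) (hg : ∀ u ∈ Ioi 0, 0 < g u) (hm₁ : m₁ ∈ Ioc u₀ u₂)
    (hm₂ : m₂ ∈ Ioc u₀ u₂) : μ₁ ≤ μ₂ := by
  by_contra! hμ
  obtain ⟨⟨_, hupper₁⟩, _, hlower₁⟩ := h₁
  obtain ⟨⟨_, hupper₂⟩, _, hlower₂⟩ := h₂
  exact (hA.right_lt_right hg hμ hupper₂ hupper₁ hm₂.1 hm₁).asymm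
    (hA.right_lt_right hg (neg_lt_neg hμ) hlower₁ hlower₂ hm₁.1 hm₂)

theorem IsBistable.exists_mem_Ioo_isArchPair (hA : IsBistable A u₁ u₀ u₂)
    (hAc : ContinuousOn A (Ioi 0)) (hd : ContinuousOn d (Ioi 0)) (hg : ContinuousOn g (Ioi 0))
    (hgpos : ∀ u ∈ Ioi 0, 0 < g u) (hA' : HasDerivAt A A₀ u₀) (hA₀ : A₀ < 0)
    (h₁ : IsOrbitArch A (damping (fun u => -d u) g (-μ₁)) u₁ u₂ q₁)
    (h₂ : IsOrbitArch A (damping d g μ₂) u₁ u₂ q₂) (hμ : μ₁ < μ₂) :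
    ∃ μ ∈ Ioo μ₁ μ₂, ∃ m ∈ Ioo u₀ u₂, IsArchPair A d g μ u₁ m := by
  have hsub : Icc u₁ u₂ ⊆ Ioi 0 := fun u hu => hA.zero_lt.trans_le hu.1
  obtain ⟨μ, hμ', m, hm, hpair⟩ := exists_isArchPair hA.left_lt_mid hA.mid_lt_right
    (hAc.mono hsub) (hd.mono hsub) (hg.mono hsub) (fun u hu => (hgpos u (hsub hu)).le)
    hA.pos_of_lt_mid hA.neg_of_lt_right hA' hA.eq_zero_mid hA₀ h₁ h₂ hμ.le
  obtain ⟨_, hupper⟩ := hpair.1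
  obtain ⟨_, hlower⟩ := hpair.2
  have hright : u₂ ∈ Ioc u₀ u₂ := right_mem_Ioc.mpr hA.mid_lt_right
  have hmlt : m < u₂ := by
    rcases hμ'.2.lt_or_eq with hlt | rfl
    · exact hA.right_lt_right hgpos hlt hupper h₂ hm.1 hright
    · exact hA.right_lt_right hgpos (neg_lt_neg hμ) hlower h₁ hm.1 hright
  refine ⟨μ, ⟨hμ'.1.lt_of_ne ?_, hμ'.2.lt_of_ne ?_⟩, m, ⟨hm.1, hmlt⟩, hpair⟩ <;> rintro rfl <;>
    refine hmlt.not_ge ?_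
  · exact hA.right_le_right (continuousOn_damping hd.neg hg _) h₁ hlower hA.mid_lt_right hm.1
  · exact hA.right_le_right (continuousOn_damping hd hg _) h₂ hupper hA.mid_lt_right hm.1

theorem IsBistable.exists_forall_HO_iff (hA : IsBistable A u₁ u₀ u₂)
    (hA1 : ContDiffOn ℝ 1 A (Ioi 0)) (hd : ContDiffOn ℝ 1 d (Ioi 0))
    (hg : ContDiffOn ℝ 1 g (Ioi 0)) (hgpos : ∀ u ∈ Ioi 0, 0 < g u)
    (hA' : HasDerivAt A A₀ u₀) (hA₀ : A₀ < 0)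
    (h₁ : ∃ u w, IsPlanarSol A (damping d g μ₁) u w ∧ HE2 u₁ u₂ u w)
    (h₂ : ∃ u w, IsPlanarSol A (damping d g μ₂) u w ∧ HE1 u₁ u₂ u w) (hμ : μ₁ < μ₂) :
    ∃ μ' ∈ Ioo μ₁ μ₂, ∀ μ,
      (∃ u w, IsPlanarSol A (damping d g μ) u w ∧ (∀ z, 0 < u z) ∧ HO u₁ u w) ↔ μ = μ' := by
  obtain ⟨_, _, hsol₁, he₁⟩ := h₁
  obtain ⟨_, _, hsol₂, he₂⟩ := h₂
  obtain ⟨_, hlower⟩ := hsol₁.exists_isOrbitArch_of_HE2 he₁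
  obtain ⟨_, hupper⟩ := hsol₂.exists_isOrbitArch_of_HE1 he₂
  simp only [neg_damping] at hlower
  obtain ⟨μ', hμ', m, hm, hpair⟩ := hA.exists_mem_Ioo_isArchPair hA1.continuousOn hd.continuousOn
    hg.continuousOn hgpos hA' hA₀ hlower hupper hμ
  have hD : ∀ μ, ContDiffOn ℝ 1 (damping d g μ) (Ioi 0) := fun μ => hd.add (contDiffOn_const.mul hg)
  refine ⟨μ', hμ', fun μ => ⟨?_, ?_⟩⟩
  · rintro ⟨u, w, hsol, hu, ho⟩
    obtain ⟨m', hm', hpair'⟩ := hsol.exists_isArchPair_of_HO ho hA hA1 (hD μ) hu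
    exact (hpair'.parameter_le hpair hA hgpos (Ioo_subset_Ioc_self hm')
      (Ioo_subset_Ioc_self hm)).antisymm
        (hpair.parameter_le hpair' hA hgpos (Ioo_subset_Ioc_self hm) (Ioo_subset_Ioc_self hm'))
  · rintro rfl
    have hmem₁ : Ioi 0 ∈ 𝓝 u₁ := Ioi_mem_nhds hA.zero_lt
    have hmem : Ioi 0 ∈ 𝓝 m := Ioi_mem_nhds ((hA.zero_lt.trans hA.left_lt_mid).trans hm.1)
    obtain ⟨u, w, hsol, hu, ho⟩ := hpair.exists_HO (hA.left_lt_mid.trans hm.1)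
      ((hA1.differentiableOn one_ne_zero).differentiableAt hmem₁) hA.eq_zero_left
      ((hD μ).continuousOn.continuousAt hmem₁) (hA1.continuousOn.continuousAt hmem)
      ((hD μ).continuousOn.continuousAt hmem) (hA.neg_of_lt_right m hm)
    exact ⟨u, w, hsol, fun z => hA.zero_lt.trans (hu z), ho⟩

end Uniqueness

/-! ### The traveling-wave system -/

theorem contDiffOn_one_of_hasDerivAt {f f' : ℝ → ℝ} {s : Set ℝ} (hs : IsOpen s)
    (hf : ∀ u ∈ s, HasDerivAt f (f' u) u) (hf' : ContinuousOn f' s) : ContDiffOn ℝ 1 f s := by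
  rw [contDiffOn_one_iff_derivWithin hs.uniqueDiffOn]
  refine ⟨fun u hu => (hf u hu).differentiableAt.differentiableWithinAt,
    hf'.congr fun u hu => ?_⟩
  rw [derivWithin_of_isOpen hs hu, (hf u hu).deriv]

section Unimodal

variable {f : ℝ → ℝ} {M p q u K : ℝ}

theorem lt_and_lt_of_strictMonoOn_of_strictAntiOn (hmono : StrictMonoOn f (Icc 0 M))
    (hanti : StrictAntiOn f (Ici M)) (hp : 0 ≤ p) (hpq : p < q) (hfpq : f p = f q) :
    p < M ∧ M < q := by
  constructor <;> by_contra! hM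
  · exact (hanti hM (hM.trans hpq.le) hpq).ne' hfpq
  · exact (hmono ⟨hp, hpq.le.trans hM⟩ ⟨hp.trans hpq.le, hM⟩ hpq).ne hfpq

theorem lt_of_strictMonoOn_of_strictAntiOn (hmono : StrictMonoOn f (Icc 0 M))
    (hanti : StrictAntiOn f (Ici M)) (hp : p ∈ Icc 0 M) (hq : M ≤ q) (hfp : f p = K)
    (hfq : f q = K) (hu : u ∈ Ioo p q) : K < f u := by
  rcases le_total u M with huM | huM
  · exact hfp ▸ hmono hp ⟨hp.1.trans hu.1.le, huM⟩ hu.1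
  · exact hfq ▸ hanti huM hq hu.2

end Unimodal

theorem isBistable_of_strictMonoOn_of_strictAntiOn {f : ℝ → ℝ} {u₁ u₀ u₂ p q : ℝ}
    (hmono : StrictMonoOn f (Icc 0 p)) (hanti : StrictAntiOn f (Icc p q))
    (hmono' : StrictMonoOn f (Ici q)) (hu₁ : u₁ ∈ Ioo 0 p) (hu₀ : u₀ ∈ Ioo p q) (hu₂ : q < u₂)
    (h₁ : f u₁ = 0) (h₀ : f u₀ = 0) (h₂ : f u₂ = 0) : IsBistable f u₁ u₀ u₂ where
  zero_lt := hu₁.1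
  left_lt_mid := hu₁.2.trans hu₀.1
  mid_lt_right := hu₀.2.trans hu₂
  eq_zero_left := h₁
  eq_zero_mid := h₀
  eq_zero_right := h₂
  neg_of_lt_left v hv :=
    h₁ ▸ hmono ⟨hv.1.le, (hv.2.trans hu₁.2).le⟩ (Ioo_subset_Icc_self hu₁) hv.2
  pos_of_lt_mid v hv := by
    rcases le_total v p with hvp | hpv
    · exact h₁ ▸ hmono (Ioo_subset_Icc_self hu₁) ⟨(hu₁.1.trans hv.1).le, hvp⟩ hv.1
    · exact h₀ ▸ hanti ⟨hpv, (hv.2.trans hu₀.2).le⟩ (Ioo_subset_Icc_self hu₀) hv.2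
  neg_of_lt_right v hv := by
    rcases le_total v q with hvq | hqv
    · exact h₀ ▸ hanti (Ioo_subset_Icc_self hu₀) ⟨(hu₀.1.trans hv.1).le, hvq⟩ hv.1
    · exact h₂ ▸ hmono' hqv hu₂.le hv.2
  pos_of_right_lt v hv := h₂ ▸ hmono' hu₂.le (hu₂.trans hv).le hv

theorem IsBistable.mul_left {A r : ℝ → ℝ} {u₁ u₀ u₂ : ℝ} (hA : IsBistable A u₁ u₀ u₂)
    (hr : ∀ u ∈ Ioi 0, 0 < r u) : IsBistable (fun u => r u * A u) u₁ u₀ u₂ where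
  zero_lt := hA.zero_lt
  left_lt_mid := hA.left_lt_mid
  mid_lt_right := hA.mid_lt_right
  eq_zero_left := by rw [hA.eq_zero_left, mul_zero]
  eq_zero_mid := by rw [hA.eq_zero_mid, mul_zero]
  eq_zero_right := by rw [hA.eq_zero_right, mul_zero]
  neg_of_lt_left v hv := mul_neg_of_pos_of_neg (hr v hv.1) (hA.neg_of_lt_left v hv)
  pos_of_lt_mid v hv := mul_pos (hr v (hA.zero_lt.trans hv.1)) (hA.pos_of_lt_mid v hv)
  neg_of_lt_right v hv := mul_neg_of_pos_of_neg
    (hr v ((hA.zero_lt.trans hA.left_lt_mid).trans hv.1)) (hA.neg_of_lt_right v hv)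
  pos_of_right_lt v hv := mul_pos
    (hr v (((hA.zero_lt.trans hA.left_lt_mid).trans hA.mid_lt_right).trans hv))
    (hA.pos_of_right_lt v hv)

namespace A1

variable {V V' V'' : ℝ → ℝ} {UM K c u u₁ u₀ u₂ : ℝ}

theorem hasDerivAt (h : A1 V V' V'' UM) (hu : 0 < u) : HasDerivAt V (V' u) u :=
  (h.1 u hu.le).hasDerivAt (Ici_mem_nhds hu)

theorem continuousOn_deriv (h : A1 V V' V'' UM) : ContinuousOn V' (Ici 0) := h.2.1

theorem deriv_pos (h : A1 V V' V'' UM) (hu : 0 < u) : 0 < V' u := h.2.2.2.2.1 u hu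

theorem zero_lt_maximizer (h : A1 V V' V'' UM) : 0 < UM := h.2.2.2.2.2.2.2.1

theorem deriv_le (h : A1 V V' V'' UM) (hu : 0 ≤ u) : V' u ≤ V' UM :=
  ContinuousWithinAt.closure_le (s := Ioi 0) (by rwa [closure_Ioi, mem_Ici])
    ((h.continuousOn_deriv u hu).mono Ioi_subset_Ici_self) continuousWithinAt_const
    h.2.2.2.2.2.2.2.2.1

theorem injOn_deriv {s : Set ℝ} (h : A1 V V' V'' UM) (hs : s.OrdConnected) (hs0 : s ⊆ Ici 0)
    (hUM : UM ∉ interior s) : InjOn V' s := by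
  intro a ha b hb hab
  by_contra hne
  wlog hlt : a < b generalizing a b
  · exact this hb ha hab.symm (Ne.symm hne) (lt_of_le_of_ne (not_lt.mp hlt) (Ne.symm hne))
  have hsub : Icc a b ⊆ s := hs.out ha hb
  have hpos : ∀ x ∈ Ioo a b, 0 < x := fun x hx => (hs0 ha).trans_lt hx.1
  obtain ⟨x, hx, hx0⟩ := exists_hasDerivAt_eq_zero hlt (h.continuousOn_deriv.mono (hsub.trans hs0))
    hab fun x hx => h.2.2.1 x (hpos x hx)
  rw [h.2.2.2.2.2.2.2.2.2 x (hpos x hx)] at hx0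
  exact hUM (interior_maximal (Ioo_subset_Icc_self.trans hsub) isOpen_Ioo (hx0 ▸ hx))

theorem strictMonoOn_deriv (h : A1 V V' V'' UM) : StrictMonoOn V' (Icc 0 UM) :=
  (h.continuousOn_deriv.mono Icc_subset_Ici_self).strictMonoOn_of_injOn_Icc
    h.zero_lt_maximizer.le (h.deriv_le le_rfl)
    (h.injOn_deriv ordConnected_Icc Icc_subset_Ici_self (by simp [interior_Icc]))

theorem strictAntiOn_deriv (h : A1 V V' V'' UM) : StrictAntiOn V' (Ici UM) := by
  intro a ha b hb hab
  have hsub : Icc UM b ⊆ Ici 0 := fun x hx => h.zero_lt_maximizer.le.trans hx.1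
  exact (h.continuousOn_deriv.mono hsub).strictAntiOn_of_injOn_Icc hb
    (h.deriv_le (h.zero_lt_maximizer.le.trans hb))
    (h.injOn_deriv ordConnected_Icc hsub (by simp [interior_Icc])) ⟨ha, hab.le⟩ ⟨hb, le_rfl⟩ hab

theorem continuousOn_fTV (h : A1 V V' V'' UM) : ContinuousOn (fTV V K c) (Ici 0) :=
  (((continuousOn_const.mul continuousOn_id).sub
    fun u hu => (h.1 u hu).continuousWithinAt).sub continuousOn_const).div_const K

theorem hasDerivAt_fTV (h : A1 V V' V'' UM) (hu : 0 < u) :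
    HasDerivAt (fTV V K c) (fdTV V' K u) u :=
  (((((hasDerivAt_id u).const_mul K).sub (h.hasDerivAt hu)).sub_const c).div_const K).congr_deriv
    (by rw [mul_one, fdTV])

theorem contDiffOn_fdTV (h : A1 V V' V'' UM) : ContDiffOn ℝ 1 (fdTV V' K) (Ioi 0) :=
  (contDiffOn_const.sub (contDiffOn_one_of_hasDerivAt isOpen_Ioi h.2.2.1 h.2.2.2.1)).div_const K

theorem contDiffOn_fTV (h : A1 V V' V'' UM) : ContDiffOn ℝ 1 (fTV V K c) (Ioi 0) :=
  contDiffOn_one_of_hasDerivAt isOpen_Ioi (fun _ hu => h.hasDerivAt_fTV hu)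
    h.contDiffOn_fdTV.continuousOn

theorem exists_deriv_eq_of_fTV_eq {a b : ℝ} (h : A1 V V' V'' UM) (hK : K ≠ 0) (ha : 0 ≤ a)
    (hab : a < b) (hfab : fTV V K c a = fTV V K c b) : ∃ x ∈ Ioo a b, V' x = K := by
  obtain ⟨x, hx, hx0⟩ := exists_hasDerivAt_eq_zero hab
    (h.continuousOn_fTV.mono fun x hx => ha.trans hx.1) hfab
    fun x hx => h.hasDerivAt_fTV (ha.trans_lt hx.1)
  rw [fdTV, div_eq_zero_iff, or_iff_left hK, sub_eq_zero] at hx0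
  exact ⟨x, hx, hx0.symm⟩

theorem exists_fdTV_sign (h : A1 V V' V'' UM) (hK : K ≠ 0) (hu₁ : 0 < u₁) (hu₁₀ : u₁ < u₀)
    (hu₀₂ : u₀ < u₂) (h₁ : fTV V K c u₁ = 0) (h₀ : fTV V K c u₀ = 0) (h₂ : fTV V K c u₂ = 0) :
    ∃ p ∈ Ioo u₁ u₀, ∃ q ∈ Ioo u₀ u₂, (∀ u ∈ Ioo 0 p, 0 < fdTV V' K u) ∧
      (∀ u ∈ Ioo p q, fdTV V' K u < 0) ∧ ∀ u ∈ Ioi q, 0 < fdTV V' K u := by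
  obtain ⟨p, hp, hVp⟩ := h.exists_deriv_eq_of_fTV_eq hK hu₁.le hu₁₀ (h₁.trans h₀.symm)
  obtain ⟨q, hq, hVq⟩ := h.exists_deriv_eq_of_fTV_eq hK (hu₁.trans hu₁₀).le hu₀₂
    (h₀.trans h₂.symm)
  have hp0 : 0 < p := hu₁.trans hp.1
  have hKpos : 0 < K := hVp ▸ h.deriv_pos hp0
  obtain ⟨hpU, hUq⟩ := lt_and_lt_of_strictMonoOn_of_strictAntiOn h.strictMonoOn_deriv
    h.strictAntiOn_deriv hp0.le (hp.2.trans hq.1) (hVp.trans hVq.symm)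
  have hpmem : p ∈ Icc 0 UM := ⟨hp0.le, hpU.le⟩
  refine ⟨p, hp, q, hq, fun u hu => ?_, fun u hu => ?_, fun u hu => ?_⟩
  · have : V' u < K :=
      hVp ▸ h.strictMonoOn_deriv ⟨hu.1.le, (hu.2.trans hpU).le⟩ hpmem hu.2
    exact div_pos (sub_pos.mpr this) hKpos
  · have : K < V' u := lt_of_strictMonoOn_of_strictAntiOn h.strictMonoOn_deriv
      h.strictAntiOn_deriv hpmem hUq.le hVp hVq hu
    exact div_neg_of_neg_of_pos (sub_neg.mpr this) hKpos
  · have : V' u < K := hVq ▸ h.strictAntiOn_deriv hUq.le (hUq.trans hu).le hu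
    exact div_pos (sub_pos.mpr this) hKpos

theorem isBistable_fTV (h : A1 V V' V'' UM) (hK : K ≠ 0) (hu₁ : 0 < u₁) (hu₁₀ : u₁ < u₀)
    (hu₀₂ : u₀ < u₂) (h₁ : fTV V K c u₁ = 0) (h₀ : fTV V K c u₀ = 0) (h₂ : fTV V K c u₂ = 0) :
    IsBistable (fTV V K c) u₁ u₀ u₂ := by
  obtain ⟨p, hp, q, hq, hpos, hneg, hpos'⟩ := h.exists_fdTV_sign hK hu₁ hu₁₀ hu₀₂ h₁ h₀ h₂
  have hp0 : 0 < p := hu₁.trans hp.1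
  have hq0 : 0 < q := (hu₁.trans hu₁₀).trans hq.1
  refine isBistable_of_strictMonoOn_of_strictAntiOn ?_ ?_ ?_ ⟨hu₁, hp.1⟩ ⟨hp.2, hq.1⟩ hq.2 h₁ h₀ h₂
  · refine strictMonoOn_of_hasDerivWithinAt_pos (f' := fdTV V' K) (convex_Icc 0 p)
      (h.continuousOn_fTV.mono Icc_subset_Ici_self) ?_ ?_ <;> rw [interior_Icc]
    · exact fun u hu => (h.hasDerivAt_fTV hu.1).hasDerivWithinAt
    · exact hpos
  · refine strictAntiOn_of_hasDerivWithinAt_neg (f' := fdTV V' K) (convex_Icc p q)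
      (h.continuousOn_fTV.mono fun u hu => hp0.le.trans hu.1) ?_ ?_ <;> rw [interior_Icc]
    · exact fun u hu => (h.hasDerivAt_fTV (hp0.trans hu.1)).hasDerivWithinAt
    · exact hneg
  · refine strictMonoOn_of_hasDerivWithinAt_pos (f' := fdTV V' K) (convex_Ici q)
      (h.continuousOn_fTV.mono fun u hu => hq0.le.trans hu) ?_ ?_ <;> rw [interior_Ici]
    · exact fun u hu => (h.hasDerivAt_fTV (hq0.trans hu)).hasDerivWithinAt
    · exact hpos'

theorem fdTV_neg (h : A1 V V' V'' UM) (hK : K ≠ 0) (hu₁ : 0 < u₁) (hu₁₀ : u₁ < u₀)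
    (hu₀₂ : u₀ < u₂) (h₁ : fTV V K c u₁ = 0) (h₀ : fTV V K c u₀ = 0) (h₂ : fTV V K c u₂ = 0) :
    fdTV V' K u₀ < 0 := by
  obtain ⟨p, hp, q, hq, -, hneg, -⟩ := h.exists_fdTV_sign hK hu₁ hu₁₀ hu₀₂ h₁ h₀ h₂
  exact hneg u₀ ⟨hp.2, hq.1⟩

end A1

namespace A2

variable {κ : ℝ → ℝ} {τ : ℝ}

theorem contDiffOn_comp_one_div (h : A2 κ) : ContDiffOn ℝ 1 (fun u => κ (1 / u)) (Ioi 0) :=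
  h.1.comp (contDiffOn_const.div contDiffOn_id fun _ hu => ne_of_gt hu) fun _ hu =>
    mem_Ioi.mpr (one_div_pos.mpr hu)

theorem g1TV_pos (h : A2 κ) (hτ : 0 < τ) : ∀ u ∈ Ioi 0, 0 < g1TV κ τ u := fun _ hu =>
  one_div_pos.mpr (mul_pos hτ (h.2 _ (one_div_pos.mpr hu)))

theorem g2TV_pos (h : A2 κ) (hτ : 0 < τ) : ∀ u ∈ Ioi 0, 0 < g2TV κ τ u := fun _ hu =>
  div_pos hu (mul_pos (mul_pos two_pos hτ) (h.2 _ (one_div_pos.mpr hu)))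

theorem contDiffOn_g1TV (h : A2 κ) (hτ : 0 < τ) : ContDiffOn ℝ 1 (g1TV κ τ) (Ioi 0) :=
  contDiffOn_const.div (contDiffOn_const.mul h.contDiffOn_comp_one_div) fun _ hu =>
    (mul_pos hτ (h.2 _ (one_div_pos.mpr hu))).ne'

theorem contDiffOn_g2TV (h : A2 κ) (hτ : 0 < τ) : ContDiffOn ℝ 1 (g2TV κ τ) (Ioi 0) :=
  contDiffOn_id.div (contDiffOn_const.mul h.contDiffOn_comp_one_div) fun _ hu =>
    (mul_pos (mul_pos two_pos hτ) (h.2 _ (one_div_pos.mpr hu))).ne'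

end A2

theorem isTVSol_iff {V V' κ u w : ℝ → ℝ} {τ K c μ : ℝ} :
    IsTVSol V V' κ τ K c μ u w ↔ IsPlanarSol (fun u => g1TV κ τ u * fTV V K c u)
      (damping (fun u => g2TV κ τ u * fdTV V' K u) (g2TV κ τ) μ) u w := by
  have hdamping : ∀ v, g2TV κ τ v * hTV V' K μ v =
      damping (fun u => g2TV κ τ u * fdTV V' K u) (g2TV κ τ) μ v := fun v => by
    rw [hTV, damping]
    ring
  simp only [IsTVSol, hdamping]
  exact ⟨fun h => ⟨h.1, h.2⟩, fun h => ⟨h.hasDerivAt_fst, h.hasDerivAt_snd⟩⟩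

theorem stmt4_general {V V' V'' κ : ℝ → ℝ} {τ UM K c u₁ u₀ u₂ μb μf : ℝ}
    (hA1 : A1 V V' V'' UM) (hA2 : A2 κ) (hτ : 0 < τ) (hK : K ≠ 0)
    (hu₁ : 0 < u₁) (hu₁₀ : u₁ < u₀) (hu₀₂ : u₀ < u₂)
    (h₁ : fTV V K c u₁ = 0) (h₀ : fTV V K c u₀ = 0) (h₂ : fTV V K c u₂ = 0)
    (hb : HasHE1 V V' κ τ K c μb u₁ u₂) (hf : HasHE2 V V' κ τ K c μf u₁ u₂) (hlt : μf < μb) :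
    ∃ μp : ℝ, μf < μp ∧ μp < μb ∧ ∀ μ : ℝ, HasHO V V' κ τ K c μ u₁ ↔ μ = μp := by
  have hbistable := hA1.isBistable_fTV hK hu₁ hu₁₀ hu₀₂ h₁ h₀ h₂
  have hu₀ : 0 < u₀ := hu₁.trans hu₁₀
  have hg₁ := hA2.contDiffOn_g1TV hτ
  have hg₁' := ((hg₁.differentiableOn one_ne_zero).differentiableAt (Ioi_mem_nhds hu₀)).hasDerivAt
  obtain ⟨ub, wb, hsolb, -, hheb⟩ := hb
  obtain ⟨uf, wf, hsolf, -, hhef⟩ := hf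
  obtain ⟨μp, hμp, hiff⟩ := (hbistable.mul_left (hA2.g1TV_pos hτ)).exists_forall_HO_iff
    (hg₁.mul hA1.contDiffOn_fTV) ((hA2.contDiffOn_g2TV hτ).mul hA1.contDiffOn_fdTV)
    (hA2.contDiffOn_g2TV hτ) (hA2.g2TV_pos hτ)
    ((hg₁'.mul (hA1.hasDerivAt_fTV hu₀)).congr_deriv (by rw [h₀, mul_zero, zero_add]))
    (mul_neg_of_pos_of_neg (hA2.g1TV_pos hτ u₀ hu₀)
      (hA1.fdTV_neg hK hu₁ hu₁₀ hu₀₂ h₁ h₀ h₂))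
    ⟨uf, wf, isTVSol_iff.mp hsolf, hhef⟩ ⟨ub, wb, isTVSol_iff.mp hsolb, hheb⟩ hlt
  simp only [HasHO, isTVSol_iff]
  exact ⟨μp, hμp.1, hμp.2, hiff⟩

theorem stmt4
    (V V' V'' κ : ℝ → ℝ) (τ UM K c K₁ : ℝ) (uMx umx : ℝ → ℝ)
    (hA1 : A1 V V' V'' UM) (hA2 : A2 κ) (hτ : 0 < τ) (hK : K ≠ 0)
    (huMx : UMaxHyp V' UM uMx) (humx : UMinHyp V' UM umx)
    (hK1 : K1Hyp V V' UM umx K₁)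
    (hC : CondC V' κ UM K₁ K)
    (hD1 : (K, c) ∈ D1 V V' UM uMx umx)
    (u1 u0 u2 μb μf : ℝ) (hz : ZerosD1 V K c u1 u0 u2)
    (hμb : ∀ μ : ℝ, HasHE1 V V' κ τ K c μ u1 u2 ↔ μ = μb)
    (hμf : ∀ μ : ℝ, HasHE2 V V' κ τ K c μ u1 u2 ↔ μ = μf)
    (hlt : μf < μb) :
    ∃ μp : ℝ, μf < μp ∧ μp < μb ∧ ∀ μ : ℝ, HasHO V V' κ τ K c μ u1 ↔ μ = μp := by
  obtain ⟨hu₁, hu₁₀, hu₀₂, h₁, h₀, h₂, -⟩ := hz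
  exact stmt4_general hA1 hA2 hτ hK hu₁ hu₁₀ hu₀₂ h₁ h₀ h₂ ((hμb μb).mpr rfl) ((hμf μf).mpr rfl)
    hlt

end TrafficTW
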